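/- arXiv:2109.07347 — 4 statements merged into one kernel-verified Lean document; each statement's English description precedes it below -/
import Mathlib

section
/- Let k ≥ 1 and δ ≥ 2 be integers. Let G be a connected simple graph on n vertices with n ≥ (δ² + kδ + 7δ + 6k + 9)(δ² + kδ + 1) and minimum degree δ(G) ≥ δ. If the Q-index satisfies q(G) ≥ 2(n − δ − k − 1), then G is k-path-coverable, unless G belongs to the family 𝓑₁(n,k,δ). -/
open Finset Matrix

/-- The signless Laplacian matrix `Q(G) = D(G) + A(G)` of a graph. -/
noncomputable def signlessLaplacian {V : Type*} [Fintype V] [DecidableEq V]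
    (G : SimpleGraph V) [DecidableRel G.Adj] : Matrix V V ℝ :=
  Matrix.diagonal (fun v => (G.degree v : ℝ)) + G.adjMatrix ℝ

/-- The Q-index (largest eigenvalue of the signless Laplacian). -/
noncomputable def qIndex {V : Type*} [Fintype V] [DecidableEq V]
    (G : SimpleGraph V) [DecidableRel G.Adj] : ℝ :=
  sSup {μ : ℝ | ∃ x : V → ℝ, x ≠ 0 ∧ signlessLaplacian G *ᵥ x = μ • x}

/-- The adjacency spectral radius (largest eigenvalue of the adjacency matrix). -/
noncomputable def adjSpecRad {V : Type*} [Fintype V] [DecidableEq V]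
    (G : SimpleGraph V) [DecidableRel G.Adj] : ℝ :=
  sSup {μ : ℝ | ∃ x : V → ℝ, x ≠ 0 ∧ G.adjMatrix ℝ *ᵥ x = μ • x}

/-- A graph is `k`-path-coverable if its vertex set can be covered by at most `k`
vertex-disjoint paths. -/
def PathCoverable {V : Type*} (G : SimpleGraph V) (k : ℕ) : Prop :=
  ∃ (m : ℕ) (P : Fin m → Σ (u : V) (v : V), G.Walk u v),
    m ≤ k ∧
    (∀ i, (P i).2.2.IsPath) ∧
    (∀ v : V, ∃ i, v ∈ (P i).2.2.support) ∧
    (∀ i j, i ≠ j → ∀ v, v ∈ (P i).2.2.support → v ∉ (P j).2.2.support)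

/-- A graph is traceable if it has a Hamilton path. -/
def Traceable {V : Type*} (G : SimpleGraph V) : Prop :=
  ∃ (u v : V) (p : G.Walk u v), p.IsPath ∧ ∀ w, w ∈ p.support

/-- `B(n,k,δ) = K_δ ∨ (K_{n-2δ-k} ∪ complement K_{δ+k})`: the first `δ` vertices form the
dominating clique `Y`, the next `n-2δ-k` vertices form the clique `Z`, and the
last `δ+k` vertices form the independent set `X`. -/
def Bgraph (n k δ : ℕ) : SimpleGraph (Fin n) where
  Adj i j := i ≠ j ∧ ((i : ℕ) < δ ∨ (j : ℕ) < δ ∨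
      ((i : ℕ) < n - (δ + k) ∧ (j : ℕ) < n - (δ + k)))
  symm := by
    constructor
    rintro i j ⟨hne, h⟩
    exact ⟨hne.symm, by tauto⟩
  loopless := by
    constructor
    rintro i ⟨h, -⟩
    exact h rfl

instance (n k δ : ℕ) : DecidableRel (Bgraph n k δ).Adj := fun i j =>
  inferInstanceAs (Decidable (i ≠ j ∧ ((i : ℕ) < δ ∨ (j : ℕ) < δ ∨
      ((i : ℕ) < n - (δ + k) ∧ (j : ℕ) < n - (δ + k)))))

instance {n : ℕ} (G : SimpleGraph (Fin n)) [DecidableRel G.Adj]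
    (E' : Finset (Sym2 (Fin n))) : DecidableRel (G.deleteEdges ↑E').Adj := fun a b =>
  decidable_of_iff (G.Adj a b ∧ s(a, b) ∉ E') (by simp)

/-- The edge set `E₁` of `B(n,k,δ)`: edges with both endpoints in `Y ∪ Z`. -/
def IsE1Edge (n k δ : ℕ) (e : Sym2 (Fin n)) : Prop :=
  e ∈ (Bgraph n k δ).edgeSet ∧ ∀ v ∈ e, (v : ℕ) < n - (δ + k)

/-- The family `𝓑₁(n,k,δ)`, up to isomorphism. -/
def InB1 (n k δ : ℕ) (G : SimpleGraph (Fin n)) : Prop :=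
  ∃ E' : Finset (Sym2 (Fin n)),
    (∀ e ∈ E', IsE1Edge n k δ e) ∧ E'.card ≤ δ * (δ + k) / 4 ∧
    Nonempty (G ≃g (Bgraph n k δ).deleteEdges ↑E')

/-- The family `𝓑₂(n,k,δ)`, up to isomorphism. -/
def InB2 (n k δ : ℕ) (G : SimpleGraph (Fin n)) : Prop :=
  ∃ E' : Finset (Sym2 (Fin n)),
    (∀ e ∈ E', IsE1Edge n k δ e) ∧ E'.card = δ * (δ + k) / 4 + 1 ∧
    Nonempty (G ≃g (Bgraph n k δ).deleteEdges ↑E')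


section Breaks

variable {V : Type*}

open scoped Classical in
/-- Number of consecutive non-adjacent pairs in a list. -/
noncomputable def brk (G : SimpleGraph V) : List V → ℕ
  | [] => 0
  | [_] => 0
  | a :: b :: l => (if G.Adj a b then 0 else 1) + brk G (b :: l)

open scoped Classical in
noncomputable def na (G : SimpleGraph V) (a b : V) : ℕ := if G.Adj a b then 0 else 1

lemma na_comm (G : SimpleGraph V) (a b : V) : na G a b = na G b a := by
  by_cases h : G.Adj a b
  · simp [na, h, h.symm]
  · have h' : ¬ G.Adj b a := fun hh => h hh.symm
    simp [na, h, h']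

lemma brk_cons_cons (G : SimpleGraph V) (a b : V) (l : List V) :
    brk G (a :: b :: l) = na G a b + brk G (b :: l) := rfl

lemma brk_single (G : SimpleGraph V) (a : V) : brk G [a] = 0 := rfl

lemma brk_split (G : SimpleGraph V) (p : List V) (a b : V) (q : List V) :
    brk G (p ++ a :: b :: q) = brk G (p ++ [a]) + na G a b + brk G (b :: q) := by
  induction p with
  | nil => simp [brk_cons_cons, brk_single]
  | cons x p ih =>
    cases p with
    | nil => simp [brk_cons_cons, brk_single]; ring
    | cons y p =>
      simp only [List.cons_append, brk_cons_cons] at ih ⊢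
      rw [ih]; ring

lemma brk_reverse (G : SimpleGraph V) (l : List V) : brk G l.reverse = brk G l := by
  induction l with
  | nil => rfl
  | cons a l ih =>
    cases l with
    | nil => rfl
    | cons b l =>
      rw [brk_cons_cons, ← ih]
      simp only [List.reverse_cons, List.append_assoc, List.cons_append, List.nil_append]
      rw [brk_split, brk_single, na_comm]; ring

lemma brk_pos_split (G : SimpleGraph V) (l : List V) (h : 0 < brk G l) :
    ∃ p a b q, l = p ++ a :: b :: q ∧ ¬ G.Adj a b := by
  induction l with
  | nil => simp [brk] at h
  | cons a l ih =>
    cases l with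
    | nil => simp [brk] at h
    | cons b l =>
      by_cases hab : G.Adj a b
      · rw [brk_cons_cons] at h
        simp only [na, hab, if_true, zero_add] at h
        obtain ⟨p, c, d, q, e, hcd⟩ := ih h
        exact ⟨a :: p, c, d, q, by rw [e]; rfl, hcd⟩
      · exact ⟨[], a, b, l, rfl, hab⟩

lemma brk_mono {G H : SimpleGraph V} (h : G ≤ H) (l : List V) : brk H l ≤ brk G l := by
  induction l with
  | nil => simp [brk]
  | cons a l ih =>
    cases l with
    | nil => simp [brk]
    | cons b l =>
      rw [brk_cons_cons, brk_cons_cons]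
      have : na H a b ≤ na G a b := by
        unfold na
        by_cases h1 : G.Adj a b
        · simp [h1, h h1]
        · simp [h1]; split_ifs <;> omega
      omega

/-- The list enumerates all vertices once. -/
def Full (l : List V) : Prop := l.Nodup ∧ ∀ v, v ∈ l

lemma Full.perm {l l' : List V} (h : Full l) (hp : l'.Perm l) : Full l' :=
  ⟨hp.nodup_iff.2 h.1, fun v => hp.mem_iff.2 (h.2 v)⟩

/-- `H` has an ordering of its vertices with fewer than `k` breaks. -/
def LCov (G : SimpleGraph V) (k : ℕ) : Prop := ∃ l, Full l ∧ brk G l < k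

lemma split_of_edge (G F : SimpleGraph V) (u v : V)
    (hF : ∀ a b, F.Adj a b → G.Adj a b ∨ (a = u ∧ b = v) ∨ (a = v ∧ b = u)) (l : List V) 
    (hl : brk F l < brk G l) :
    ∃ p q, l = p ++ u :: v :: q ∨ l = p ++ v :: u :: q := by
  induction l with
  | nil => simp [brk] at hl
  | cons a l ih =>
    cases l with
    | nil => simp [brk] at hl
    | cons b l =>
      by_cases h : brk F (b :: l) < brk G (b :: l)
      · obtain ⟨p, q, e⟩ := ih h
        refine ⟨a :: p, q, ?_⟩
        rcases e with e | e
        · left; rw [e]; rfl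
        · right; rw [e]; rfl
      · rw [brk_cons_cons, brk_cons_cons] at hl
        have h2 : na F a b < na G a b := by omega
        unfold na at h2
        have hFab : F.Adj a b := by by_contra hh; simp [hh] at h2; split_ifs at h2 <;> omega
        have hGab : ¬ G.Adj a b := by intro hh; simp [hh] at h2
        rcases hF a b hFab with h | ⟨rfl, rfl⟩ | ⟨rfl, rfl⟩
        · exact absurd h hGab
        · exact ⟨[], l, Or.inl rfl⟩
        · exact ⟨[], l, Or.inr rfl⟩

lemma brk_congr (G F : SimpleGraph V) (hGF : G ≤ F) (u v : V)
    (hF : ∀ a b, F.Adj a b → G.Adj a b ∨ (a = u ∧ b = v) ∨ (a = v ∧ b = u)) (l : List V)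
    (hl : u ∉ l ∨ v ∉ l) : brk G l = brk F l := by
  by_contra hne
  have := brk_mono hGF l
  obtain ⟨p, q, e⟩ := split_of_edge G F u v hF l (by omega)
  rcases e with rfl | rfl <;> simp at hl

open scoped Classical in
noncomputable def cdeg [Fintype V] (G : SimpleGraph V) (v : V) : ℕ :=
  (univ.filter (fun u => G.Adj v u)).card

open scoped Classical in
lemma countP_full [Fintype V] (G : SimpleGraph V) (v : V) (l : List V) (hl : Full l) :
    l.countP (fun u => decide (G.Adj v u)) = cdeg G v := by
  unfold cdeg
  rw [List.countP_eq_length_filter, ← List.toFinset_card_of_nodup (hl.1.filter _)]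
  congr 1
  ext u
  simp [hl.2]

lemma length_full [Fintype V] (l : List V) (hl : Full l) : l.length = Fintype.card V := by
  classical
  rw [← List.toFinset_card_of_nodup hl.1, ← Finset.card_univ]
  congr 1
  ext u
  simp [hl.2]

open scoped Classical in
lemma chain_count (G : SimpleGraph V) (u v : V) (l : List V) (a : V)
    (h : List.IsChain (fun a b => (if G.Adj v b then 1 else 0) + (if G.Adj u a then 1 else 0)
      + na G a b ≤ 1) (a :: l)) :
    l.countP (fun w => decide (G.Adj v w)) + (a :: l).dropLast.countP (fun w => decide (G.Adj u w))
      + brk G (a :: l) ≤ l.length := by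
  induction l generalizing a with
  | nil => simp [brk]
  | cons b l ih =>
    rw [List.isChain_cons_cons] at h
    have := ih b h.2
    have h1 := h.1
    rw [brk_cons_cons, List.countP_cons, List.dropLast_cons_cons, List.countP_cons, List.length_cons]
    simp only [decide_eq_true_eq]
    omega

lemma list_rotation [Fintype V] (G : SimpleGraph V) (k : ℕ) (hk : 1 ≤ k) (u v : V) (l : List V)
    (hl : Full l) (t t' : List V) (h1 : l = v :: t) (h2 : l = t' ++ [u]) (hb : brk G l ≤ k)
    (hd : Fintype.card V ≤ cdeg G u + cdeg G v + k) : LCov G k := by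
  classical
  by_contra hno
  have hge : ∀ s, s.Perm l → k ≤ brk G s := by
    intro s hs
    by_contra hlt
    exact hno ⟨s, hl.perm hs, by omega⟩
  have hbk : brk G l = k := le_antisymm hb (hge l (List.Perm.refl _))
  have key : List.IsChain (fun a b => (if G.Adj v b then 1 else 0) + (if G.Adj u a then 1 else 0)
      + na G a b ≤ 1) l := by
    rw [List.isChain_iff_forall_rel_of_append_cons_cons]
    intro a b p q e
    -- initial part starts with v
    obtain ⟨p', hp'⟩ : ∃ p', p ++ [a] = v :: p' := by
      cases p with
      | nil => rw [h1] at e; simp at e; exact ⟨[], by simp [e.1]⟩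
      | cons x p => rw [h1] at e; simp at e; exact ⟨p ++ [a], by simp [e.1]⟩
    obtain ⟨q', hq'⟩ : ∃ q', b :: q = q' ++ [u] := by
      rcases List.eq_nil_or_concat q with rfl | ⟨q1, x, rfl⟩
      · rw [h2] at e
        refine ⟨[], ?_⟩
        have : t' ++ [u] = (p ++ [a]) ++ [b] := by rw [e]; simp
        have := List.append_inj' this rfl
        simpa using this.2.symm
      · rw [h2] at e
        refine ⟨b :: q1, ?_⟩
        have : t' ++ [u] = (p ++ a :: b :: q1) ++ [x] := by rw [e]; simp
        have := List.append_inj' this rfl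
        simpa using this.2.symm
    have hbs : brk G l = brk G (p ++ [a]) + na G a b + brk G (b :: q) := by rw [e, brk_split]
    -- first rearrangement
    have r1p : ((p ++ [a]).reverse ++ b :: q).Perm l := by
      rw [e]
      have : p ++ a :: b :: q = (p ++ [a]) ++ b :: q := by simp
      rw [this]
      exact (List.reverse_perm _).append_right _
    have r1 : brk G ((p ++ [a]).reverse ++ b :: q) =
        brk G (p ++ [a]) + na G v b + brk G (b :: q) := by
      rw [← brk_reverse G (p ++ [a]), hp']
      simp only [List.reverse_cons, List.append_assoc, List.cons_append, List.nil_append]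
      rw [brk_split]
    have r2p : ((p ++ [a]) ++ (b :: q).reverse).Perm l := by
      rw [e]
      have : p ++ a :: b :: q = (p ++ [a]) ++ b :: q := by simp
      rw [this]
      exact (List.reverse_perm _).append_left _
    have r2 : brk G ((p ++ [a]) ++ (b :: q).reverse) =
        brk G (p ++ [a]) + na G a u + brk G (b :: q) := by
      rw [← brk_reverse G (b :: q), hq']
      simp only [List.reverse_append, List.reverse_cons, List.reverse_nil, List.append_assoc,
        List.cons_append, List.nil_append]
      rw [brk_split]
    have g1 := hge _ r1p
    have g2 := hge _ r2p
    rw [na_comm] at r2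
    have g3 : ¬ (G.Adj v b ∧ G.Adj u a ∧ G.Adj a b) := by
      rintro ⟨hvb, hua, hab⟩
      have e3 : brk G ((p ++ [a]).reverse ++ b :: q) = k := by
        rw [r1, ← hbk, hbs]; simp [na, hvb, hab]
      obtain ⟨p2, c, d, q2, e2, hcd⟩ := brk_pos_split G ((p ++ [a]).reverse ++ b :: q) (by omega)
      have e4 : brk G ((p ++ [a]).reverse ++ b :: q) = brk G (p2 ++ [c]) + 1 + brk G (d :: q2) := by
        rw [e2, brk_split]; simp [na, hcd]
      have hperm : ((d :: q2) ++ (p2 ++ [c])).Perm l := by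
        refine List.Perm.trans ?_ r1p
        rw [e2]
        have : p2 ++ c :: d :: q2 = (p2 ++ [c]) ++ d :: q2 := by simp
        rw [this]
        exact List.perm_append_comm
      obtain ⟨p3, hp3⟩ : ∃ p3, p2 ++ [c] = a :: p3 := by
        cases p2 with
        | nil => simp at e2; exact ⟨[], by simp [e2.1]⟩
        | cons x p2 => simp at e2; exact ⟨p2 ++ [c], by simp [e2.1]⟩
      obtain ⟨q3, hq3⟩ : ∃ q3, d :: q2 = q3 ++ [u] := by
        rw [hq'] at e2
        rcases List.eq_nil_or_concat q2 with rfl | ⟨q1, x, rfl⟩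
        · refine ⟨[], ?_⟩
          have : ((p ++ [a]).reverse ++ q') ++ [u] = (p2 ++ [c]) ++ [d] := by
            rw [List.append_assoc, e2]; simp
          have := List.append_inj' this rfl
          simpa using this.2.symm
        · refine ⟨d :: q1, ?_⟩
          have : ((p ++ [a]).reverse ++ q') ++ [u] = (p2 ++ c :: d :: q1) ++ [x] := by
            rw [List.append_assoc, e2]; simp
          have := List.append_inj' this rfl
          simpa using this.2.symm
      have := hge _ hperm
      have e5 : brk G ((d :: q2) ++ (p2 ++ [c])) = brk G (d :: q2) + na G u a + brk G (p2 ++ [c]) := by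
        rw [hq3, hp3]
        simp only [List.append_assoc, List.cons_append, List.nil_append]
        rw [brk_split]
      have : na G u a = 0 := by simp [na, hua]
      omega
    simp only [na] at *
    by_cases x1 : G.Adj v b <;> by_cases x2 : G.Adj u a <;> by_cases x3 : G.Adj a b <;>
      simp_all
  have hc := chain_count G u v t v (by rw [← h1]; exact key)
  have c1 : t.countP (fun w => decide (G.Adj v w)) = cdeg G v := by
    rw [← countP_full G v l hl, h1, List.countP_cons]; simp
  have c2 : (v :: t).dropLast.countP (fun w => decide (G.Adj u w)) = cdeg G u := by
    rw [← countP_full G u l hl, ← h1, h2]; simp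
  have c3 := length_full l hl
  rw [c1, c2, ← h1, hbk] at hc
  rw [h1] at c3
  simp at c3
  omega

lemma closure_step [Fintype V] (G F : SimpleGraph V) (hGF : G ≤ F) (k : ℕ) (u v : V) (hk : 1 ≤ k)
    (hF : ∀ a b, F.Adj a b → G.Adj a b ∨ (a = u ∧ b = v) ∨ (a = v ∧ b = u))
    (hd : Fintype.card V ≤ cdeg G u + cdeg G v + k) (hc : LCov F k) : LCov G k := by
  obtain ⟨l, hl, hb⟩ := hc
  by_cases h : brk F l < brk G l
  · have main : ∀ (u v : V), (∀ a b, F.Adj a b → G.Adj a b ∨ (a = u ∧ b = v) ∨ (a = v ∧ b = u)) →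
        Fintype.card V ≤ cdeg G u + cdeg G v + k → (∃ p q, l = p ++ u :: v :: q) → LCov G k := by
      rintro u v hF hd ⟨p, q, e⟩
      have hnd := hl.1
      rw [e] at hnd
      have hp : ((v :: q) ++ (p ++ [u])).Perm l := by
        rw [e]
        have : p ++ u :: v :: q = (p ++ [u]) ++ v :: q := by simp
        rw [this]
        exact List.perm_append_comm
      refine list_rotation G k hk u v ((v :: q) ++ (p ++ [u])) (hl.perm hp) (q ++ (p ++ [u]))
        ((v :: q) ++ p) rfl (by simp) ?_ hd
      have b1 : brk G (p ++ [u]) = brk F (p ++ [u]) := by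
        apply brk_congr G F hGF u v hF
        right
        simp [List.nodup_append] at hnd ⊢
        grind
      have b2 : brk G (v :: q) = brk F (v :: q) := by
        apply brk_congr G F hGF u v hF
        left
        simp [List.nodup_append] at hnd ⊢
        grind
      have b3 : brk F l = brk F (p ++ [u]) + na F u v + brk F (v :: q) := by rw [e, brk_split]
      have b4 : brk G ((v :: q) ++ (p ++ [u])) ≤ brk G (v :: q) + 1 + brk G (p ++ [u]) := by
        obtain ⟨q', z, hq⟩ : ∃ q' z, v :: q = q' ++ [z] := by
          rcases List.eq_nil_or_concat (v :: q) with h | ⟨q1, x, h⟩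
          · simp at h
          · exact ⟨q1, x, by simpa using h⟩
        obtain ⟨y, p', hp'⟩ : ∃ y p', p ++ [u] = y :: p' := by
          cases p with
          | nil => exact ⟨u, [], rfl⟩
          | cons y p => exact ⟨y, p ++ [u], rfl⟩
        rw [hq, hp']
        simp only [List.append_assoc, List.cons_append, List.nil_append]
        rw [brk_split]
        have : na G z y ≤ 1 := by unfold na; split_ifs <;> omega
        omega
      omega
    obtain ⟨p, q, e | e⟩ := split_of_edge G F u v hF l h
    · exact main u v hF hd ⟨p, q, e⟩
    · refine main v u (fun a b hab => ?_) (by omega) ⟨p, q, e⟩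
      rcases hF a b hab with h | h | h
      · exact Or.inl h
      · exact Or.inr (Or.inr h)
      · exact Or.inr (Or.inl h)
  · exact ⟨l, hl, by omega⟩

lemma LCov.mono {G H : SimpleGraph V} (h : G ≤ H) {k : ℕ} (hc : LCov G k) : LCov H k := by
  obtain ⟨l, hl, hb⟩ := hc
  exact ⟨l, hl, (brk_mono h l).trans_lt hb⟩

lemma brk_complete (G : SimpleGraph V) (l : List V) (hl : l.Nodup)
    (h : ∀ a ∈ l, ∀ b ∈ l, a ≠ b → G.Adj a b) : brk G l = 0 := by
  by_contra hne
  obtain ⟨p, a, b, q, e, hab⟩ := brk_pos_split G l (by omega)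
  apply hab
  refine h a (by simp [e]) b (by simp [e]) ?_
  rintro rfl
  rw [e] at hl
  simp [List.nodup_append] at hl

/-- Edge-maximal non-coverable supergraph. -/
lemma exists_maximal [Fintype V] (G : SimpleGraph V) (k : ℕ) (hk : 1 ≤ k) (h : ¬ LCov G k) :
    ∃ H : SimpleGraph V, G ≤ H ∧ ¬ LCov H k ∧ (∃ u v, u ≠ v ∧ ¬ H.Adj u v) ∧
      ∀ u v, u ≠ v → ¬ H.Adj u v → cdeg H u + cdeg H v + k < Fintype.card V := by
  classical
  obtain ⟨H, hGH, hmax⟩ := (Set.toFinite {H : SimpleGraph V | ¬ LCov H k}).exists_le_maximal h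
  refine ⟨H, hGH, hmax.1, ?_, ?_⟩
  · by_contra hall
    push Not at hall
    apply hmax.1
    refine ⟨(Finset.univ : Finset V).toList, ⟨Finset.nodup_toList _, by simp⟩, ?_⟩
    rw [brk_complete H _ (Finset.nodup_toList _) (fun a _ b _ hab => hall a b hab)]
    omega
  · intro u v huv hadj
    by_contra hge
    have hlt : H < H ⊔ SimpleGraph.edge u v := by
      refine lt_of_le_of_ne le_sup_left ?_
      intro e
      apply hadj
      rw [e]
      simp [SimpleGraph.edge_adj, huv]
    have hnot : LCov (H ⊔ SimpleGraph.edge u v) k := by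
      by_contra hno
      exact absurd (hmax.2 hno hlt.le) (not_le_of_gt hlt)
    refine hmax.1 (closure_step H _ hlt.le k u v hk ?_ (by omega) hnot)
    intro a b hab
    simp [SimpleGraph.edge_adj] at hab
    grind

lemma ore [Fintype V] (G : SimpleGraph V) (k : ℕ) (hk : 1 ≤ k)
    (h : ∀ u v, u ≠ v → ¬ G.Adj u v → Fintype.card V ≤ cdeg G u + cdeg G v + k) : LCov G k := by
  classical
  by_contra hno
  obtain ⟨H, hGH, -, ⟨u, v, huv, hadj⟩, hall⟩ := exists_maximal G k hk hno
  have h1 := h u v huv (fun hh => hadj (hGH hh))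
  have h2 := hall u v huv hadj
  have h3 : ∀ w, cdeg G w ≤ cdeg H w := by
    intro w
    unfold cdeg
    apply Finset.card_le_card
    intro z
    simp only [Finset.mem_filter, Finset.mem_univ, true_and]
    exact fun hh => hGH hh
  have := h3 u
  have := h3 v
  omega

lemma insert_universal (G : SimpleGraph V) (y : V) (l : List V) (h : ∀ a ∈ l, G.Adj y a) :
    ∃ l', l'.Perm (y :: l) ∧ brk G l' ≤ brk G l - 1 := by
  by_cases hb : 0 < brk G l
  · obtain ⟨p, a, b, q, e, hab⟩ := brk_pos_split G l hb
    refine ⟨p ++ a :: y :: b :: q, ?_, ?_⟩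
    · rw [e]
      have h1 : p ++ a :: y :: b :: q = (p ++ [a]) ++ y :: (b :: q) := by simp
      have h2 : p ++ a :: b :: q = (p ++ [a]) ++ (b :: q) := by simp
      rw [h1, h2]
      exact List.perm_middle
    · rw [e, brk_split, brk_split, brk_cons_cons]
      have h1 : na G a y = 0 := by
        have := (h a (by simp [e])).symm
        simp [na, this]
      have h2 : na G y b = 0 := by
        have := (h b (by simp [e]))
        simp [na, this]
      have h3 : na G a b = 1 := by simp [na, hab]
      omega
  · refine ⟨y :: l, List.Perm.refl _, ?_⟩
    cases l with
    | nil => simp [brk]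
    | cons a l =>
      have h1 : na G y a = 0 := by
        have := (h a (by simp))
        simp [na, this]
      rw [brk_cons_cons]; omega

lemma insert_universals (G : SimpleGraph V) (ys l : List V) (hnd : (ys ++ l).Nodup)
    (h : ∀ y ∈ ys, ∀ a, a ≠ y → G.Adj y a) :
    ∃ l', l'.Perm (ys ++ l) ∧ brk G l' ≤ brk G l - ys.length := by
  induction ys with
  | nil => exact ⟨l, List.Perm.refl _, by simp⟩
  | cons y ys ih =>
    simp only [List.cons_append, List.nodup_cons] at hnd
    obtain ⟨l1, hp, hb⟩ := ih hnd.2 (fun z hz => h z (by simp [hz]))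
    obtain ⟨l2, hp2, hb2⟩ := insert_universal G y l1 (fun a ha => by
      apply h y (by simp)
      rintro rfl
      exact hnd.1 (hp.mem_iff.1 ha))
    refine ⟨l2, hp2.trans (hp.cons y), ?_⟩
    simp only [List.length_cons]; omega

lemma brk_append_le (G : SimpleGraph V) (l m : List V) : brk G (l ++ m) ≤ brk G l + 1 + brk G m := by
  rcases List.eq_nil_or_concat l with rfl | ⟨q', z, rfl⟩
  · simp
  · cases m with
    | nil => simp; omega
    | cons y m =>
      simp only [List.concat_eq_append, List.append_assoc, List.cons_append, List.nil_append]
      rw [brk_split]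
      have : na G z y ≤ 1 := by unfold na; split_ifs <;> omega
      omega

lemma brk_map {W : Type*} (G : SimpleGraph V) (f : W → V) (l : List W) :
    brk G (l.map f) = brk (G.comap f) l := by
  induction l with
  | nil => rfl
  | cons a l ih =>
    cases l with
    | nil => rfl
    | cons b l =>
      simp only [List.map_cons] at ih ⊢
      rw [brk_cons_cons, brk_cons_cons, ih]
      congr 1

lemma chunks (G : SimpleGraph V) (l : List V) (hl : l ≠ []) :
    ∃ Ls : List (List V), Ls.length = brk G l + 1 ∧ (∀ m ∈ Ls, m ≠ [] ∧ m.IsChain G.Adj) ∧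
      Ls.flatten = l := by
  induction l with
  | nil => exact absurd rfl hl
  | cons a l ih =>
    cases l with
    | nil => exact ⟨[[a]], by simp [brk], by simp, by simp⟩
    | cons b l =>
      obtain ⟨Ls, h1, h2, h3⟩ := ih (by simp)
      by_cases hab : G.Adj a b
      · cases Ls with
        | nil => simp at h3
        | cons m Ls =>
          have hm := h2 m (by simp)
          obtain ⟨c, m', rfl⟩ := List.exists_cons_of_ne_nil hm.1
          simp at h3
          obtain ⟨rfl, h3⟩ := h3
          refine ⟨(a :: c :: m') :: Ls, ?_, ?_, by simp [h3]⟩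
          · rw [brk_cons_cons]; simp [na, hab] at h1 ⊢; exact h1
          · intro m hmm
            rcases List.mem_cons.1 hmm with rfl | hmm
            · exact ⟨by simp, List.isChain_cons_cons.2 ⟨hab, hm.2⟩⟩
            · exact h2 m (by simp [hmm])
      · refine ⟨[a] :: Ls, ?_, ?_, by simp [h3]⟩
        · rw [brk_cons_cons]; simp [na, hab, h1]; omega
        · intro m hmm
          rcases List.mem_cons.1 hmm with rfl | hmm
          · simp
          · exact h2 m (by simp [hmm])

lemma pathCoverable_of_LCov [Nonempty V] (G : SimpleGraph V) (k : ℕ) (h : LCov G k) :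
    PathCoverable G k := by
  obtain ⟨l, hl, hb⟩ := h
  have hne : l ≠ [] := by
    rintro rfl
    exact absurd (hl.2 (Classical.arbitrary V)) (by simp)
  obtain ⟨Ls, h1, h2, h3⟩ := chunks G l hne
  have hnd := hl.1
  rw [← h3, List.nodup_flatten] at hnd
  refine ⟨Ls.length, fun i => ⟨_, _, SimpleGraph.Walk.ofSupport (Ls.get i) (h2 _ (List.get_mem _ _)).1
    (h2 _ (List.get_mem _ _)).2⟩, by omega, ?_, ?_, ?_⟩
  · intro i
    rw [SimpleGraph.Walk.isPath_def, SimpleGraph.Walk.support_ofSupport]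
    exact hnd.1 _ (List.get_mem _ _)
  · intro v
    have := hl.2 v
    rw [← h3, List.mem_flatten] at this
    obtain ⟨m, hm, hv⟩ := this
    obtain ⟨i, rfl⟩ := List.get_of_mem hm
    exact ⟨i, by rw [SimpleGraph.Walk.support_ofSupport]; exact hv⟩
  · intro i j hij v hvi hvj
    rw [SimpleGraph.Walk.support_ofSupport] at hvi hvj
    have hp := List.pairwise_iff_get.1 hnd.2
    rcases lt_or_gt_of_ne hij with h | h
    · exact hp i j h hvi hvj
    · exact hp j i h hvj hvi

end Breaks

/-! ### Structure of non-coverable dense graphs -/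

section Structure

variable {V : Type*} [Fintype V]

lemma cdeg_mono {G H : SimpleGraph V} (h : G ≤ H) (v : V) : cdeg G v ≤ cdeg H v := by
  unfold cdeg
  apply Finset.card_le_card
  intro z
  simp only [Finset.mem_filter, Finset.mem_univ, true_and]
  exact fun hh => h hh

open scoped Classical in
lemma cdeg_split (H : SimpleGraph V) (S : Finset V) (w : V) :
    cdeg H w = (S.filter (fun a => H.Adj w a)).card + (Sᶜ.filter (fun a => H.Adj w a)).card := by
  unfold cdeg
  rw [← Finset.card_union_of_disjoint]
  · congr 1
    ext a
    simp only [mem_filter, mem_univ, true_and, mem_union, mem_compl]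
    tauto
  · rw [Finset.disjoint_left]
    intro a
    simp only [mem_filter, mem_compl]
    tauto

open scoped Classical in
lemma sum_cdeg_le (H : SimpleGraph V) (S : Finset V) :
    ∑ v, cdeg H v ≤ 2 * ∑ v ∈ S, cdeg H v + ∑ w ∈ Sᶜ, (Sᶜ.filter (fun a => H.Adj w a)).card := by
  rw [← Finset.sum_add_sum_compl S]
  have h1 : ∑ w ∈ Sᶜ, cdeg H w = ∑ w ∈ Sᶜ, (S.filter (fun a => H.Adj w a)).card
      + ∑ w ∈ Sᶜ, (Sᶜ.filter (fun a => H.Adj w a)).card := by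
    rw [← Finset.sum_add_distrib]
    exact Finset.sum_congr rfl (fun w _ => cdeg_split H S w)
  have h2 : ∑ w ∈ Sᶜ, (S.filter (fun a => H.Adj w a)).card =
      ∑ a ∈ S, (Sᶜ.filter (fun w => H.Adj a w)).card := by
    simp only [Finset.card_filter]
    rw [Finset.sum_comm]
    simp only [H.adj_comm]
  have h3 : ∑ a ∈ S, (Sᶜ.filter (fun w => H.Adj a w)).card ≤ ∑ a ∈ S, cdeg H a := by
    apply Finset.sum_le_sum
    intro a _
    rw [cdeg_split H S a]; omega
  omega

open scoped Classical in
lemma dW_le (H : SimpleGraph V) (W : Finset V) (w : V) (hw : w ∈ W) :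
    (W.filter (fun a => H.Adj w a)).card + 1 ≤ W.card := by
  have : W.filter (fun a => H.Adj w a) ⊆ W.erase w := by
    intro a
    simp only [mem_filter, mem_erase]
    rintro ⟨h1, h2⟩
    exact ⟨h2.ne', h1⟩
  have := Finset.card_le_card this
  rw [Finset.card_erase_of_mem hw] at this
  have := Finset.card_pos.2 ⟨w, hw⟩
  omega

lemma arith_i (N c k i d : ℤ) (hk : 1 ≤ k) (hd : 1 ≤ d) (hc : c = d + k)
    (hN : 16 * c ^ 2 + 26 * c + 9 ≤ N)
    (h2 : 2 * i + k + 1 ≤ N)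
    (h : (N - 1) * (N - 2 * c) ≤ 2 * ((i + k) * i) + (N - (i + k)) * (N - (i + k) - 1)) : i ≤ d := by
  by_contra hlt
  push Not at hlt
  obtain ⟨t, ht⟩ : ∃ t, t = i - d := ⟨_, rfl⟩
  have ht1 : 1 ≤ t := by omega
  have hi : i = t + c - k := by omega
  subst hi
  have e1 : 2 * t + c + 1 ≤ N + c - c + (k - c) := by linarith
  have h3 : 2 * N * t ≤ 3 * (t + c) ^ 2 := by
    nlinarith [mul_nonneg (by linarith : (0:ℤ) ≤ t + c) (by linarith : (0:ℤ) ≤ k - 1)]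
  have h4 : 2 * t ≤ N - c + k := by linarith
  have h5 : t * (2 * t) ≤ t * N := by
    apply mul_le_mul_of_nonneg_left _ (by omega)
    linarith
  have h6 : N * t ≤ t * (12 * c + 6 * c ^ 2) := by nlinarith [sq_nonneg c]
  have h7 : N ≤ 12 * c + 6 * c ^ 2 := by
    by_contra hh
    push Not at hh
    nlinarith
  nlinarith [sq_nonneg c]

lemma arith_W (N c k d : ℤ) (hk : 1 ≤ k) (hd : 1 ≤ d) (hc : c = d + k)
    (hN : 16 * c ^ 2 + 26 * c + 9 ≤ N)
    (h : (N - 1) * (N - 2 * c) ≤ 2 * (c * d) + ((N - c - 2) * (N - c - 1) + (N - k - 1))) : False := by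
  have : c * d ≤ c * c := by
    apply mul_le_mul_of_nonneg_left <;> linarith
  nlinarith

open scoped Classical in
theorem structure_lemma (G : SimpleGraph V) (k δ : ℕ) (hk : 1 ≤ k) (hδ : 1 ≤ δ)
    (hN : 16 * (δ + k) ^ 2 + 26 * (δ + k) + 9 ≤ Fintype.card V)
    (hconn : G.Connected) (hmin : ∀ v, δ ≤ cdeg G v)
    (hsum : ((Fintype.card V : ℤ) - 1) * ((Fintype.card V : ℤ) - 2 * (δ + k)) ≤
      ((∑ v, cdeg G v : ℕ) : ℤ)) (hcov : ¬ LCov G k) :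
    ∃ X Y : Finset V, X.card = δ + k ∧ Y.card = δ ∧ Disjoint X Y ∧
      ∀ x ∈ X, ∀ v, G.Adj x v ↔ v ∈ Y := by
  obtain ⟨H, hGH, hHcov, ⟨u0, v0, huv0, hadj0⟩, hH⟩ := exists_maximal G k hk hcov
  set n := Fintype.card V with hn
  have hminH : ∀ v, δ ≤ cdeg H v := fun v => (hmin v).trans (cdeg_mono hGH v)
  have hsumH : ((n : ℤ) - 1) * ((n : ℤ) - 2 * (δ + k)) ≤ ((∑ v, cdeg H v : ℕ) : ℤ) := by
    refine hsum.trans ?_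
    exact_mod_cast Finset.sum_le_sum (fun v _ => cdeg_mono hGH v)
  -- choose a maximal pair
  obtain ⟨⟨u1, v1⟩, hm1, hmax1⟩ := Finset.exists_max_image
    (univ.filter (fun p : V × V => p.1 ≠ p.2 ∧ ¬ H.Adj p.1 p.2))
    (fun p => cdeg H p.1 + cdeg H p.2) ⟨(u0, v0), by simp [huv0, hadj0]⟩
  simp only [mem_filter, mem_univ, true_and] at hm1 hmax1
  obtain ⟨u, v, huv, hadj, hle, hmax⟩ : ∃ u v, u ≠ v ∧ ¬ H.Adj u v ∧ cdeg H u ≤ cdeg H v ∧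
      ∀ a b, a ≠ b → ¬ H.Adj a b → cdeg H a + cdeg H b ≤ cdeg H u + cdeg H v := by
    rcases le_total (cdeg H u1) (cdeg H v1) with h | h
    · exact ⟨u1, v1, hm1.1, hm1.2, h, fun a b h1 h2 => hmax1 (a, b) ⟨h1, h2⟩⟩
    · refine ⟨v1, u1, hm1.1.symm, fun h => hm1.2 h.symm, h, fun a b h1 h2 => ?_⟩
      have := hmax1 (a, b) ⟨h1, h2⟩
      simp only at this
      omega
  have huvs := hH u v huv hadj
  set i := cdeg H u with hi
  let S0 := univ.filter (fun a => a ≠ v ∧ ¬ H.Adj v a)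
  have hS0 : S0.card + cdeg H v + 1 = n := by
    have h1 : univ.filter (fun a => ¬ H.Adj v a) = insert v S0 := by
      ext a
      simp only [S0, mem_filter, mem_univ, true_and, mem_insert]
      constructor
      · intro h
        by_cases e : a = v
        · exact Or.inl e
        · exact Or.inr ⟨e, h⟩
      · rintro (rfl | h)
        · simp
        · exact h.2
    have h2 := Finset.card_filter_add_card_filter_not (s := (univ : Finset V)) (fun a => H.Adj v a)
    rw [h1, Finset.card_insert_of_notMem (by simp [S0]), Finset.card_univ] at h2
    unfold cdeg
    omega
  obtain ⟨X, hXS, hXc⟩ := Finset.exists_subset_card_eq (s := S0) (n := i + k) (by omega)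
  have hXdeg : ∀ a ∈ X, cdeg H a ≤ i := by
    intro a ha
    have := hXS ha
    simp only [S0, mem_filter, mem_univ, true_and] at this
    have := hmax a v this.1 (fun h => this.2 h.symm)
    omega
  have hWc : (Xᶜ.card : ℤ) = n - (i + k) := by
    rw [Finset.card_compl, hXc, Nat.cast_sub]
    · push_cast; ring
    · omega
  have hXsum : ∑ a ∈ X, cdeg H a ≤ (i + k) * i := by
    rw [← hXc, ← smul_eq_mul]
    exact Finset.sum_le_card_nsmul _ _ _ hXdeg
  have hiδ : i = δ := by
    have hdW : ∑ w ∈ Xᶜ, (Xᶜ.filter (fun a => H.Adj w a)).card ≤ Xᶜ.card * (Xᶜ.card - 1) := by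
      rw [← smul_eq_mul]
      apply Finset.sum_le_card_nsmul
      intro w hw
      have := dW_le H Xᶜ w hw
      omega
    have htot := sum_cdeg_le H X
    have hWpos : 1 ≤ Xᶜ.card := by
      have : (1:ℤ) ≤ Xᶜ.card := by rw [hWc]; push_cast at *; omega
      exact_mod_cast this
    have hfin : ((∑ v, cdeg H v : ℕ) : ℤ) ≤
        2 * ((i + k) * i) + (n - (i + k)) * (n - (i + k) - 1) := by
      have : ∑ v, cdeg H v ≤ 2 * ((i + k) * i) + Xᶜ.card * (Xᶜ.card - 1) := by omega
      have h' : ((∑ v, cdeg H v : ℕ) : ℤ) ≤ ((2 * ((i + k) * i) + Xᶜ.card * (Xᶜ.card - 1) : ℕ) : ℤ) := by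
        exact_mod_cast this
      rw [Nat.cast_add, Nat.cast_mul _ (Xᶜ.card - 1), Nat.cast_sub hWpos, hWc] at h'
      push_cast at h' ⊢
      exact h'
    have := arith_i (n : ℤ) (δ + k) k i δ (by exact_mod_cast hk) (by exact_mod_cast hδ) rfl
      (by exact_mod_cast hN) (by omega) (hsumH.trans hfin)
    have := hminH u
    omega
  rw [hiδ] at hXc hXdeg hWc hXsum
  have hXdeg' : ∀ a ∈ X, cdeg H a = δ := fun a ha => le_antisymm (hXdeg a ha) (hminH a)
  -- W is a clique
  have hclique : ∀ a ∉ X, ∀ b ∉ X, a ≠ b → H.Adj a b := by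
    intro a ha b hb hab
    by_contra hnadj
    have hs := hH a b hab hnadj
    have htot := sum_cdeg_le H X
    have hpair : ({a, b} : Finset V) ⊆ Xᶜ := by
      intro z; simp only [mem_insert, mem_singleton, mem_compl]
      rintro (rfl | rfl) <;> assumption
    have hsp := Finset.sum_sdiff (f := fun w => (Xᶜ.filter (fun a => H.Adj w a)).card) hpair
    rw [Finset.sum_pair hab] at hsp
    have hpa := cdeg_split H X a
    have hpb := cdeg_split H X b
    have hrest : ∑ w ∈ Xᶜ \ {a, b}, (Xᶜ.filter (fun a => H.Adj w a)).card
        ≤ (Xᶜ.card - 2) * (Xᶜ.card - 1) := by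
      have : (Xᶜ \ {a, b}).card = Xᶜ.card - 2 := by
        rw [Finset.card_sdiff_of_subset hpair, Finset.card_pair hab]
      rw [← this, ← smul_eq_mul]
      apply Finset.sum_le_card_nsmul
      intro w hw
      have := dW_le H Xᶜ w (Finset.mem_sdiff.1 hw).1
      omega
    have hW2 : 2 ≤ Xᶜ.card := by
      rw [← Finset.card_pair hab]; exact Finset.card_le_card hpair
    have hfin : ((∑ v, cdeg H v : ℕ) : ℤ) ≤
        2 * ((δ + k) * δ) + ((n - (δ + k) - 2) * (n - (δ + k) - 1) + (n - k - 1)) := by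
      have : ∑ v, cdeg H v + (k + 1) ≤ 2 * ((δ + k) * δ) + ((Xᶜ.card - 2) * (Xᶜ.card - 1) + n) := by
        omega
      have h' : ((∑ v, cdeg H v + (k + 1) : ℕ) : ℤ) ≤
          ((2 * ((δ + k) * δ) + ((Xᶜ.card - 2) * (Xᶜ.card - 1) + n) : ℕ) : ℤ) := by
        exact_mod_cast this
      rw [Nat.cast_add, Nat.cast_add (2 * ((δ + k) * δ)), Nat.cast_add _ n,
        Nat.cast_mul (Xᶜ.card - 2) (Xᶜ.card - 1), Nat.cast_sub hW2,
        Nat.cast_sub (by omega : 1 ≤ Xᶜ.card), hWc] at h'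
      push_cast at h' ⊢
      linarith
    exact arith_W (n : ℤ) (δ + k) k δ (by exact_mod_cast hk) (by exact_mod_cast hδ) rfl
      (by exact_mod_cast hN) (hsumH.trans hfin)
  -- vertices of W adjacent to some vertex of X are adjacent to all
  have hall : ∀ w ∉ X, ∀ x ∈ X, H.Adj w x → ∀ x' ∈ X, H.Adj w x' := by
    intro w hw x hx hwx x' hx'
    by_contra hnadj
    have hne : w ≠ x' := by rintro rfl; exact hw hx'
    have h1 := hH w x' hne hnadj
    rw [hXdeg' x' hx', cdeg_split H X w] at h1
    have h2 : 1 ≤ (X.filter (fun a => H.Adj w a)).card :=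
      Finset.card_pos.2 ⟨x, by simp [hx, hwx]⟩
    have h3 : (Xᶜ.filter (fun a => H.Adj w a)).card + 1 = Xᶜ.card := by
      have : Xᶜ.filter (fun a => H.Adj w a) = Xᶜ.erase w := by
        ext a
        simp only [mem_filter, mem_erase, mem_compl]
        constructor
        · rintro ⟨h1, h2⟩; exact ⟨h2.ne', h1⟩
        · rintro ⟨h1, h2⟩; exact ⟨h2, hclique w hw a h2 h1.symm⟩
      rw [this, Finset.card_erase_of_mem (by simpa using hw)]
      have := Finset.card_pos.2 ⟨w, (by simpa using hw : w ∈ Xᶜ)⟩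
      omega
    omega
  let Y := Xᶜ.filter (fun w => ∃ x ∈ X, H.Adj w x)
  have hYadj : ∀ y ∈ Y, ∀ x ∈ X, H.Adj x y := by
    intro y hy x hx
    simp only [Y, mem_filter, mem_compl] at hy
    obtain ⟨hyX, x0, hx0, h⟩ := hy
    exact (hall y hyX x0 hx0 h x hx).symm
  have hXY : Disjoint X Y := by
    rw [Finset.disjoint_left]
    intro a ha hy
    simp only [Y, mem_filter, mem_compl] at hy
    exact hy.1 ha
  have hYX : ∀ x ∈ X, Xᶜ.filter (fun a => H.Adj x a) = Y := by
    intro x hx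
    ext a
    constructor
    · intro h
      simp only [Y, mem_filter, mem_compl] at h ⊢
      exact ⟨h.1, x, hx, h.2.symm⟩
    · intro h
      have := hYadj a h x hx
      simp only [Y, mem_filter, mem_compl] at h ⊢
      exact ⟨h.1, this⟩
  have hXne : X.Nonempty := Finset.card_pos.1 (by omega)
  obtain ⟨x0, hx0⟩ := hXne
  have hsplit : ∀ x ∈ X, (X.filter (fun a => H.Adj x a)).card + Y.card = δ := by
    intro x hx
    rw [← hXdeg' x hx, cdeg_split H X x, hYX x hx]
  have hYle : Y.card ≤ δ := by have := hsplit x0 hx0; omega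
  rcases hYle.eq_or_lt with hYδ | hYlt
  · refine ⟨X, Y, hXc, hYδ, hXY, ?_⟩
    intro x hx
    have hsub : univ.filter (fun a => G.Adj x a) ⊆ Y := by
      intro a ha
      simp only [mem_filter, mem_univ, true_and] at ha
      have hHa := hGH ha
      by_cases haX : a ∈ X
      · exfalso
        have h1 := hsplit x hx
        have : 0 < (X.filter (fun a => H.Adj x a)).card :=
          Finset.card_pos.2 ⟨a, by simp [haX, hHa]⟩
        omega
      · rw [← hYX x hx]
        simp [haX, hHa]
    have heq : univ.filter (fun a => G.Adj x a) = Y := by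
      apply Finset.eq_of_subset_of_card_le hsub
      rw [hYδ]
      exact hmin x
    intro v
    rw [← heq]; simp
  · exfalso
    apply hHcov
    -- Y nonempty by connectivity
    have hWpos : 0 < Xᶜ.card := by
      have : (0:ℤ) < Xᶜ.card := by rw [hWc]; nlinarith
      exact_mod_cast this
    have hYpos : 1 ≤ Y.card := by
      by_contra h0
      have hYe : Y = ∅ := Finset.card_eq_zero.1 (by omega)
      obtain ⟨w, hw⟩ := Finset.card_pos.1 hWpos
      have hHconn : H.Connected := hconn.mono hGH
      obtain ⟨p⟩ := hHconn.preconnected x0 w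
      obtain ⟨d, -, hd1, hd2⟩ := p.exists_boundary_dart (X : Set V) (by simpa using hx0)
        (by simpa using hw)
      have : d.snd ∈ Y := by
        simp only [Y, mem_filter, mem_compl]
        exact ⟨by simpa using hd2, d.fst, by simpa using hd1, d.adj.symm⟩
      rw [hYe] at this
      simp at this
    -- cover X
    let F : SimpleGraph X := H.comap Subtype.val
    have hF : ∀ x : X, cdeg F x = (X.filter (fun a => H.Adj x a)).card := by
      intro x
      unfold cdeg
      refine Finset.card_bij (fun a _ => a.1) ?_ ?_ ?_
      · intro a ha
        simpa [F] using ha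
      · intro a _ b _ h; exact Subtype.ext h
      · intro b hb
        simp only [mem_filter] at hb
        exact ⟨⟨b, hb.1⟩, by simpa [F] using hb.2, rfl⟩
    obtain ⟨l, hl, hb⟩ := ore F (Y.card + k - 1) (by omega) (by
      intro a b _ _
      rw [hF, hF]
      have h1 := hsplit a a.2
      have h2 := hsplit b b.2
      have : Fintype.card X = δ + k := by simp [hXc]
      omega)
    rw [← brk_map H Subtype.val l] at hb
    set lX := l.map Subtype.val with hlX
    have hlXmem : ∀ a, a ∈ lX ↔ a ∈ X := by
      intro a
      simp only [hlX, List.mem_map]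
      constructor
      · rintro ⟨b, -, rfl⟩; exact b.2
      · intro h; exact ⟨⟨a, h⟩, hl.2 _, rfl⟩
    have hlXnd : lX.Nodup := hl.1.map Subtype.val_injective
    let Z := Xᶜ \ Y
    have hZbrk : brk H Z.toList = 0 := by
      apply brk_complete _ _ (Finset.nodup_toList _)
      intro a ha b hb hab
      simp only [Finset.mem_toList, Z, mem_sdiff, mem_compl] at ha hb
      exact hclique a ha.1 b hb.1 hab
    have hYX' : ∀ y ∈ Y, y ∉ X := fun y hy hx => Finset.disjoint_left.1 hXY hx hy
    have hnd : (Y.toList ++ (Z.toList ++ lX)).Nodup := by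
      rw [List.nodup_append, List.nodup_append]
      refine ⟨Finset.nodup_toList _, ⟨Finset.nodup_toList _, hlXnd, ?_⟩, ?_⟩
      · rintro a ha b hb rfl
        rw [hlXmem] at hb
        simp only [Finset.mem_toList, Z, mem_sdiff, mem_compl] at ha
        exact ha.1 hb
      · rintro a ha b hb rfl
        rw [List.mem_append, hlXmem] at hb
        simp only [Finset.mem_toList, Z, mem_sdiff, mem_compl] at ha hb
        rcases hb with hb | hb
        · exact hb.2 ha
        · exact hYX' a ha hb
    obtain ⟨l', hp, hb'⟩ := insert_universals H Y.toList (Z.toList ++ lX) hnd (by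
      intro y hy a hay
      rw [Finset.mem_toList] at hy
      by_cases haX : a ∈ X
      · exact (hYadj y hy a haX).symm
      · exact hclique y (hYX' y hy) a haX hay.symm)
    refine ⟨l', ⟨hp.nodup_iff.2 hnd, ?_⟩, ?_⟩
    · intro a
      rw [hp.mem_iff, List.mem_append, List.mem_append, hlXmem]
      simp only [Finset.mem_toList, Z, mem_sdiff, mem_compl]
      tauto
    · have := brk_append_le H Z.toList lX
      rw [Finset.length_toList] at hb'
      omega

end Structure

/-! ### Spectral part -/

section Spectral

lemma exists_eigenvector {n : ℕ} (G : SimpleGraph (Fin n)) [DecidableRel G.Adj] (t : ℝ) (ht : 0 < t)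
    (h : t ≤ qIndex G) :
    ∃ (μ : ℝ) (x : Fin n → ℝ), x ≠ 0 ∧ signlessLaplacian G *ᵥ x = μ • x ∧ t ≤ μ := by
  unfold qIndex at h
  set S := {μ : ℝ | ∃ x : Fin n → ℝ, x ≠ 0 ∧ signlessLaplacian G *ᵥ x = μ • x} with hS
  have hne : S.Nonempty := by
    by_contra hh
    rw [Set.not_nonempty_iff_eq_empty] at hh
    rw [hh, Real.sSup_empty] at h
    linarith
  have hfin : S.Finite := by
    refine Set.Finite.subset
      (Module.End.finite_hasEigenvalue (Matrix.toLin' (signlessLaplacian G))) ?_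
    rintro μ ⟨x, hx, e⟩
    exact Module.End.hasEigenvalue_of_hasEigenvector (x := x)
      ⟨Module.End.mem_eigenspace_iff.2 (by rw [Matrix.toLin'_apply, e]), hx⟩
  obtain ⟨x, hx, e⟩ := hne.csSup_mem hfin
  exact ⟨_, x, hx, e, h⟩

open scoped Classical in
lemma cdeg_eq {V : Type*} [Fintype V] (G : SimpleGraph V) [DecidableRel G.Adj] (v : V) :
    G.degree v = cdeg G v := by
  unfold cdeg
  rw [← SimpleGraph.card_neighborFinset_eq_degree]
  congr 1
  ext u
  simp

open scoped Classical in
lemma eig_apply {n : ℕ} (G : SimpleGraph (Fin n)) [DecidableRel G.Adj] (μ : ℝ) (x : Fin n → ℝ)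
    (h : signlessLaplacian G *ᵥ x = μ • x) (v : Fin n) :
    (cdeg G v : ℝ) * x v + ∑ u, (if G.Adj v u then x u else 0) = μ * x v := by
  have := congrFun h v
  unfold signlessLaplacian at this
  rw [Matrix.add_mulVec] at this
  simp only [Pi.add_apply, Matrix.mulVec_diagonal, SimpleGraph.adjMatrix_mulVec_apply,
    Pi.smul_apply, smul_eq_mul] at this
  rw [← this, cdeg_eq]
  congr 1
  rw [← Finset.sum_filter]
  apply Finset.sum_congr _ (fun _ _ => rfl)
  ext u; simp

open scoped Classical in
lemma cdeg_sum {n : ℕ} (G : SimpleGraph (Fin n)) (v : Fin n) :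
    (cdeg G v : ℝ) = ∑ u, (if G.Adj v u then (1:ℝ) else 0) := by
  unfold cdeg
  rw [Finset.card_filter]
  push_cast
  rfl

open scoped Classical in
lemma cdeg_lt {n : ℕ} (G : SimpleGraph (Fin n)) (v : Fin n) : cdeg G v + 1 ≤ n := by
  have := dW_le G univ v (mem_univ v)
  simpa [cdeg] using this

open scoped Classical in
/-- The edge bound. -/
lemma degree_sum_bound {n : ℕ} (G : SimpleGraph (Fin n)) (μ : ℝ) (x : Fin n → ℝ) (c : ℝ)
    (hx : x ≠ 0) (h : ∀ v, (cdeg G v : ℝ) * x v + ∑ u, (if G.Adj v u then x u else 0) = μ * x v)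
    (hμ : 2 * ((n : ℝ) - c - 1) ≤ μ) (hpos : ∀ v, 1 ≤ cdeg G v) :
    ((n : ℝ) - 1) * (n - 2 * c) ≤ ∑ v, (cdeg G v : ℝ) := by
  have hdpos : ∀ v, (1 : ℝ) ≤ cdeg G v := fun v => by exact_mod_cast hpos v
  have hdle : ∀ v, (cdeg G v : ℝ) + 1 ≤ n := fun v => by exact_mod_cast cdeg_lt G v
  obtain ⟨w, hw⟩ := Function.ne_iff.1 hx
  obtain ⟨v, -, hv⟩ := Finset.exists_max_image univ (fun v => |x v| / cdeg G v) ⟨w, mem_univ w⟩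
  have hwpos : 0 < |x w| / cdeg G w := div_pos (abs_pos.2 hw) (by linarith [hdpos w])
  set r := |x v| / cdeg G v with hr
  have hrpos : 0 < r := lt_of_lt_of_le hwpos (hv w (mem_univ w))
  have hxv : |x v| = r * cdeg G v := by
    rw [hr]; field_simp [(by linarith [hdpos v] : (cdeg G v : ℝ) ≠ 0)]
  have hxu : ∀ u, |x u| ≤ r * cdeg G u := by
    intro u
    have := hv u (mem_univ u)
    rwa [div_le_iff₀ (by linarith [hdpos u])] at this
  set D := (cdeg G v : ℝ) with hD
  set N := ∑ u, (if G.Adj v u then (cdeg G u : ℝ) else 0) with hN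
  -- (μ - D) |x v| ≤ r N
  have h1 : (μ - D) * |x v| ≤ r * N := by
    have e : (μ - D) * x v = ∑ u, (if G.Adj v u then x u else 0) := by linarith [h v]
    calc (μ - D) * |x v| ≤ |μ - D| * |x v| := by
          apply mul_le_mul_of_nonneg_right (le_abs_self _) (abs_nonneg _)
      _ = |∑ u, (if G.Adj v u then x u else 0)| := by rw [← abs_mul, e]
      _ ≤ ∑ u, |if G.Adj v u then x u else 0| := Finset.abs_sum_le_sum_abs _ _
      _ ≤ ∑ u, r * (if G.Adj v u then (cdeg G u : ℝ) else 0) := by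
          apply Finset.sum_le_sum
          intro u _
          split_ifs
          · exact hxu u
          · simp
      _ = r * N := by rw [Finset.mul_sum]
  have h2 : (μ - D) * D ≤ N := by
    rw [hxv] at h1
    have : r * ((μ - D) * D) ≤ r * N := by linarith
    exact le_of_mul_le_mul_left this hrpos
  have h3 : N ≤ D * (n - 1) := by
    rw [hD, cdeg_sum, Finset.sum_mul]
    apply Finset.sum_le_sum
    intro u _
    split_ifs
    · linarith [hdle u]
    · simp
  have hD1 : 1 ≤ D := hdpos v
  have hDn : D + 1 ≤ n := hdle v
  have h4 : (n : ℝ) - 2 * c - 1 ≤ D := by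
    have : D * (μ - D) ≤ D * (n - 1) := by linarith
    have := le_of_mul_le_mul_left this (by linarith)
    linarith
  have h5 : N + D + (n - 1 - D) ≤ ∑ u, (cdeg G u : ℝ) := by
    have : N + (n - D) + (D - 1) ≤ ∑ u, (cdeg G u : ℝ) := by
      have e : (n : ℝ) = ∑ u : Fin n, (1:ℝ) := by simp
      have e2 : D - 1 = ∑ u : Fin n, (if u = v then D - 1 else 0) := by simp
      rw [e2, e, hD, cdeg_sum, hN, ← Finset.sum_sub_distrib, ← Finset.sum_add_distrib,
        ← Finset.sum_add_distrib]
      apply Finset.sum_le_sum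
      intro u _
      by_cases huv : u = v
      · subst huv
        simp [cdeg]
      · simp only [huv, if_false]
        have := hdpos u
        split_ifs <;> linarith
    linarith
  nlinarith [mul_nonneg (by linarith : (0:ℝ) ≤ D - (n - 2 * c - 1)) (by linarith : (0:ℝ) ≤ n - 1 - D),
    mul_le_mul_of_nonneg_right hμ (by linarith : (0:ℝ) ≤ D)]

lemma arith_final (M c d e a σ φ ζ ξ F : ℝ) (hc : 3 ≤ c) (hd : 2 ≤ d) (hdc : d ≤ c)
    (he1 : c * d + 1 ≤ 4 * e) (he2 : 4 * e ≤ c * d + 4)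
    (hM : (c * d + 6 * c + d + 9) * (c * d + 1) - c ≤ M) (hζ : 0 ≤ ζ) (hξ : 0 ≤ ξ)
    (hσ : σ ^ 2 ≤ c * ξ) (hφ : φ ^ 2 ≤ F * ζ) (hF : F ≤ c ^ 2 * d + 8 * e ^ 2)
    (h : M * ζ + 2 * (M - 1) * ξ ≤
      (c * d - 4 * e) * a ^ 2 + 2 * a * d * σ + 2 * a * φ + 2 * d * ξ + 2 * c * ζ) :
    a = 0 ∧ ζ = 0 ∧ ξ = 0 := by
  obtain ⟨A, hA⟩ : ∃ A, A = c * d := ⟨_, rfl⟩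
  rw [← hA] at he1 he2 hM h
  have hA6 : 6 ≤ A := by nlinarith
  have hAc : 2 * c ≤ A := by nlinarith
  have hAd : 3 * d ≤ A := by nlinarith
  have hF2 : F ≤ A ^ 2 + 4 * A + 8 := by
    have h1 : c ^ 2 * d * 2 ≤ A ^ 2 := by
      rw [hA]; nlinarith [mul_nonneg (mul_nonneg (sq_nonneg c) (by linarith : (0:ℝ) ≤ d)) (by linarith : (0:ℝ) ≤ d - 2)]
    have h2 : (4 * e) ^ 2 ≤ (A + 4) ^ 2 := by
      apply pow_le_pow_left₀ <;> linarith
    nlinarith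
  obtain ⟨K, hK⟩ : ∃ K, K = M - 2 * c - 1 := ⟨_, rfl⟩
  have hKlow : A ^ 2 + 6 * c * A + d * A + 10 * A + 3 * c + d + 8 ≤ K := by
    rw [hK]; nlinarith
  have hKF : c * F ≤ K * (c - 1) := by
    have h1 : c * F ≤ c * (A ^ 2 + 4 * A + 8) := by
      apply mul_le_mul_of_nonneg_left hF2; linarith
    have h2 : (A ^ 2 + 6 * c * A + d * A + 10 * A + 3 * c + d + 8) * (c - 1) ≤ K * (c - 1) := by
      apply mul_le_mul_of_nonneg_right hKlow; linarith
    have h3 : c * (A ^ 2 + 4 * A + 8) ≤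
        (A ^ 2 + 6 * c * A + d * A + 10 * A + 3 * c + d + 8) * (c - 1) := by
      have h4 : A ^ 2 ≤ c * A * (c - 1) * 2 := by
        have : A * A ≤ A * (c * (c - 1) * 2) := by
          apply mul_le_mul_of_nonneg_left _ (by linarith)
          nlinarith
        nlinarith
      nlinarith [mul_nonneg (by linarith : (0:ℝ) ≤ A) (by linarith : (0:ℝ) ≤ c - 3),
        mul_nonneg (mul_nonneg (by linarith : (0:ℝ) ≤ A) (by linarith : (0:ℝ) ≤ c)) (by linarith : (0:ℝ) ≤ c - 3),
        mul_nonneg (mul_nonneg (by linarith : (0:ℝ) ≤ A) (by linarith : (0:ℝ) ≤ d)) (by linarith : (0:ℝ) ≤ c - 3),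
        mul_nonneg (by linarith : (0:ℝ) ≤ d) (by linarith : (0:ℝ) ≤ c - 3)]
    linarith
  have hcpos : 0 < c := by linarith
  -- first cross term
  have t1 : c * (2 * a * d * σ) ≤ a ^ 2 + c * (A ^ 2 * ξ) := by
    have h1 : 0 ≤ (a - c * d * σ) ^ 2 := sq_nonneg _
    have h2 : (c * d) ^ 2 * σ ^ 2 ≤ (c * d) ^ 2 * (c * ξ) :=
      mul_le_mul_of_nonneg_left hσ (sq_nonneg _)
    have i1 : (a - c * d * σ) ^ 2 = a ^ 2 - c * (2 * a * d * σ) + (c * d) ^ 2 * σ ^ 2 := by ring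
    have i2 : (c * d) ^ 2 * (c * ξ) = c * ((c * d) ^ 2 * ξ) := by ring
    rw [hA]; linarith
  have t2 : c * (2 * a * φ) ≤ (c - 1) * a ^ 2 + c * (K * ζ) := by
    have h1 : 0 ≤ ((c - 1) * a - c * φ) ^ 2 := sq_nonneg _
    have h2 : c ^ 2 * φ ^ 2 ≤ c * (K * (c - 1) * ζ) := by
      have h3 : c ^ 2 * φ ^ 2 ≤ c ^ 2 * (F * ζ) := mul_le_mul_of_nonneg_left hφ (sq_nonneg _)
      have h4 : c * ζ * (c * F) ≤ c * ζ * (K * (c - 1)) :=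
        mul_le_mul_of_nonneg_left hKF (by positivity)
      have i1 : c * ζ * (c * F) = c ^ 2 * (F * ζ) := by ring
      have i2 : c * ζ * (K * (c - 1)) = c * (K * (c - 1) * ζ) := by ring
      linarith
    have h5 : (c - 1) * (c * (2 * a * φ)) ≤ (c - 1) * ((c - 1) * a ^ 2 + c * (K * ζ)) := by
      have i1 : ((c - 1) * a - c * φ) ^ 2 = (c - 1) * ((c - 1) * a ^ 2)
        - (c - 1) * (c * (2 * a * φ)) + c ^ 2 * φ ^ 2 := by ring
      have i2 : (c - 1) * ((c - 1) * a ^ 2 + c * (K * ζ)) =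
        (c - 1) * ((c - 1) * a ^ 2) + c * (K * (c - 1) * ζ) := by ring
      linarith
    exact le_of_mul_le_mul_left h5 (by linarith)
  have t3 : c * ((A - 4 * e) * a ^ 2) ≤ - (c * a ^ 2) := by
    have : c * a ^ 2 * (A - 4 * e) ≤ c * a ^ 2 * (-1) :=
      mul_le_mul_of_nonneg_left (by linarith) (by positivity)
    nlinarith
  have t4 : c * (M * ζ + 2 * (M - 1) * ξ) ≤ c * (A ^ 2 * ξ + K * ζ + 2 * d * ξ + 2 * c * ζ) := by
    have := mul_le_mul_of_nonneg_left h hcpos.le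
    linarith
  have t5 := le_of_mul_le_mul_left t4 hcpos
  have t6 : ζ + (2 * (M - 1) - A ^ 2 - 2 * d) * ξ ≤ 0 := by rw [hK] at t5; linarith
  have t7 : 1 ≤ 2 * (M - 1) - A ^ 2 - 2 * d := by
    have j1 : 0 ≤ c * A := by positivity
    have j2 : 0 ≤ d * A := mul_nonneg (by linarith) (by linarith)
    have j3 : 0 ≤ A ^ 2 := sq_nonneg A
    linarith
  have t8 : ξ ≤ (2 * (M - 1) - A ^ 2 - 2 * d) * ξ :=
    le_mul_of_one_le_left hξ t7
  have z1 : ζ = 0 := by linarith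
  have z2 : ξ = 0 := by linarith
  refine ⟨?_, z1, z2⟩
  rw [z2, mul_zero] at hσ
  rw [z1, mul_zero] at hφ
  have s0 : σ = 0 := pow_eq_zero_iff (two_ne_zero) |>.1 (le_antisymm hσ (sq_nonneg σ))
  have p0 : φ = 0 := pow_eq_zero_iff (two_ne_zero) |>.1 (le_antisymm hφ (sq_nonneg φ))
  rw [z1, z2, s0, p0] at h
  have t9 : a ^ 2 ≤ a ^ 2 * (4 * e - A) := le_mul_of_one_le_right (sq_nonneg a) (by linarith)
  have t10 : a ^ 2 ≤ 0 := by linarith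
  exact pow_eq_zero_iff (two_ne_zero) |>.1 (le_antisymm t10 (sq_nonneg a))

end Spectral

section Form

open scoped Classical in
lemma energy {n : ℕ} (G : SimpleGraph (Fin n)) (μ : ℝ) (x : Fin n → ℝ)
    (h : ∀ v, (cdeg G v : ℝ) * x v + ∑ u, (if G.Adj v u then x u else 0) = μ * x v) :
    2 * (μ * ∑ v, x v ^ 2) = ∑ v, ∑ u, (if G.Adj v u then (x v + x u) ^ 2 else 0) := by
  have h1 : μ * ∑ v, x v ^ 2 = ∑ v, ∑ u, (if G.Adj v u then x v ^ 2 + x v * x u else 0) := by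
    rw [Finset.mul_sum]
    apply Finset.sum_congr rfl
    intro v _
    have : μ * x v ^ 2 = x v * (μ * x v) := by ring
    rw [this, ← h v, cdeg_sum, Finset.sum_mul, ← Finset.sum_add_distrib, Finset.mul_sum]
    apply Finset.sum_congr rfl
    intro u _
    split_ifs <;> ring
  have h2 : μ * ∑ v, x v ^ 2 = ∑ v, ∑ u, (if G.Adj v u then x u ^ 2 + x u * x v else 0) := by
    rw [h1, Finset.sum_comm]
    simp only [G.adj_comm]
  rw [two_mul]
  nth_rewrite 1 [h1]
  rw [h2, ← Finset.sum_add_distrib]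
  apply Finset.sum_congr rfl
  intro v _
  rw [← Finset.sum_add_distrib]
  apply Finset.sum_congr rfl
  intro u _
  split_ifs <;> ring

open scoped Classical in
lemma sum2_ite {n : ℕ} (A B : Finset (Fin n)) (f : Fin n → Fin n → ℝ) :
    ∑ v ∈ A, ∑ u ∈ B, f v u = ∑ v, ∑ u, (if v ∈ A ∧ u ∈ B then f v u else 0) := by
  rw [← Finset.sum_filter_add_sum_filter_not univ (fun v => v ∈ A)
    (fun v => ∑ u, (if v ∈ A ∧ u ∈ B then f v u else 0))]
  rw [Finset.sum_eq_zero (s := univ.filter (fun v => v ∉ A)), add_zero]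
  · have : univ.filter (fun v => v ∈ A) = A := by ext; simp
    rw [this]
    apply Finset.sum_congr rfl
    intro v hv
    simp only [hv, true_and]
    rw [Finset.sum_ite_mem, Finset.univ_inter]
  · intro v hv
    simp only [mem_filter, mem_univ, true_and] at hv
    simp [hv]

open scoped Classical in
lemma energy_bound {n : ℕ} (G : SimpleGraph (Fin n)) (x : Fin n → ℝ) (X Y : Finset (Fin n))
    (hXY : Disjoint X Y) (hadj : ∀ a ∈ X, ∀ v, G.Adj a v ↔ v ∈ Y)
    (T : Finset (Fin n × Fin n))
    (hT : ∀ p ∈ T, p.1 < p.2 ∧ p.1 ∉ X ∧ p.2 ∉ X ∧ ¬ G.Adj p.1 p.2) :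
    ∑ v, ∑ u, (if G.Adj v u then (x v + x u) ^ 2 else 0) ≤
      ∑ v ∈ Xᶜ, ∑ u ∈ Xᶜ, (x v + x u) ^ 2 - ∑ v ∈ Xᶜ, 4 * x v ^ 2
      - 2 * ∑ p ∈ T, (x p.1 + x p.2) ^ 2 + 2 * ∑ v ∈ X, ∑ u ∈ Y, (x v + x u) ^ 2 := by
  have e1 := sum2_ite Xᶜ Xᶜ (fun v u => (x v + x u) ^ 2)
  have e2 : ∑ v ∈ Xᶜ, 4 * x v ^ 2 =
      ∑ v, ∑ u, (if v = u ∧ v ∉ X then (x v + x u) ^ 2 else 0) := by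
    have : ∀ v, ∑ u, (if v = u ∧ v ∉ X then (x v + x u) ^ 2 else 0) =
        if v ∈ Xᶜ then 4 * x v ^ 2 else 0 := by
      intro v
      by_cases hv : v ∈ X
      · simp [hv]
      · simp [hv]; ring
    simp only [this]
    rw [Finset.sum_ite_mem, Finset.univ_inter]
  have e3 : ∑ p ∈ T, (x p.1 + x p.2) ^ 2 =
      ∑ v, ∑ u, (if (v, u) ∈ T then (x v + x u) ^ 2 else 0) := by
    rw [← Fintype.sum_prod_type (fun p : Fin n × Fin n => if p ∈ T then (x p.1 + x p.2) ^ 2 else 0),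
      Finset.sum_ite_mem, Finset.univ_inter]
  have e3' : ∑ p ∈ T, (x p.1 + x p.2) ^ 2 =
      ∑ v, ∑ u, (if (u, v) ∈ T then (x v + x u) ^ 2 else 0) := by
    rw [e3, Finset.sum_comm]
    apply Finset.sum_congr rfl; intro v _
    apply Finset.sum_congr rfl; intro u _
    rw [add_comm (x u)]
  have e4 := sum2_ite X Y (fun v u => (x v + x u) ^ 2)
  have e4' : ∑ v ∈ X, ∑ u ∈ Y, (x v + x u) ^ 2 =
      ∑ v, ∑ u, (if u ∈ X ∧ v ∈ Y then (x v + x u) ^ 2 else 0) := by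
    rw [e4, Finset.sum_comm]
    apply Finset.sum_congr rfl; intro v _
    apply Finset.sum_congr rfl; intro u _
    rw [add_comm (x u)]
  have key : ∑ v, ∑ u, (if G.Adj v u then (x v + x u) ^ 2 else 0) ≤
      ∑ v, ∑ u, ((if v ∈ Xᶜ ∧ u ∈ Xᶜ then (x v + x u) ^ 2 else 0)
        - (if v = u ∧ v ∉ X then (x v + x u) ^ 2 else 0)
        - (if (v, u) ∈ T then (x v + x u) ^ 2 else 0)
        - (if (u, v) ∈ T then (x v + x u) ^ 2 else 0)
        + (if v ∈ X ∧ u ∈ Y then (x v + x u) ^ 2 else 0)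
        + (if u ∈ X ∧ v ∈ Y then (x v + x u) ^ 2 else 0)) := by
    apply Finset.sum_le_sum; intro v _
    apply Finset.sum_le_sum; intro u _
    have hq : 0 ≤ (x v + x u) ^ 2 := sq_nonneg _
    generalize (x v + x u) ^ 2 = q at hq
    have hT1 := hT (v, u)
    have hT2 := hT (u, v)
    simp only at hT1 hT2
    have hYX : ∀ a, a ∈ Y → a ∉ X := fun a hy hx => Finset.disjoint_left.1 hXY hx hy
    have hv := hadj v
    have hu := hadj u
    by_cases t1 : (v, u) ∈ T
    · obtain ⟨h1, h2, h3, h4⟩ := hT1 t1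
      have t2 : (u, v) ∉ T := fun t2 => absurd (hT2 t2).1 (by omega)
      have hne : v ≠ u := by omega
      simp [t1, t2, h2, h3, h4, hne]
    · by_cases t2 : (u, v) ∈ T
      · obtain ⟨h1, h2, h3, h4⟩ := hT2 t2
        have hne : v ≠ u := by omega
        have h4' : ¬ G.Adj v u := fun h => h4 h.symm
        simp [t1, t2, h2, h3, h4', hne]
      · by_cases hvX : v ∈ X
        · have hv' := hv hvX u
          by_cases huY : u ∈ Y
          · have := hYX u huY
            simp [t1, t2, hvX, huY, this, hv']
          · by_cases huX : u ∈ X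
            · have hvY : v ∉ Y := fun h => hYX v h hvX
              simp [t1, t2, hvX, huY, huX, hv', hvY]
            · simp [t1, t2, hvX, huY, huX, hv']
        · by_cases huX : u ∈ X
          · have hu' := hu huX v
            rw [G.adj_comm] at hu'
            have hne : v ≠ u := by rintro rfl; exact hvX huX
            simp [t1, t2, hvX, huX, hu', hne]
          · by_cases hne : v = u
            · subst hne
              simp [t1, hvX]
            · simp [t1, t2, hvX, huX, hne]
              split_ifs <;> linarith
  simp only [Finset.sum_add_distrib, Finset.sum_sub_distrib] at key
  rw [← e1, ← e2, ← e3, ← e3', ← e4, ← e4'] at key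
  linarith

lemma pw_T (a p q : ℝ) : 4 * a ^ 2 + 4 * a * (p + q) ≤ (a + p + (a + q)) ^ 2 := by
  nlinarith [sq_nonneg (p + q)]

lemma pw_XY (a p q : ℝ) :
    (p + (a + q)) ^ 2 ≤ a ^ 2 + 2 * a * p + 2 * p ^ 2 + 2 * a * q + 2 * q ^ 2 := by
  nlinarith [sq_nonneg (p - q)]

lemma pw_sum (L d a p η Z ζ : ℝ)
    (h : L ≤ d * (a ^ 2 + 2 * a * p + 2 * p ^ 2) + 2 * a * η + 2 * Z) (hZ : Z ≤ ζ) :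
    L ≤ d * a ^ 2 + 2 * a * d * p + 2 * a * η + 2 * d * p ^ 2 + 2 * ζ := by
  nlinarith

lemma pw_D (D e : ℝ) (h0 : 0 ≤ D) (h1 : D ≤ e) : D ^ 2 ≤ e * D := by nlinarith

lemma pw_F1 (c D : ℝ) (hc : 0 ≤ c) (hD : 0 ≤ D) :
    (c * 1 - 2 * D) ^ 2 ≤ c ^ 2 * 1 + 4 * D ^ 2 := by
  nlinarith [mul_nonneg hc hD]

lemma pw_F2 (c D : ℝ) : (c * 0 - 2 * D) ^ 2 ≤ c ^ 2 * 0 + 4 * D ^ 2 := by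
  nlinarith

lemma pw_M (c d M : ℝ) (hc : 3 ≤ c) (hd : 2 ≤ d)
    (h : (c * d + 6 * c + d + 9) * (c * d + 1) - c ≤ M) : 0 < M := by
  have : 0 ≤ (c * d + d + 9) * (c * d + 1) + 6 * c * (c * d) := by positivity
  nlinarith

set_option maxHeartbeats 2000000 in
open scoped Classical in
lemma spectral_false {n : ℕ} (G : SimpleGraph (Fin n)) (k δ : ℕ) (hk : 1 ≤ k) (hδ : 2 ≤ δ)
    (hn : (δ ^ 2 + k * δ + 7 * δ + 6 * k + 9) * (δ ^ 2 + k * δ + 1) ≤ n)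
    (μ : ℝ) (x : Fin n → ℝ) (hx : x ≠ 0)
    (heig : ∀ v, (cdeg G v : ℝ) * x v + ∑ u, (if G.Adj v u then x u else 0) = μ * x v)
    (hμ : 2 * ((n : ℝ) - δ - k - 1) ≤ μ)
    (X Y : Finset (Fin n)) (hXc : X.card = δ + k) (hYc : Y.card = δ)
    (hXY : Disjoint X Y) (hadj : ∀ a ∈ X, ∀ v, G.Adj a v ↔ v ∈ Y)
    (T : Finset (Fin n × Fin n))
    (hT : ∀ p ∈ T, p.1 < p.2 ∧ p.1 ∉ X ∧ p.2 ∉ X ∧ ¬ G.Adj p.1 p.2)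
    (hTc : T.card = δ * (δ + k) / 4 + 1) : False := by
  have hE := energy G μ x heig
  have hB := energy_bound G x X Y hXY hadj T hT
  set W := Xᶜ with hW
  have hYW : Y ⊆ W := by
    intro y hy
    rw [hW, mem_compl]
    exact fun h => Finset.disjoint_left.1 hXY h hy
  obtain ⟨c, hc⟩ : ∃ c : ℝ, c = δ + k := ⟨_, rfl⟩
  obtain ⟨d, hd⟩ : ∃ d : ℝ, d = δ := ⟨_, rfl⟩
  obtain ⟨e, he⟩ : ∃ e : ℝ, e = T.card := ⟨_, rfl⟩
  obtain ⟨M, hM⟩ : ∃ M : ℝ, M = n - c := ⟨_, rfl⟩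
  have hk' : (1:ℝ) ≤ k := by exact_mod_cast hk
  have hd2 : 2 ≤ d := by rw [hd]; exact_mod_cast hδ
  have hdc : d ≤ c := by rw [hd, hc]; linarith
  have hc3 : 3 ≤ c := by rw [hc, ← hd]; linarith
  have hXcR : (X.card : ℝ) = c := by rw [hXc, hc]; push_cast; ring
  have hYcR : (Y.card : ℝ) = d := by rw [hYc, hd]
  have hWc : (W.card : ℝ) = M := by
    have h1 := Finset.card_add_card_compl X
    rw [Fintype.card_fin] at h1
    have h2 : (X.card : ℝ) + Xᶜ.card = n := by exact_mod_cast h1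
    rw [hW, hM]; linarith
  have hMlow : (c * d + 6 * c + d + 9) * (c * d + 1) - c ≤ M := by
    have : ((δ ^ 2 + k * δ + 7 * δ + 6 * k + 9) * (δ ^ 2 + k * δ + 1) : ℝ) ≤ n := by exact_mod_cast hn
    rw [hM, hc, hd]
    have e : (((δ:ℝ) + k) * δ + 6 * (δ + k) + δ + 9) * ((δ + k) * δ + 1) =
      (δ ^ 2 + k * δ + 7 * δ + 6 * k + 9) * (δ ^ 2 + k * δ + 1) := by ring
    linarith
  have hMpos : 0 < M := by
    exact pw_M _ _ _ hc3 hd2 hMlow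
  have he1 : c * d + 1 ≤ 4 * e := by
    have : (δ + k) * δ + 1 ≤ 4 * T.card := by rw [hTc, mul_comm]; omega
    rw [hc, hd, he]; exact_mod_cast this
  have he2 : 4 * e ≤ c * d + 4 := by
    have : 4 * T.card ≤ (δ + k) * δ + 4 := by rw [hTc, mul_comm (δ + k)]; omega
    rw [hc, hd, he]; exact_mod_cast this
  -- decomposition
  set S := ∑ v ∈ W, x v with hS
  obtain ⟨a, ha⟩ : ∃ a : ℝ, a = S / M := ⟨_, rfl⟩
  have hSa : S = M * a := by rw [ha]; field_simp
  obtain ⟨z, hz⟩ : ∃ z : Fin n → ℝ, z = fun v => x v - a := ⟨_, rfl⟩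
  have hxz : ∀ v, x v = a + z v := by intro v; rw [hz]; ring
  set ζ := ∑ v ∈ W, z v ^ 2 with hζ
  set ξ := ∑ v ∈ X, x v ^ 2 with hξ
  set σ := ∑ v ∈ X, x v with hσ
  have hzsum : ∑ v ∈ W, z v = 0 := by
    have : S = ∑ v ∈ W, (a + z v) := Finset.sum_congr rfl (fun v _ => hxz v)
    rw [Finset.sum_add_distrib, Finset.sum_const, nsmul_eq_mul, hWc] at this
    linarith
  have hP : ∑ v ∈ W, x v ^ 2 = M * a ^ 2 + ζ := by
    have : ∑ v ∈ W, x v ^ 2 = ∑ v ∈ W, (a ^ 2 + 2 * a * z v + z v ^ 2) :=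
      Finset.sum_congr rfl (fun v _ => by rw [hxz v]; ring)
    rw [this, Finset.sum_add_distrib, Finset.sum_add_distrib, Finset.sum_const, nsmul_eq_mul, hWc,
      ← Finset.mul_sum, hzsum]
    ring
  have hWW : ∑ v ∈ W, ∑ u ∈ W, (x v + x u) ^ 2 = 2 * M * (M * a ^ 2 + ζ) + 2 * S ^ 2 := by
    have : ∀ v ∈ W, ∑ u ∈ W, (x v + x u) ^ 2 = M * x v ^ 2 + 2 * S * x v + (M * a ^ 2 + ζ) := by
      intro v _
      have : ∀ u ∈ W, (x v + x u) ^ 2 = x v ^ 2 + 2 * x v * x u + x u ^ 2 := fun u _ => by ring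
      rw [Finset.sum_congr rfl this, Finset.sum_add_distrib, Finset.sum_add_distrib, hP,
        Finset.sum_const, nsmul_eq_mul, hWc, ← Finset.mul_sum]
      ring
    rw [Finset.sum_congr rfl this, Finset.sum_add_distrib, Finset.sum_add_distrib,
      ← Finset.mul_sum, ← Finset.mul_sum, hP, Finset.sum_const, nsmul_eq_mul, hWc]
    ring
  have hall : ∑ v, x v ^ 2 = ξ + (M * a ^ 2 + ζ) := by
    rw [← hP, hW, Finset.sum_add_sum_compl]
  have hζ0 : 0 ≤ ζ := Finset.sum_nonneg (fun v _ => sq_nonneg _)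
  have hξ0 : 0 ≤ ξ := Finset.sum_nonneg (fun v _ => sq_nonneg _)
  have hσ2 : σ ^ 2 ≤ c * ξ := by
    rw [← hXcR]; exact sq_sum_le_card_mul_sum_sq
  -- T part
  set τ := ∑ p ∈ T, (z p.1 + z p.2) with hτ
  have hTlow : 4 * e * a ^ 2 + 4 * a * τ ≤ ∑ p ∈ T, (x p.1 + x p.2) ^ 2 := by
    have : 4 * e * a ^ 2 + 4 * a * τ = ∑ p ∈ T, (4 * a ^ 2 + 4 * a * (z p.1 + z p.2)) := by
      rw [Finset.sum_add_distrib, Finset.sum_const, nsmul_eq_mul, ← he, ← Finset.mul_sum]; ring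
    rw [this]
    apply Finset.sum_le_sum
    intro p _
    rw [hxz p.1, hxz p.2]
    exact pw_T a _ _
  set η := ∑ v ∈ Y, z v with hη
  have hXYup : ∑ v ∈ X, ∑ u ∈ Y, (x v + x u) ^ 2 ≤
      c * d * a ^ 2 + 2 * a * d * σ + 2 * a * c * η + 2 * d * ξ + 2 * c * ζ := by
    have hYz : ∑ u ∈ Y, z u ^ 2 ≤ ζ :=
      Finset.sum_le_sum_of_subset_of_nonneg hYW (fun _ _ _ => sq_nonneg _)
    have h1 : ∀ v ∈ X, ∑ u ∈ Y, (x v + x u) ^ 2 ≤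
        d * a ^ 2 + 2 * a * d * x v + 2 * a * η + 2 * d * x v ^ 2 + 2 * ζ := by
      intro v _
      have : ∑ u ∈ Y, (x v + x u) ^ 2 ≤
          ∑ u ∈ Y, ((a ^ 2 + 2 * a * x v + 2 * x v ^ 2) + 2 * a * z u + 2 * z u ^ 2) := by
        apply Finset.sum_le_sum
        intro u _
        rw [hxz u]
        exact pw_XY a _ _
      rw [Finset.sum_add_distrib, Finset.sum_add_distrib, Finset.sum_const, nsmul_eq_mul, hYcR,
        ← Finset.mul_sum, ← Finset.mul_sum] at this
      exact pw_sum _ _ _ _ _ _ _ this hYz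
    refine (Finset.sum_le_sum h1).trans (le_of_eq ?_)
    simp only [Finset.sum_add_distrib, Finset.sum_const, nsmul_eq_mul, ← Finset.mul_sum, hXcR]
    ring
  -- the linear functional
  set D : Fin n → ℝ := fun w => ((T.filter (fun p => p.1 = w)).card : ℝ)
    + ((T.filter (fun p => p.2 = w)).card : ℝ) with hD
  have hτD : ∀ g : Fin n → ℝ, ∑ p ∈ T, (g p.1 + g p.2) = ∑ w ∈ W, D w * g w := by
    intro g
    have h1 : ∑ p ∈ T, g p.1 = ∑ w ∈ W, ((T.filter (fun p => p.1 = w)).card : ℝ) * g w := by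
      rw [← Finset.sum_fiberwise_of_maps_to (s := T) (t := W) (g := fun p => p.1)
        (fun p hp => by rw [hW, mem_compl]; exact (hT p hp).2.1)]
      apply Finset.sum_congr rfl
      intro w _
      rw [← nsmul_eq_mul, ← Finset.sum_const]
      apply Finset.sum_congr rfl
      intro p hp
      rw [(Finset.mem_filter.1 hp).2]
    have h2 : ∑ p ∈ T, g p.2 = ∑ w ∈ W, ((T.filter (fun p => p.2 = w)).card : ℝ) * g w := by
      rw [← Finset.sum_fiberwise_of_maps_to (s := T) (t := W) (g := fun p => p.2)
        (fun p hp => by rw [hW, mem_compl]; exact (hT p hp).2.2.1)]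
      apply Finset.sum_congr rfl
      intro w _
      rw [← nsmul_eq_mul, ← Finset.sum_const]
      apply Finset.sum_congr rfl
      intro p hp
      rw [(Finset.mem_filter.1 hp).2]
    rw [Finset.sum_add_distrib, h1, h2, ← Finset.sum_add_distrib]
    apply Finset.sum_congr rfl
    intro w _
    rw [hD]; ring
  have hD0 : ∀ w, 0 ≤ D w := fun w => add_nonneg (Nat.cast_nonneg _) (Nat.cast_nonneg _)
  have hDe : ∀ w, D w ≤ e := by
    intro w
    rw [hD, he]
    beta_reduce
    have hdis : Disjoint (T.filter (fun p => p.1 = w)) (T.filter (fun p => p.2 = w)) := by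
      rw [Finset.disjoint_left]
      intro p hp hp'
      have h1 := Finset.mem_filter.1 hp
      have h2 := Finset.mem_filter.1 hp'
      have := (hT p h1.1).1
      omega
    have h3 := Finset.card_union_of_disjoint hdis
    have h4 : ((T.filter (fun p => p.1 = w)) ∪ (T.filter (fun p => p.2 = w))).card ≤ T.card :=
      Finset.card_le_card (Finset.union_subset (Finset.filter_subset _ _) (Finset.filter_subset _ _))
    rw [h3] at h4
    exact_mod_cast h4
  have hDsum : ∑ w ∈ W, D w = 2 * e := by
    have := hτD (fun _ => 1)
    simp only [mul_one, Finset.sum_const, nsmul_eq_mul, ← he] at this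
    linarith
  have hD2 : ∑ w ∈ W, D w ^ 2 ≤ 2 * e ^ 2 := by
    have : ∑ w ∈ W, D w ^ 2 ≤ ∑ w ∈ W, e * D w := by
      apply Finset.sum_le_sum
      intro w _
      exact pw_D _ _ (hD0 w) (hDe w)
    rw [← Finset.mul_sum, hDsum] at this
    exact this.trans (le_of_eq (by ring))
  set f : Fin n → ℝ := fun w => c * (if w ∈ Y then 1 else 0) - 2 * D w with hf
  have hYind : ∀ g : Fin n → ℝ, ∑ w ∈ Y, g w = ∑ w ∈ W, (if w ∈ Y then g w else 0) := by
    intro g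
    rw [Finset.sum_ite_mem, Finset.inter_eq_right.2 hYW]
  have hφ : c * η - 2 * τ = ∑ w ∈ W, f w * z w := by
    rw [hη, hτ, hτD, hYind, Finset.mul_sum, Finset.mul_sum, ← Finset.sum_sub_distrib]
    apply Finset.sum_congr rfl
    intro w _
    rw [hf]
    simp only
    split_ifs <;> ring
  have hφ2 : (c * η - 2 * τ) ^ 2 ≤ (∑ w ∈ W, f w ^ 2) * ζ := by
    rw [hφ]; exact Finset.sum_mul_sq_le_sq_mul_sq _ _ _
  have hF : ∑ w ∈ W, f w ^ 2 ≤ c ^ 2 * d + 8 * e ^ 2 := by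
    have h1 : ∑ w ∈ W, f w ^ 2 ≤ ∑ w ∈ W, (c ^ 2 * (if w ∈ Y then 1 else 0) + 4 * D w ^ 2) := by
      apply Finset.sum_le_sum
      intro w _
      have := hD0 w
      rw [hf]
      simp only
      split_ifs
      · exact pw_F1 _ _ (by linarith only [hc3]) this
      · exact pw_F2 _ _
    rw [Finset.sum_add_distrib, ← Finset.mul_sum, ← Finset.mul_sum, ← hYind] at h1
    simp only [Finset.sum_const, nsmul_eq_mul, hYcR, mul_one] at h1
    linarith
  have hW4 : ∑ v ∈ W, 4 * x v ^ 2 = 4 * (M * a ^ 2 + ζ) := by rw [← Finset.mul_sum, hP]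
  rw [← hE, hWW, hW4, hall] at hB
  have hμM : 2 * (M - 1) ≤ μ := by rw [hM, hc]; linarith
  have hpos : 0 ≤ ξ + (M * a ^ 2 + ζ) := by positivity
  have hB2 := mul_le_mul_of_nonneg_right hμM hpos
  have hfinal : M * ζ + 2 * (M - 1) * ξ ≤
      (c * d - 4 * e) * a ^ 2 + 2 * a * d * σ + 2 * a * (c * η - 2 * τ) + 2 * d * ξ + 2 * c * ζ := by
    rw [hSa] at hB
    have i1 : 2 * (M - 1) * (ξ + (M * a ^ 2 + ζ)) =
      2 * (M - 1) * ξ + M * ζ + ((M - 2) * (M * a ^ 2 + ζ) + (M * a) ^ 2) := by ring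
    have i2 : 2 * M * (M * a ^ 2 + ζ) + 2 * (M * a) ^ 2 - 4 * (M * a ^ 2 + ζ) =
      2 * ((M - 2) * (M * a ^ 2 + ζ) + (M * a) ^ 2) := by ring
    have i3 : (c * d - 4 * e) * a ^ 2 + 2 * a * d * σ + 2 * a * (c * η - 2 * τ) + 2 * d * ξ
      + 2 * c * ζ = (c * d * a ^ 2 + 2 * a * d * σ + 2 * a * c * η + 2 * d * ξ + 2 * c * ζ)
        - (4 * e * a ^ 2 + 4 * a * τ) := by ring
    linarith
  obtain ⟨a0, ζ0, ξ0⟩ := arith_final M c d e a σ (c * η - 2 * τ) ζ ξ (∑ w ∈ W, f w ^ 2) hc3 hd2 hdc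
    he1 he2 hMlow hζ0 hξ0 hσ2 hφ2 hF hfinal
  rw [a0, ζ0, ξ0] at hall
  apply hx
  funext v
  have h0 : ∑ v, x v ^ 2 = 0 := by rw [hall]; ring
  have := (Finset.sum_eq_zero_iff_of_nonneg (fun v _ => sq_nonneg (x v))).1 h0 v (mem_univ v)
  simpa using this

end Form

section Final

open scoped Classical in
lemma exists_labelling {n : ℕ} (X Y : Finset (Fin n)) (c d : ℕ) (hXc : X.card = c)
    (hYc : Y.card = d) (hXY : Disjoint X Y) (hn : c + d ≤ n) :
    ∃ e : Fin n ≃ Fin n, (∀ a, ((e a : Fin n) : ℕ) < d ↔ a ∈ Y) ∧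
      (∀ a, ((e a : Fin n) : ℕ) < n - c ↔ a ∉ X) := by
  have hYX : ∀ a, a ∈ Y → a ∉ X := fun a hy hx => Finset.disjoint_left.1 hXY hx hy
  let f : Fin n → Fin 3 := fun v => if v ∈ Y then 0 else if v ∈ X then 2 else 1
  let g : Fin n → Fin 3 := fun v => if (v : ℕ) < d then 0 else if (v : ℕ) < n - c then 1 else 2
  have hXle : c ≤ n := by omega
  have f0 : (univ.filter (fun v => f v = 0)) = Y := by
    ext v; simp only [f, mem_filter, mem_univ, true_and]; split_ifs <;> simp_all
  have f2 : (univ.filter (fun v => f v = 2)) = X := by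
    ext v; simp only [f, mem_filter, mem_univ, true_and]
    have := hYX v
    split_ifs <;> simp_all
  have f1 : (univ.filter (fun v => f v = 1)) = Xᶜ \ Y := by
    ext v; simp only [f, mem_filter, mem_univ, true_and, mem_sdiff, mem_compl]
    split_ifs <;> simp_all
  have g0 : (univ.filter (fun v => g v = 0)) = univ.filter (fun v : Fin n => (v : ℕ) < d) := by
    ext v; simp only [g, mem_filter, mem_univ, true_and]; split_ifs <;> simp_all
  have g2 : (univ.filter (fun v => g v = 2)) = (univ.filter (fun v : Fin n => (v : ℕ) < n - c))ᶜ := by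
    ext v; simp only [g, mem_filter, mem_univ, true_and, mem_compl]
    split_ifs <;> simp_all <;> omega
  have g1 : (univ.filter (fun v => g v = 1)) = (univ.filter (fun v : Fin n => (v : ℕ) < n - c))
      \ (univ.filter (fun v : Fin n => (v : ℕ) < d)) := by
    ext v; simp only [g, mem_filter, mem_univ, true_and, mem_sdiff]
    split_ifs <;> simp_all
  have hcard : ∀ i : Fin 3, (univ.filter (fun v => f v = i)).card
      = (univ.filter (fun v => g v = i)).card := by
    intro i
    have hi : i = 0 ∨ i = 1 ∨ i = 2 := by omega
    rcases hi with rfl | rfl | rfl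
    · rw [f0, g0, Fin.card_filter_val_lt, hYc]; omega
    · rw [f1, g1, Finset.card_sdiff_of_subset, Finset.card_sdiff_of_subset,
        Finset.card_compl, Fin.card_filter_val_lt, Fin.card_filter_val_lt, hYc, hXc,
        Fintype.card_fin]
      · omega
      · intro v; simp only [mem_filter, mem_univ, true_and]; omega
      · intro v hv; rw [mem_compl]; exact hYX v hv
    · rw [f2, g2, Finset.card_compl, Fin.card_filter_val_lt, hXc, Fintype.card_fin]; omega
  have hne : ∀ i : Fin 3, Nonempty ({a // f a = i} ≃ {b // g b = i}) := by
    intro i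
    apply Fintype.card_eq.1
    rw [Fintype.card_subtype, Fintype.card_subtype]
    exact hcard i
  let e : Fin n ≃ Fin n := Equiv.ofFiberEquiv (f := f) (g := g) (fun i => (hne i).some)
  have he : ∀ a, g (e a) = f a := fun a => Equiv.ofFiberEquiv_map _ a
  refine ⟨e, fun a => ?_, fun a => ?_⟩
  · have h := he a
    have hyx := hYX a
    simp only [f, g] at h
    generalize e a = w at h ⊢
    clear * - h hyx hn hXle
    split_ifs at h <;> simp_all
  · have h := he a
    have hyx := hYX a
    simp only [f, g] at h
    generalize e a = w at h ⊢
    clear * - h hyx hn hXle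
    split_ifs at h <;> simp_all <;> omega

lemma adj_logic (P E xa xb ya yb : Prop) (h1 : xa → (P ↔ yb)) (h2 : xb → (P ↔ ya))
    (h3 : ya → ¬ xa) (h4 : yb → ¬ xb) (h5 : P → ¬ E) (h6 : xa → yb → ¬ E) (h7 : xb → ya → ¬ E) :
    ((¬ E ∧ (ya ∨ yb ∨ (¬ xa ∧ ¬ xb))) ∧ ¬ (¬ E ∧ ¬ xa ∧ ¬ xb ∧ ¬ P)) ↔ P := by
  by_cases xa <;> by_cases xb <;> by_cases P <;> by_cases E <;> simp_all

open scoped Classical in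
lemma inB1_of_structure {n : ℕ} (G : SimpleGraph (Fin n)) (k δ : ℕ)
    (X Y : Finset (Fin n)) (hXc : X.card = δ + k) (hYc : Y.card = δ)
    (hXY : Disjoint X Y) (hadj : ∀ a ∈ X, ∀ v, G.Adj a v ↔ v ∈ Y)
    (hn : δ + k + δ ≤ n)
    (hM : (univ.filter (fun p : Fin n × Fin n =>
      p.1 < p.2 ∧ p.1 ∉ X ∧ p.2 ∉ X ∧ ¬ G.Adj p.1 p.2)).card ≤ δ * (δ + k) / 4) :
    InB1 n k δ G := by
  obtain ⟨e, heY, heX⟩ := exists_labelling X Y (δ + k) δ hXc hYc hXY hn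
  set S := univ.filter (fun p : Fin n × Fin n =>
      p.1 < p.2 ∧ p.1 ∉ X ∧ p.2 ∉ X ∧ ¬ G.Adj p.1 p.2) with hS
  have hmem : ∀ a b : Fin n, s(e a, e b) ∈ S.image (fun p => s(e p.1, e p.2)) ↔
      (a ≠ b ∧ a ∉ X ∧ b ∉ X ∧ ¬ G.Adj a b) := by
    intro a b
    rw [Finset.mem_image]
    constructor
    · rintro ⟨⟨p, q⟩, hp, hpq⟩
      simp only [hS, mem_filter, mem_univ, true_and] at hp
      obtain ⟨h1, h2, h3, h4⟩ := hp
      simp only [Sym2.eq_iff, EmbeddingLike.apply_eq_iff_eq] at hpq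
      rcases hpq with ⟨rfl, rfl⟩ | ⟨rfl, rfl⟩
      · exact ⟨h1.ne, h2, h3, h4⟩
      · exact ⟨h1.ne', h3, h2, fun h => h4 h.symm⟩
    · rintro ⟨h1, h2, h3, h4⟩
      rcases lt_or_gt_of_ne h1 with h | h
      · exact ⟨(a, b), by simp only [hS, mem_filter, mem_univ, true_and]; exact ⟨h, h2, h3, h4⟩, rfl⟩
      · exact ⟨(b, a), by
          simp only [hS, mem_filter, mem_univ, true_and]
          exact ⟨h, h3, h2, fun h => h4 h.symm⟩, Sym2.eq_swap⟩
  refine ⟨S.image (fun p => s(e p.1, e p.2)), ?_, Finset.card_image_le.trans hM, ⟨⟨e, ?_⟩⟩⟩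
  · intro t ht
    rw [Finset.mem_image] at ht
    obtain ⟨⟨p, q⟩, hp, rfl⟩ := ht
    simp only [hS, mem_filter, mem_univ, true_and] at hp
    obtain ⟨h1, h2, h3, h4⟩ := hp
    have hp' := (heX p).2 h2
    have hq' := (heX q).2 h3
    refine ⟨?_, ?_⟩
    · rw [SimpleGraph.mem_edgeSet]
      exact ⟨fun h => h1.ne (e.injective h), Or.inr (Or.inr ⟨hp', hq'⟩)⟩
    · intro v hv
      rcases Sym2.mem_iff.1 hv with rfl | rfl
      · exact hp'
      · exact hq'
  · intro a b
    rw [SimpleGraph.deleteEdges_adj, Finset.mem_coe, hmem]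
    have hB : (Bgraph n k δ).Adj (e a) (e b) ↔ (a ≠ b ∧ (a ∈ Y ∨ b ∈ Y ∨ (a ∉ X ∧ b ∉ X))) := by
      change (e a ≠ e b ∧ (((e a : Fin n) : ℕ) < δ ∨ ((e b : Fin n) : ℕ) < δ ∨
        (((e a : Fin n) : ℕ) < n - (δ + k) ∧ ((e b : Fin n) : ℕ) < n - (δ + k)))) ↔ _
      rw [heY, heY, heX, heX, e.injective.ne_iff]
    rw [hB]
    have hYX : ∀ a, a ∈ Y → a ∉ X := fun a hy hx => Finset.disjoint_left.1 hXY hx hy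
    have h1 := hadj a
    have h2 := hadj b
    have h3 := hYX a
    have h4 := hYX b
    have hne : G.Adj a b → a ≠ b := fun h => h.ne
    have hne' : a ∈ X → b ∈ Y → a ≠ b := by rintro ha hb rfl; exact hYX _ hb ha
    have hne'' : b ∈ X → a ∈ Y → a ≠ b := by rintro ha hb rfl; exact hYX _ hb ha
    have h1' : a ∈ X → (G.Adj a b ↔ b ∈ Y) := fun h => h1 h b
    have h2' : b ∈ X → (G.Adj a b ↔ a ∈ Y) := fun h => by rw [G.adj_comm]; exact h2 h a
    exact adj_logic _ _ _ _ _ _ h1' h2' h3 h4 hne hne' hne''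

end Final

/-- **Theorem 1.4** (main theorem): a tight Q-index condition for a connected graph with
given minimum degree to be k-path-coverable. -/
theorem qIndex_kPathCoverable (k δ n : ℕ) (hk : 1 ≤ k) (hδ : 2 ≤ δ)
    (hn : (δ ^ 2 + k * δ + 7 * δ + 6 * k + 9) * (δ ^ 2 + k * δ + 1) ≤ n)
    (G : SimpleGraph (Fin n)) [DecidableRel G.Adj]
    (hconn : G.Connected) (hmin : ∀ v, δ ≤ G.degree v)
    (hq : 2 * ((n : ℝ) - δ - k - 1) ≤ qIndex G) :
    PathCoverable G k ∨ InB1 n k δ G := by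
  have : Nonempty (Fin n) := hconn.nonempty
  have hA : 2 * (δ + k) ≤ δ ^ 2 + k * δ := by nlinarith
  have hN : 16 * (δ + k) ^ 2 + 26 * (δ + k) + 9 ≤ n := by
    have : (2 * (δ + k) + 6 * (δ + k) + 9) * (2 * (δ + k) + 1) ≤ n :=
      (Nat.mul_le_mul (by omega) (by omega)).trans hn
    have h2 : 16 * (δ + k) ^ 2 + 26 * (δ + k) + 9 =
      (2 * (δ + k) + 6 * (δ + k) + 9) * (2 * (δ + k) + 1) := by ring
    omega
  have hbig : 26 * (δ + k) + 9 ≤ n := by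
    have : 0 ≤ 16 * (δ + k) ^ 2 := Nat.zero_le _
    omega
  by_cases hcov : LCov G k
  · exact Or.inl (pathCoverable_of_LCov G k hcov)
  right
  have hbigR : 26 * ((δ : ℝ) + k) + 9 ≤ n := by exact_mod_cast hbig
  have hδ0 : (0 : ℝ) ≤ δ := Nat.cast_nonneg _
  have hk0 : (0 : ℝ) ≤ k := Nat.cast_nonneg _
  obtain ⟨μ, x, hx, hxe, hμ⟩ := exists_eigenvector G _ (by linarith) hq
  have heig := eig_apply G μ x hxe
  have hmin' : ∀ v, δ ≤ cdeg G v := fun v => by rw [← cdeg_eq]; exact hmin v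
  have hdeg := degree_sum_bound G μ x ((δ : ℝ) + k) hx (fun v => by convert heig v) (by linarith)
    (fun v => le_trans (by omega) (hmin' v))
  have hsum : ((Fintype.card (Fin n) : ℤ) - 1) * ((Fintype.card (Fin n) : ℤ) - 2 * (δ + k)) ≤
      ((∑ v, cdeg G v : ℕ) : ℤ) := by
    rw [Fintype.card_fin]
    have : (((n : ℤ) - 1) * ((n : ℤ) - 2 * (δ + k)) : ℤ) ≤ (((∑ v, cdeg G v : ℕ) : ℤ)) := by
      have h : ((((n : ℤ) - 1) * ((n : ℤ) - 2 * (δ + k)) : ℤ) : ℝ) ≤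
          ((((∑ v, cdeg G v : ℕ) : ℤ)) : ℝ) := by
        push_cast
        exact hdeg
      exact_mod_cast h
    exact this
  obtain ⟨X, Y, hXc, hYc, hXY, hadj⟩ := structure_lemma G k δ hk (by omega)
    (by rw [Fintype.card_fin]; exact hN) hconn hmin' hsum hcov
  by_cases hM : (univ.filter (fun p : Fin n × Fin n =>
      p.1 < p.2 ∧ p.1 ∉ X ∧ p.2 ∉ X ∧ ¬ G.Adj p.1 p.2)).card ≤ δ * (δ + k) / 4
  · refine inB1_of_structure G k δ X Y hXc hYc hXY hadj (by omega) ?_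
    convert hM
  · exfalso
    obtain ⟨T, hTs, hTc⟩ := Finset.exists_subset_card_eq (Nat.succ_le_of_lt (not_le.1 hM))
    refine spectral_false G k δ hk hδ hn μ x hx (fun v => ?_) hμ X Y hXc hYc hXY hadj T ?_ hTc
    · convert heig v
    · intro p hp
      have := hTs hp
      simpa only [mem_filter, mem_univ, true_and] using this
end

section
/- Let t ≥ 1 and let G be a simple graph of order n with minimum degree δ(G) ≥ t. If n ≥ t³ + t² + 2t + 5 and the adjacency spectral radius satisfies λ(G) ≥ n − t − 2, then G is traceable, unless G = K_{t+1} ∪ K_{n−t−1} or G = K_t ∨ (K_{n−2t−1} ∪ (t+1)K₁). -/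
open Finset Matrix

/-- The disjoint union `K_{t+1} ∪ K_{n-t-1}` on `Fin n`: the first `t+1` vertices form one
clique, the remaining `n-t-1` vertices form the other. -/
def unionKK (n t : ℕ) : SimpleGraph (Fin n) where
  Adj i j := i ≠ j ∧ (((i : ℕ) < t + 1 ∧ (j : ℕ) < t + 1) ∨
      (t + 1 ≤ (i : ℕ) ∧ t + 1 ≤ (j : ℕ)))
  symm := by
    constructor
    rintro i j ⟨hne, h⟩
    exact ⟨hne.symm, by tauto⟩
  loopless := by
    constructor
    rintro i ⟨h, -⟩
    exact h rfl


/-- Collatz–Wielandt type bound. -/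
theorem cw_bound {n : ℕ} (G : SimpleGraph (Fin n)) [DecidableRel G.Adj] (hn : 0 < n) (N : ℝ)
    (hN : 0 < N) (hl : N ≤ adjSpecRad G) (y : Fin n → ℝ) (hy : ∀ v, 0 < y v) :
    ∃ v, N * y v ≤ ∑ u ∈ G.neighborFinset v, y u := by
  by_contra! hcon
  have : Nonempty (Fin n) := ⟨⟨0, hn⟩⟩
  obtain ⟨v0, hv0⟩ := Finite.exists_max (fun v => (∑ u ∈ G.neighborFinset v, y u) / y v)
  set r := (∑ u ∈ G.neighborFinset v0, y u) / y v0 with hr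
  have hrN : r < N := by
    rw [hr, div_lt_iff₀ (hy v0)]; exact hcon v0
  have hr0 : 0 ≤ r := div_nonneg (Finset.sum_nonneg fun u _ => (hy u).le) (hy v0).le
  have : adjSpecRad G ≤ r := by
    apply Real.sSup_le _ hr0
    rintro μ ⟨x, hx, hμ⟩
    obtain ⟨v, hv⟩ := Finite.exists_max (fun v => |x v| / y v)
    have hpos : 0 < |x v| := by
      obtain ⟨w, hw⟩ := Function.ne_iff.mp hx
      have h1 : 0 < |x w| / y w := div_pos (abs_pos.mpr hw) (hy w)
      have h2 := lt_of_lt_of_le h1 (hv w)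
      by_contra h3
      have h4 : |x v| = 0 := le_antisymm (not_lt.mp h3) (abs_nonneg _)
      rw [h4] at h2; simp at h2
    have h1 : μ * x v = ∑ u ∈ G.neighborFinset v, x u := by
      have := congrFun hμ v
      rw [SimpleGraph.adjMatrix_mulVec_apply] at this
      simpa using this.symm
    have h2 : ∀ u, |x u| ≤ (|x v| / y v) * y u := fun u => by
      have := hv u
      rwa [div_le_iff₀ (hy u)] at this
    have h3 : |μ| * |x v| ≤ (|x v| / y v) * ∑ u ∈ G.neighborFinset v, y u := by
      rw [← abs_mul, h1, Finset.mul_sum]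
      exact (Finset.abs_sum_le_sum_abs _ _).trans (Finset.sum_le_sum fun u _ => h2 u)
    have h4 : (∑ u ∈ G.neighborFinset v, y u) ≤ r * y v := by
      have := hv0 v
      rwa [div_le_iff₀ (hy v)] at this
    have h5 : |μ| * |x v| ≤ r * |x v| := by
      calc _ ≤ _ := h3
        _ ≤ (|x v| / y v) * (r * y v) := mul_le_mul_of_nonneg_left h4 (div_nonneg hpos.le (hy v).le)
        _ = r * |x v| := by field_simp [(hy v).ne']
    exact (le_abs_self μ).trans (le_of_mul_le_mul_right h5 hpos)
  linarith

/-- List version of traceability. -/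
def LTrace {V : Type*} (G : SimpleGraph V) : Prop :=
  ∃ l : List V, l.Nodup ∧ l.IsChain G.Adj ∧ ∀ v, v ∈ l

theorem walk_of_chain {V : Type*} (G : SimpleGraph V) : ∀ (l : List V) (a : V),
    (a :: l).IsChain G.Adj → ∃ (b : V) (p : G.Walk a b), p.support = a :: l
  | [], a, _ => ⟨a, .nil, rfl⟩
  | b :: l, a, h => by
    rw [List.isChain_cons_cons] at h
    obtain ⟨c, p, hp⟩ := walk_of_chain G l b h.2
    exact ⟨c, .cons h.1 p, by simp [hp]⟩

theorem LTrace.traceable {V : Type*} [Nonempty V] {G : SimpleGraph V} (h : LTrace G) :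
    Traceable G := by
  obtain ⟨l, hl, hc, hm⟩ := h
  obtain ⟨x⟩ := ‹Nonempty V›
  cases l with
  | nil => exact absurd (hm x) (by simp)
  | cons a l =>
    obtain ⟨b, p, hp⟩ := walk_of_chain G l a hc
    refine ⟨a, b, p, ?_, ?_⟩
    · rw [SimpleGraph.Walk.isPath_def, hp]; exact hl
    · intro w; rw [hp]; exact hm w

theorem exists_split_of_not_chain {V : Type*} (R : V → V → Prop) : ∀ (l : List V),
    ¬ l.IsChain R → ∃ l1 x y l2, l = l1 ++ x :: y :: l2 ∧ ¬ R x y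
  | [], h => absurd List.IsChain.nil h
  | [a], h => absurd (List.IsChain.singleton a) h
  | a :: b :: l, h => by
    rw [List.isChain_cons_cons] at h
    by_cases hab : R a b
    · obtain ⟨l1, x, y, l2, e, hxy⟩ := exists_split_of_not_chain R (b :: l) (fun h' => h ⟨hab, h'⟩)
      exact ⟨a :: l1, x, y, l2, by simp [e], hxy⟩
    · exact ⟨[], a, b, l, rfl, hab⟩

theorem count_chain {V : Type*} (P Q : V → Bool) : ∀ (l : List V) (a : V),
    (a :: l).IsChain (fun x y => ¬ (P x = true ∧ Q y = true)) →
    P ((a :: l).getLast (by simp)) = false →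
    (a :: l).countP P + l.countP Q ≤ l.length
  | [], a, _, h => by simpa using h
  | b :: l, a, h, h' => by
    rw [List.isChain_cons_cons] at h
    have ih := count_chain P Q l b h.2 (by simpa using h')
    rw [List.countP_cons (a := a), List.countP_cons (p := Q), List.length_cons]
    have := h.1
    cases hP : P a <;> cases hQ : Q b <;> simp_all <;> omega

theorem chain_app {V : Type*} {R : V → V → Prop} {l1 l2 : List V} (h1 : l1.IsChain R)
    (h2 : l2.IsChain R) (h : ∀ x ∈ l1.getLast?, ∀ y ∈ l2.head?, R x y) :
    (l1 ++ l2).IsChain R := List.isChain_append.mpr ⟨h1, h2, h⟩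

theorem chain_rev {V : Type*} {G : SimpleGraph V} {l : List V} (h : l.IsChain G.Adj) :
    l.reverse.IsChain G.Adj := by
  rw [List.isChain_reverse]
  exact h.imp fun a b hab => hab.symm

/-- Half of Ore's argument. -/
theorem ore_half {V : Type*} (G : SimpleGraph V) [DecidableRel G.Adj] (hG : ¬ LTrace G)
    (p q : List V) (u v : V) (huv : ¬ G.Adj u v)
    (hp : (p ++ [u]).IsChain G.Adj) (hq : (v :: q).IsChain G.Adj)
    (hnd : (p ++ [u] ++ (v :: q)).Nodup) (hm : ∀ w, w ∈ p ++ [u] ++ (v :: q)) :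
    (p ++ [u]).countP (fun w => G.Adj u w) + (p ++ [u]).countP (fun w => G.Adj v w) + 1
      ≤ (p ++ [u]).length := by
  have perm_no : ∀ l : List V, l.Perm (p ++ [u] ++ (v :: q)) → ¬ l.IsChain G.Adj := by
    intro l hl hc
    exact hG ⟨l, hl.nodup_iff.mpr hnd, hc, fun w => hl.mem_iff.mpr (hm w)⟩
  obtain ⟨a, l, hal⟩ : ∃ a l, p ++ [u] = a :: l := by
    cases p with
    | nil => exact ⟨u, [], rfl⟩
    | cons a p => exact ⟨a, p ++ [u], rfl⟩
  have hlast : (a :: l).getLast (by simp) = u := by simp [← hal]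
  have hchain : (a :: l).IsChain (fun x y => ¬ (decide (G.Adj u x) = true ∧ decide (G.Adj v y) = true)) := by
    by_contra hcon
    obtain ⟨l1, x, y, l2, e, hxy⟩ := exists_split_of_not_chain _ _ hcon
    simp only [decide_eq_true_eq, not_not] at hxy
    have hp' : (l1 ++ x :: y :: l2).IsChain G.Adj := by rw [← e, ← hal]; exact hp
    have hl : (y :: l2).getLast? = some u := by
      have : (l1 ++ x :: y :: l2).getLast? = some u := by rw [← e, ← hal]; simp
      simpa using this
    have e2 : l1 ++ x :: y :: l2 = (l1 ++ [x]) ++ (y :: l2) := by simp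
    rw [e2, List.isChain_append] at hp'
    refine perm_no ((l1 ++ [x]) ++ ((y :: l2).reverse ++ (v :: q))) ?_ ?_
    · rw [hal, e, e2, List.append_assoc (l1 ++ [x]) (y :: l2)]
      exact List.Perm.append_left _ (List.Perm.append_right _ (List.reverse_perm _))
    · refine chain_app hp'.1 (chain_app (chain_rev hp'.2.1) hq ?_) ?_
      · intro b hb c hc
        simp at hb hc; subst hb; subst hc; exact hxy.2.symm
      · intro b hb c hc
        rw [List.head?_append, List.head?_reverse, hl] at hc
        simp at hb hc; subst hb; subst hc; exact hxy.1.symm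
  have hva : ¬ G.Adj v a := by
    intro hva
    refine perm_no ((p ++ [u]).reverse ++ (v :: q)) (List.Perm.append_right _ (List.reverse_perm _)) ?_
    refine chain_app (chain_rev hp) hq ?_
    intro b hb c hc
    rw [hal] at hb
    simp at hb hc; subst hb; subst hc; exact hva.symm
  have := count_chain (fun w => decide (G.Adj u w)) (fun w => decide (G.Adj v w)) l a hchain
    (by rw [hlast]; simp)
  rw [hal, List.countP_cons (p := fun w => decide (G.Adj v w))]
  simp only [hva, decide_false, List.length_cons]
  simp only [Bool.false_eq_true, if_false]
  omega

theorem degree_eq_countP {V : Type*} [Fintype V] [DecidableEq V] (G : SimpleGraph V)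
    [DecidableRel G.Adj] (l : List V) (hnd : l.Nodup) (hm : ∀ w, w ∈ l) (u : V) :
    G.degree u = l.countP (fun w => G.Adj u w) := by
  rw [List.countP_eq_length_filter, ← SimpleGraph.card_neighborFinset_eq_degree,
    ← List.toFinset_card_of_nodup (hnd.filter _)]
  congr 1
  ext w
  simp [hm]

theorem ore_full {V : Type*} [Fintype V] [DecidableEq V] (G : SimpleGraph V)
    [DecidableRel G.Adj] (hG : ¬ LTrace G)
    (p q : List V) (u v : V) (huv : ¬ G.Adj u v)
    (hp : (p ++ [u]).IsChain G.Adj) (hq : (v :: q).IsChain G.Adj)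
    (hnd : (p ++ [u] ++ (v :: q)).Nodup) (hm : ∀ w, w ∈ p ++ [u] ++ (v :: q)) :
    G.degree u + G.degree v + 2 ≤ Fintype.card V := by
  have h1 := ore_half G hG p q u v huv hp hq hnd hm
  have e : (q.reverse ++ [v] ++ (u :: p.reverse)) = (p ++ [u] ++ (v :: q)).reverse := by simp
  have h2 := ore_half G hG q.reverse p.reverse v u (fun h => huv h.symm)
    (by simpa using chain_rev hq) (by simpa using chain_rev hp)
    (by rw [e]; exact List.nodup_reverse.mpr hnd) (by intro w; rw [e]; exact List.mem_reverse.mpr (hm w))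
  have e2 : q.reverse ++ [v] = (v :: q).reverse := by simp
  rw [e2, List.countP_reverse, List.countP_reverse, List.length_reverse] at h2
  have h3 : (p ++ [u] ++ (v :: q)).length = Fintype.card V := by
    rw [← List.toFinset_card_of_nodup hnd, ← Finset.card_univ]
    congr 1; ext w
    exact ⟨fun _ => Finset.mem_univ _, fun _ => List.mem_toFinset.mpr (hm w)⟩
  rw [degree_eq_countP G _ hnd hm u, degree_eq_countP G _ hnd hm v, List.countP_append,
    List.countP_append (l₂ := v :: q), ← h3, List.length_append]
  omega

theorem exists_max_nontrace {V : Type*} [Fintype V] [DecidableEq V] (G : SimpleGraph V)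
    (hG : ¬ LTrace G) : ∃ H : SimpleGraph V, ∃ _ : DecidableRel H.Adj, G ≤ H ∧ ¬ LTrace H ∧
      ∀ u v, u ≠ v → ¬ H.Adj u v → H.degree u + H.degree v + 2 ≤ Fintype.card V := by
  classical
  obtain ⟨H, hGH, hH⟩ := Set.Finite.exists_le_maximal (s := {K : SimpleGraph V | ¬ LTrace K})
    (Set.toFinite _) hG
  refine ⟨H, inferInstance, hGH, hH.1, fun u v huv hadj => ?_⟩
  have h1 : LTrace (H ⊔ SimpleGraph.edge u v) := by
    by_contra hcon
    have := hH.2 hcon le_sup_left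
    apply hadj
    apply this
    simp [SimpleGraph.edge_adj, huv]
  obtain ⟨l, hnd, hc, hm⟩ := h1
  have h2 : ¬ l.IsChain H.Adj := fun h => hH.1 ⟨l, hnd, h, hm⟩
  obtain ⟨l1, x, y, l2, e, hxy⟩ := exists_split_of_not_chain _ _ h2
  have e2 : l = (l1 ++ [x]) ++ (y :: l2) := by simp [e]
  rw [e2, List.isChain_append] at hc
  have hnd' := hnd
  rw [e2] at hnd' hm
  have hdis := List.nodup_append.mp hnd'
  have key : ∀ a b, (H ⊔ SimpleGraph.edge u v).Adj a b → H.Adj a b ∨ (a = u ∧ b = v) ∨ (a = v ∧ b = u) := by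
    intro a b hab
    simp [SimpleGraph.edge_adj] at hab
    tauto
  have hxy2 : (x = u ∧ y = v) ∨ (x = v ∧ y = u) := by
    have := hc.2.2 x (by simp) y (by simp)
    have := key x y this
    tauto
  have key2 : ∀ l : List V, l.IsChain (H ⊔ SimpleGraph.edge u v).Adj → (x ∉ l ∨ y ∉ l) → l.IsChain H.Adj := by
    intro l hl hxl
    by_contra hcon
    obtain ⟨m1, a, b, m2, e, hab⟩ := exists_split_of_not_chain _ _ hcon
    have e3 : l = (m1 ++ [a]) ++ (b :: m2) := by simp [e]
    rw [e3, List.isChain_append] at hl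
    have := key a b (hl.2.2 a (by simp) b (by simp))
    have ha : a ∈ l := by simp [e]
    have hb : b ∈ l := by simp [e]
    rcases this with h | ⟨rfl, rfl⟩ | ⟨rfl, rfl⟩
    · exact hab h
    · rcases hxy2 with ⟨rfl, rfl⟩ | ⟨rfl, rfl⟩ <;> tauto
    · rcases hxy2 with ⟨rfl, rfl⟩ | ⟨rfl, rfl⟩ <;> tauto
  have hp := key2 _ hc.1 (Or.inr fun hy => hdis.2.2 y hy y (by simp) rfl)
  have hq := key2 _ hc.2.1 (Or.inl fun hx => hdis.2.2 x (by simp) x hx rfl)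
  have := ore_full H hH.1 l1 l2 x y hxy hp hq hnd' hm
  rcases hxy2 with ⟨rfl, rfl⟩ | ⟨rfl, rfl⟩ <;> omega

/-- Weight test property with threshold `N`. -/
def WTest {n : ℕ} (H : SimpleGraph (Fin n)) [DecidableRel H.Adj] (N : ℝ) : Prop :=
  ∀ y : Fin n → ℝ, (∀ v, 0 < y v) → ∃ v, N * y v ≤ ∑ u ∈ H.neighborFinset v, y u

theorem WTest.mono {n : ℕ} {G H : SimpleGraph (Fin n)} [DecidableRel G.Adj] [DecidableRel H.Adj]
    {N : ℝ} (h : WTest G N) (hGH : G ≤ H) : WTest H N := by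
  intro y hy
  obtain ⟨v, hv⟩ := h y hy
  refine ⟨v, hv.trans (Finset.sum_le_sum_of_subset_of_nonneg ?_ fun u _ _ => (hy u).le)⟩
  intro u hu
  simp only [SimpleGraph.mem_neighborFinset] at hu ⊢
  exact hGH hu

theorem edge_bound {n t : ℕ} (H : SimpleGraph (Fin n)) [DecidableRel H.Adj]
    (hmin : ∀ v, t ≤ H.degree v) (N : ℝ) (hN : 0 < N - t + 1) (h : WTest H N) :
    N * (N - t + 1) + t * (n - 1) ≤ ∑ v, (H.degree v : ℝ) := by
  obtain ⟨v, hv⟩ := h (fun v => (H.degree v : ℝ) + (N - t + 1)) (fun v => by positivity)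
  rw [Finset.sum_add_distrib, Finset.sum_const, SimpleGraph.card_neighborFinset_eq_degree,
    nsmul_eq_mul] at hv
  have h1 : ∑ u ∈ insert v (H.neighborFinset v), ((H.degree u : ℝ) - t) ≤
      ∑ u, ((H.degree u : ℝ) - t) := by
    apply Finset.sum_le_sum_of_subset_of_nonneg (Finset.subset_univ _)
    intro u _ _
    have : (t : ℝ) ≤ H.degree u := by exact_mod_cast hmin u
    linarith
  rw [Finset.sum_insert (by simp), Finset.sum_sub_distrib, Finset.sum_sub_distrib,
    Finset.sum_const, Finset.sum_const, SimpleGraph.card_neighborFinset_eq_degree,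
    Finset.card_univ, Fintype.card_fin, nsmul_eq_mul, nsmul_eq_mul] at h1
  nlinarith

theorem two_counts {n : ℕ} (H : SimpleGraph (Fin n)) [DecidableRel H.Adj]
    (hdeg : ∀ u v, u ≠ v → ¬ H.Adj u v → H.degree u + H.degree v + 2 ≤ n)
    (hne : ∃ u v, u ≠ v ∧ ¬ H.Adj u v) :
    ∃ u, 2 * H.degree u + 2 ≤ n ∧
      H.degree u + 1 ≤ #{w | H.degree w ≤ H.degree u} ∧
      n ≤ #{w | H.degree w + H.degree u + 2 ≤ n} + H.degree u := by
  obtain ⟨u0, v0, h0⟩ := hne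
  have hs : (Finset.univ.filter fun p : Fin n × Fin n => p.1 ≠ p.2 ∧ ¬ H.Adj p.1 p.2).Nonempty :=
    ⟨(u0, v0), by simpa using h0⟩
  obtain ⟨⟨u, v⟩, hm, hmax⟩ := Finset.exists_max_image _
    (fun p : Fin n × Fin n => H.degree p.1 + H.degree p.2) hs
  simp only [Finset.mem_filter, Finset.mem_univ, true_and, Prod.forall] at hm hmax
  have main : ∀ u v, u ≠ v → ¬ H.Adj u v → (∀ a b, a ≠ b ∧ ¬ H.Adj a b →
      H.degree a + H.degree b ≤ H.degree u + H.degree v) → H.degree u ≤ H.degree v →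
      2 * H.degree u + 2 ≤ n ∧
      H.degree u + 1 ≤ #{w | H.degree w ≤ H.degree u} ∧
      n ≤ #{w | H.degree w + H.degree u + 2 ≤ n} + H.degree u := by
    intro u v huv hadj hmax hle
    have hsum := hdeg u v huv hadj
    refine ⟨by omega, ?_, ?_⟩
    · have hsub : (insert v (H.neighborFinset v))ᶜ ⊆ Finset.univ.filter fun w => H.degree w ≤ H.degree u := by
        intro w hw
        simp only [Finset.mem_compl, Finset.mem_insert, SimpleGraph.mem_neighborFinset, not_or] at hw
        have := hmax w v ⟨hw.1, fun h => hw.2 h.symm⟩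
        simp only [Finset.mem_filter, Finset.mem_univ, true_and]
        omega
      have := Finset.card_le_card hsub
      rw [Finset.card_compl, Finset.card_insert_of_notMem (by simp),
        SimpleGraph.card_neighborFinset_eq_degree, Fintype.card_fin] at this
      omega
    · have hsub : (H.neighborFinset u)ᶜ ⊆ Finset.univ.filter fun w => H.degree w + H.degree u + 2 ≤ n := by
        intro w hw
        simp only [Finset.mem_compl, SimpleGraph.mem_neighborFinset] at hw
        simp only [Finset.mem_filter, Finset.mem_univ, true_and]
        by_cases hwu : w = u
        · subst hwu; omega
        · have := hmax u w ⟨Ne.symm hwu, hw⟩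
          omega
      have := Finset.card_le_card hsub
      rw [Finset.card_compl, SimpleGraph.card_neighborFinset_eq_degree, Fintype.card_fin] at this
      omega
  rcases le_total (H.degree u) (H.degree v) with h | h
  · exact ⟨u, main u v hm.1 hm.2 hmax h⟩
  · exact ⟨v, main v u hm.1.symm (fun h => hm.2 h.symm) (fun a b hab => by have := hmax a b hab; omega) h⟩

theorem deg_sum_bound {n k : ℕ} (H : SimpleGraph (Fin n)) [DecidableRel H.Adj] (hk : 2 * k + 2 ≤ n) :
    (∑ v, H.degree v) + #{w | H.degree w + k + 2 ≤ n} * (k + 1) + #{w | H.degree w ≤ k} * (n - 2 - 2 * k)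
      ≤ n * (n - 1) := by
  rw [Finset.card_filter, Finset.card_filter, Finset.sum_mul, Finset.sum_mul, ← Finset.sum_add_distrib,
    ← Finset.sum_add_distrib]
  calc _ ≤ ∑ _v : Fin n, (n - 1) := by
        apply Finset.sum_le_sum
        intro v _
        have : H.degree v < n := by simpa using H.degree_lt_card_verts v
        split_ifs <;> omega
    _ = n * (n - 1) := by simp

theorem arith_k {n t k : ℤ} (ht : 1 ≤ t) (hn : t ^ 3 + t ^ 2 + 2 * t + 5 ≤ n) (hk : t + 1 ≤ k)
    (hkn : 2 * k + 2 ≤ n)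
    (hE : (n - t - 2) * (n - 2 * t - 1) + t * (n - 1) ≤
      n * (n - 1) - (n - k) * (k + 1) - (k + 1) * (n - 2 - 2 * k)) :
    t = 1 ∧ ((n = 9 ∧ k = 3) ∨ (n = 10 ∧ k = 4)) := by
  obtain ⟨j, rfl⟩ : ∃ j, k = t + j := ⟨k - t, by ring⟩
  have hj : 1 ≤ j := by linarith
  have h1 : 2 * j * n ≤ t ^ 2 + t + 6 * t * j + 3 * j ^ 2 + 5 * j := by nlinarith
  have h2 : j ^ 2 ≤ t ^ 2 + t + 2 * t * j + j := by nlinarith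
  rcases eq_or_lt_of_le ht with h | h
  · subst h
    have h3 : j ≤ 3 := by nlinarith
    refine ⟨rfl, ?_⟩
    have : j = 1 ∨ j = 2 ∨ j = 3 := by omega
    rcases this with rfl | rfl | rfl <;> omega
  · exfalso
    have ht2 : 2 ≤ t := h
    have h3 : j ≤ 3 * t := by
      by_contra hc
      push Not at hc
      nlinarith [mul_nonneg (by linarith : (0:ℤ) ≤ j - 3 * t - 1) (by linarith : (0:ℤ) ≤ j)]
    have h4 : 2 * n ≤ t ^ 2 + 16 * t + 5 := by
      by_contra hc
      push Not at hc
      have : j * (t ^ 2 + 16 * t + 6) ≤ j * (2 * n) := by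
        apply mul_le_mul_of_nonneg_left <;> linarith
      nlinarith [mul_nonneg (by linarith : (0:ℤ) ≤ j - 1) (by nlinarith : (0:ℤ) ≤ t ^ 2 + t), mul_nonneg (by linarith : (0:ℤ) ≤ 3 * t - j) (by linarith : (0:ℤ) ≤ j)]
    nlinarith [mul_nonneg (mul_nonneg (by linarith : (0:ℤ) ≤ t - 2) (by linarith : (0:ℤ) ≤ t - 2)) (by linarith : (0:ℤ) ≤ t)]

theorem special10 (H : SimpleGraph (Fin 10)) [DecidableRel H.Adj] (h : WTest H 7)
    (hS : 6 ≤ #{w | H.degree w ≤ 4}) : False := by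
  set y : Fin 10 → ℝ := fun w => 8 / 5 - (if H.degree w ≤ 4 then 3 / 5 else 0) with hy
  have hy8 : ∀ w, y w ≤ 8 / 5 := fun w => by simp only [hy]; split_ifs <;> norm_num
  have hy0 : ∀ w, 0 < y w := fun w => by simp only [hy]; split_ifs <;> norm_num
  obtain ⟨v, hv⟩ := h y hy0
  by_cases hd : H.degree v ≤ 4
  · have h1 : ∑ u ∈ H.neighborFinset v, y u ≤ H.degree v * (8 / 5) := by
      have := Finset.sum_le_card_nsmul (H.neighborFinset v) y (8 / 5) (fun u _ => hy8 u)
      simpa using this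
    have h2 : (H.degree v : ℝ) ≤ 4 := by exact_mod_cast hd
    have h3 : y v = 1 := by simp only [hy, hd, if_true]; norm_num
    linarith
  · have h1 : ∑ u ∈ insert v (H.neighborFinset v), y u ≤ ∑ u, y u :=
      Finset.sum_le_sum_of_subset_of_nonneg (Finset.subset_univ _) (fun u _ _ => (hy0 u).le)
    rw [Finset.sum_insert (by simp)] at h1
    have h2 : ∑ u, y u = 16 - #{w | H.degree w ≤ 4} * (3 / 5) := by
      simp only [hy, Finset.sum_sub_distrib, ← Finset.sum_filter]
      simp; norm_num
    have h3 : y v = 8 / 5 := by simp only [hy, hd, if_false]; norm_num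
    have h4 : (6 : ℝ) ≤ #{w | H.degree w ≤ 4} := by exact_mod_cast hS
    linarith

theorem special9 (H : SimpleGraph (Fin 9)) [DecidableRel H.Adj] (h : WTest H 6)
    (hS : 6 ≤ #{w | H.degree w ≤ 4}) (hA : 4 ≤ #{w | H.degree w ≤ 3}) : False := by
  set y : Fin 9 → ℝ := fun w => 17 / 10 - (if H.degree w ≤ 4 then 6 / 10 else 0)
    - (if H.degree w ≤ 3 then 1 / 10 else 0) with hy
  have hy8 : ∀ w, y w ≤ 17 / 10 := fun w => by simp only [hy]; split_ifs <;> norm_num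
  have hy0 : ∀ w, 0 < y w := fun w => by simp only [hy]; split_ifs <;> norm_num
  obtain ⟨v, hv⟩ := h y hy0
  by_cases hd : H.degree v ≤ 4
  · by_cases hd3 : H.degree v ≤ 3
    · have h1 : ∑ u ∈ H.neighborFinset v, y u ≤ H.degree v * (17 / 10) := by
        have := Finset.sum_le_card_nsmul (H.neighborFinset v) y (17 / 10) (fun u _ => hy8 u)
        simpa using this
      have h2 : (H.degree v : ℝ) ≤ 3 := by exact_mod_cast hd3
      have h3 : y v = 1 := by simp only [hy, hd, hd3, if_true]; norm_num
      linarith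
    · have h3 : y v = 11 / 10 := by simp only [hy, hd, hd3, if_true, if_false]; norm_num
      have h1 : ∑ u ∈ H.neighborFinset v, y u ≤
          ∑ u ∈ H.neighborFinset v, ((11 / 10 : ℝ) + (if ¬ H.degree u ≤ 4 then 6 / 10 else 0)) := by
        apply Finset.sum_le_sum
        intro u _
        simp only [hy]; split_ifs <;> norm_num
      have h2 : ∑ u ∈ H.neighborFinset v, (if ¬ H.degree u ≤ 4 then (6 / 10 : ℝ) else 0) ≤
          ∑ u, (if ¬ H.degree u ≤ 4 then (6 / 10 : ℝ) else 0) :=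
        Finset.sum_le_sum_of_subset_of_nonneg (Finset.subset_univ _)
          (fun u _ _ => by split_ifs <;> norm_num)
      have h5 : #{w | ¬ H.degree w ≤ 4} ≤ 3 := by
        have := Finset.card_filter_add_card_filter_not (s := (Finset.univ : Finset (Fin 9)))
          (fun w => H.degree w ≤ 4)
        simp only [Finset.card_univ, Fintype.card_fin] at this
        omega
      have h6 : (#{w | ¬ H.degree w ≤ 4} : ℝ) ≤ 3 := by exact_mod_cast h5
      rw [← Finset.sum_filter, Finset.sum_const, nsmul_eq_mul] at h2
      rw [Finset.sum_add_distrib, Finset.sum_const, SimpleGraph.card_neighborFinset_eq_degree,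
        nsmul_eq_mul] at h1
      rw [← Finset.sum_filter, Finset.sum_const, nsmul_eq_mul] at h2
      have h7 : (H.degree v : ℝ) ≤ 4 := by exact_mod_cast hd
      rw [← Finset.sum_filter, Finset.sum_const, nsmul_eq_mul] at h1
      linarith
  · have h1 : ∑ u ∈ insert v (H.neighborFinset v), y u ≤ ∑ u, y u :=
      Finset.sum_le_sum_of_subset_of_nonneg (Finset.subset_univ _) (fun u _ _ => (hy0 u).le)
    rw [Finset.sum_insert (by simp)] at h1
    have h2 : ∑ u, y u = 153 / 10 - #{w | H.degree w ≤ 4} * (6 / 10) - #{w | H.degree w ≤ 3} * (1 / 10) := by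
      simp only [hy, Finset.sum_sub_distrib, ← Finset.sum_filter]
      simp; norm_num
    have h3 : y v = 17 / 10 := by
      have : ¬ H.degree v ≤ 3 := by omega
      simp only [hy, hd, this, if_false]; norm_num
    have h4 : (6 : ℝ) ≤ #{w | H.degree w ≤ 4} := by exact_mod_cast hS
    have h5 : (4 : ℝ) ≤ #{w | H.degree w ≤ 3} := by exact_mod_cast hA
    linarith

theorem structure_H {n t : ℕ} (ht : 1 ≤ t) (hn : t ^ 3 + t ^ 2 + 2 * t + 5 ≤ n)
    (H : SimpleGraph (Fin n)) [DecidableRel H.Adj] (hmin : ∀ v, t ≤ H.degree v)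
    (hdeg : ∀ u v, u ≠ v → ¬ H.Adj u v → H.degree u + H.degree v + 2 ≤ n)
    (hne : ∃ u v, u ≠ v ∧ ¬ H.Adj u v) (hW : WTest H ((n : ℝ) - t - 2)) :
    ∃ A : Finset (Fin n), #A = t + 1 ∧ (∀ a ∈ A, H.degree a = t) ∧
      ∀ v w, v ∉ A → w ∉ A → v ≠ w → H.Adj v w := by
  have hnZ : (t : ℤ) ^ 3 + t ^ 2 + 2 * t + 5 ≤ n := by exact_mod_cast hn
  have htZ : (1 : ℤ) ≤ t := by exact_mod_cast ht
  have hn2 : 2 * t + 5 ≤ n := by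
    have : 0 ≤ t ^ 3 + t ^ 2 := Nat.zero_le _
    omega
  have hE : ((n : ℤ) - t - 2) * (n - 2 * t - 1) + t * (n - 1) ≤ ∑ v, (H.degree v : ℤ) := by
    have hn2R : (2 : ℝ) * t + 5 ≤ n := by exact_mod_cast hn2
    have := edge_bound H hmin _ (by linarith) hW
    have e : ((n : ℝ) - t - 2) * ((n : ℝ) - t - 2 - t + 1) + t * (n - 1) =
      ((n : ℝ) - t - 2) * (n - 2 * t - 1) + t * (n - 1) := by ring
    rw [e] at this
    exact_mod_cast this
  obtain ⟨u, hk, hA, hS⟩ := two_counts H hdeg hne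
  have hB : ∀ a : ℕ, a ≤ #{w | H.degree w ≤ H.degree u} →
      (∑ v, (H.degree v : ℤ)) ≤ (n : ℤ) * (n - 1) - (n - H.degree u) * (H.degree u + 1)
        - a * (n - 2 - 2 * H.degree u) := by
    intro a ha
    have h1 := deg_sum_bound H hk
    have h2 : (n - H.degree u) * (H.degree u + 1) ≤
        #{w | H.degree w + H.degree u + 2 ≤ n} * (H.degree u + 1) :=
      Nat.mul_le_mul_right _ (by omega)
    have h3 : a * (n - 2 - 2 * H.degree u) ≤
        #{w | H.degree w ≤ H.degree u} * (n - 2 - 2 * H.degree u) :=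
      Nat.mul_le_mul_right _ ha
    have h4 : (∑ v, H.degree v) + (n - H.degree u) * (H.degree u + 1) + a * (n - 2 - 2 * H.degree u)
      ≤ n * (n - 1) := by omega
    zify [show H.degree u ≤ n by omega, show 2 * H.degree u ≤ n - 2 by omega, show 2 ≤ n by omega,
      show 1 ≤ n by omega] at h4
    linarith
  by_cases hkt : t + 1 ≤ H.degree u
  · exfalso
    have h1 := hB _ hA
    have h2 := arith_k htZ hnZ (k := H.degree u) (by exact_mod_cast hkt) (by exact_mod_cast hk)
      (by refine hE.trans (h1.trans ?_); push_cast; linarith)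
    obtain ⟨h3, h4⟩ := h2
    have h3' : t = 1 := by exact_mod_cast h3
    subst h3'
    rcases h4 with ⟨h5, h6⟩ | ⟨h5, h6⟩
    · have h5' : n = 9 := by exact_mod_cast h5
      have h6' : H.degree u = 3 := by exact_mod_cast h6
      rw [h6'] at hA hS
      subst h5'
      refine special9 H (by norm_num at hW; exact hW) ?_ hA
      have e : ∀ w, H.degree w + 3 + 2 ≤ 9 ↔ H.degree w ≤ 4 := fun w => by omega
      simp only [e] at hS; omega
    · have h5' : n = 10 := by exact_mod_cast h5
      have h6' : H.degree u = 4 := by exact_mod_cast h6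
      rw [h6'] at hA hS
      subst h5'
      refine special10 H (by norm_num at hW; exact hW) ?_
      have e : ∀ w, H.degree w + 4 + 2 ≤ 10 ↔ H.degree w ≤ 4 := fun w => by omega
      simp only [e] at hS; omega
  · have hu : H.degree u = t := by have := hmin u; omega
    rw [hu] at hA hB
    have hbig : (t : ℤ) ^ 2 + 3 * t + 2 < n := by nlinarith [mul_nonneg (mul_nonneg (by linarith : (0:ℤ) ≤ t - 1) (by linarith : (0:ℤ) ≤ t + 1)) (by linarith : (0:ℤ) ≤ t)]
    have hcard : #{w | H.degree w ≤ t} = t + 1 := by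
      by_contra hc
      have h1 := hB (t + 2) (by omega)
      push_cast at h1
      nlinarith
    set A : Finset (Fin n) := Finset.univ.filter fun w => H.degree w ≤ t with hAdef
    have hAd : ∀ a ∈ A, H.degree a = t := fun a ha => by
      have := hmin a
      have h2 : H.degree a ≤ t := by simpa [hAdef] using ha
      omega
    refine ⟨A, hcard, hAd, ?_⟩
    intro v w hv hw hvw
    by_contra hadj
    have hsum := hdeg v w hvw hadj
    let f : Fin n → ℕ := fun x => #(H.neighborFinset x ∩ A)
    have hf : ∑ x ∈ Aᶜ, f x ≤ (t + 1) * t := by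
      calc ∑ x ∈ Aᶜ, f x = ∑ x ∈ Aᶜ, ∑ a ∈ A, (if H.Adj x a then 1 else 0) := by
            apply Finset.sum_congr rfl
            intro x _
            change #(H.neighborFinset x ∩ A) = _
            rw [← Finset.card_filter]
            congr 1
            ext a
            simp [and_comm]
        _ = ∑ a ∈ A, ∑ x ∈ Aᶜ, (if H.Adj x a then 1 else 0) := Finset.sum_comm
        _ ≤ ∑ a ∈ A, t := by
            apply Finset.sum_le_sum
            intro a ha
            rw [← Finset.card_filter, ← hAd a ha, ← SimpleGraph.card_neighborFinset_eq_degree]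
            apply Finset.card_le_card
            intro x hx
            simp only [Finset.mem_filter] at hx
            simpa using hx.2.symm
        _ = (t + 1) * t := by simp [hcard]
    have hd : ∀ x, x ∉ A → H.degree x ≤ f x + (n - t - 2) := by
      intro x hx
      have h1 : H.neighborFinset x ⊆ (H.neighborFinset x ∩ A) ∪ (Aᶜ.erase x) := by
        intro z hz
        simp only [Finset.mem_union, Finset.mem_inter, Finset.mem_erase, Finset.mem_compl]
        by_cases hzA : z ∈ A
        · exact Or.inl ⟨hz, hzA⟩
        · refine Or.inr ⟨?_, hzA⟩
          rintro rfl
          simp at hz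
      have h2 := (Finset.card_le_card h1).trans (Finset.card_union_le _ _)
      rw [Finset.card_erase_of_mem (by simpa using hx), Finset.card_compl, Fintype.card_fin, hcard,
        SimpleGraph.card_neighborFinset_eq_degree] at h2
      have : f x = #(H.neighborFinset x ∩ A) := rfl
      omega
    have hwm : w ∈ Aᶜ.erase v := by simp [hw, hvw.symm]
    have hvm : v ∈ Aᶜ := by simp [hv]
    have hcardC : #((Aᶜ.erase v).erase w) = n - t - 3 := by
      rw [Finset.card_erase_of_mem hwm, Finset.card_erase_of_mem hvm, Finset.card_compl,
        Fintype.card_fin, hcard]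
      omega
    have h3 : ∑ x, H.degree x ≤ (t + 1) * t + (n - 2) + ((t + 1) * t + (n - t - 3) * (n - t - 2)) := by
      rw [← Finset.sum_add_sum_compl A]
      have h4 : ∑ x ∈ A, H.degree x = (t + 1) * t := by
        rw [Finset.sum_congr rfl hAd]; simp [hcard]
      rw [h4, ← Finset.add_sum_erase _ _ hvm, ← Finset.add_sum_erase _ _ hwm]
      have h5 : ∑ x ∈ (Aᶜ.erase v).erase w, H.degree x ≤ (t + 1) * t + (n - t - 3) * (n - t - 2) := by
        calc _ ≤ ∑ x ∈ (Aᶜ.erase v).erase w, (f x + (n - t - 2)) := by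
              apply Finset.sum_le_sum
              intro x hx
              exact hd x (by simp only [Finset.mem_erase, Finset.mem_compl] at hx; exact hx.2.2)
          _ = ∑ x ∈ (Aᶜ.erase v).erase w, f x + (n - t - 3) * (n - t - 2) := by
              rw [Finset.sum_add_distrib, Finset.sum_const, hcardC, smul_eq_mul]
          _ ≤ _ := by
              apply Nat.add_le_add_right
              refine le_trans ?_ hf
              exact Finset.sum_le_sum_of_subset ((Finset.erase_subset _ _).trans (Finset.erase_subset _ _))
      omega
    have h6 : (∑ x, (H.degree x : ℤ)) ≤ (t + 1) * t + (n - 2) + ((t + 1) * t + (n - t - 3) * (n - t - 2)) := by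
      zify [show t ≤ n by omega, show 2 ≤ n by omega, show 3 ≤ n - t by omega, show 2 ≤ n - t by omega] at h3
      exact h3
    nlinarith

theorem joined_H {n t : ℕ} (H : SimpleGraph (Fin n)) [DecidableRel H.Adj]
    (hdeg : ∀ u v, u ≠ v → ¬ H.Adj u v → H.degree u + H.degree v + 2 ≤ n)
    (A : Finset (Fin n)) (hA : #A = t + 1) (hAd : ∀ a ∈ A, H.degree a = t)
    (hC : ∀ v w, v ∉ A → w ∉ A → v ≠ w → H.Adj v w)
    (w : Fin n) (hw : w ∉ A) (a : Fin n) (ha : a ∈ A) (hwa : H.Adj w a) (b : Fin n) (hb : b ∈ A) :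
    H.Adj w b := by
  by_contra hcon
  have h1 := hdeg w b (fun h => hw (h ▸ hb)) hcon
  have h2 : insert a (Aᶜ.erase w) ⊆ H.neighborFinset w := by
    intro x hx
    simp only [Finset.mem_insert, Finset.mem_erase, Finset.mem_compl] at hx
    rw [SimpleGraph.mem_neighborFinset]
    rcases hx with rfl | hx
    · exact hwa
    · exact hC w x hw hx.2 hx.1.symm
  have h3 := Finset.card_le_card h2
  rw [Finset.card_insert_of_notMem (by simp [ha]), Finset.card_erase_of_mem (by simpa using hw),
    Finset.card_compl, Fintype.card_fin, hA, SimpleGraph.card_neighborFinset_eq_degree] at h3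
  have := hAd b hb
  omega

theorem complete_trace {V : Type*} [Fintype V] (G : SimpleGraph V)
    (h : ∀ u v, u ≠ v → G.Adj u v) : LTrace G := by
  refine ⟨Finset.univ.toList, Finset.nodup_toList _, ?_, by simp⟩
  apply List.Pairwise.isChain
  exact (Finset.nodup_toList Finset.univ).imp fun hab => h _ _ hab

theorem expand_trace {n : ℕ} (H : SimpleGraph (Fin n)) (A T W : Finset (Fin n)) (c0 : Fin n)
    (hT : ∀ w, w ∈ T ↔ w ∉ A ∧ ∃ a ∈ A, H.Adj w a) (hc0 : c0 ∉ A) (hc0T : c0 ∉ T)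
    (hC : ∀ v w, v ∉ A → w ∉ A → v ≠ w → H.Adj v w)
    (hWdef : W = insert c0 (A ∪ T))
    (hK : LTrace (H.comap (Subtype.val : {x // x ∈ W} → Fin n))) : LTrace H := by
  obtain ⟨l, hnd, hc, hm⟩ := hK
  have hnd' : (l.map Subtype.val).Nodup := hnd.map Subtype.val_injective
  have hc' : (l.map Subtype.val).IsChain H.Adj := by
    rw [List.isChain_map]; exact hc
  have hm' : ∀ x, x ∈ l.map Subtype.val ↔ x ∈ W := by
    intro x
    constructor
    · intro hx
      obtain ⟨y, _, rfl⟩ := List.mem_map.mp hx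
      exact y.2
    · intro hx
      exact List.mem_map.mpr ⟨⟨x, hx⟩, hm _, rfl⟩
  generalize l.map Subtype.val = L at hnd' hc' hm'
  obtain ⟨l1, l2, rfl⟩ := List.append_of_mem ((hm' c0).mpr (by simp [hWdef]))
  have hperm : (l1 ++ (c0 :: Wᶜ.toList ++ l2)).Perm ((l1 ++ c0 :: l2) ++ Wᶜ.toList) := by
    rw [List.append_assoc]
    apply List.Perm.append_left
    exact List.Perm.cons _ List.perm_append_comm
  have hR : ∀ x ∈ Wᶜ.toList, x ∉ W := fun x hx => by simpa using hx
  have hAW : ∀ x, x ∉ W → x ∉ A := fun x hx hA => hx (by simp [hWdef, hA])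
  refine ⟨l1 ++ (c0 :: Wᶜ.toList ++ l2), ?_, ?_, ?_⟩
  · rw [hperm.nodup_iff, List.nodup_append]
    refine ⟨hnd', Finset.nodup_toList _, ?_⟩
    intro x hx y hy hxy
    subst hxy
    exact hR x hy ((hm' x).mp hx)
  · have e : l1 ++ c0 :: l2 = (l1 ++ [c0]) ++ l2 := by simp
    have h1 := List.isChain_append.mp hc'
    rw [e] at hc'
    have h2 := List.isChain_append.mp hc'
    have hCR : ∀ x ∈ c0 :: Wᶜ.toList, x ∉ A := by
      intro x hx
      rcases List.mem_cons.mp hx with rfl | hx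
      · exact hc0
      · exact hAW x (hR x hx)
    have hCRn : (c0 :: Wᶜ.toList).Nodup := by
      rw [List.nodup_cons]
      refine ⟨fun h => hR _ h (by simp [hWdef]), Finset.nodup_toList _⟩
    refine chain_app h1.1 (chain_app ?_ h2.2.1 ?_) ?_
    · apply List.Pairwise.isChain
      exact List.Pairwise.imp_of_mem (fun ha hb hab => hC _ _ (hCR _ ha) (hCR _ hb) hab) hCRn
    · intro x hx y hy
      have hxm : x ∈ c0 :: Wᶜ.toList := List.mem_of_getLast? hx
      have hc0y : H.Adj c0 y := h2.2.2 c0 (by simp) y hy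
      have hyA : y ∉ A := fun hyA => hc0T ((hT c0).mpr ⟨hc0, y, hyA, hc0y⟩)
      apply hC x y (hCR x hxm) hyA
      rcases List.mem_cons.mp hxm with rfl | hxm
      · exact hc0y.ne
      · rintro rfl
        apply hR x hxm
        rw [← hm']
        have : x ∈ l2 := List.mem_of_head? hy
        simp [this]
    · intro x hx y hy
      apply h1.2.2 x hx y
      simpa using hy
  · intro x
    rw [hperm.mem_iff, List.mem_append]
    by_cases hx : x ∈ W
    · exact Or.inl ((hm' x).mpr hx)
    · exact Or.inr (by simpa using hx)

theorem mid_case {n t : ℕ} (H : SimpleGraph (Fin n)) [DecidableRel H.Adj] (hH : ¬ LTrace H)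
    (A T : Finset (Fin n)) (hA : #A = t + 1) (hAd : ∀ a ∈ A, H.degree a = t)
    (hC : ∀ v w, v ∉ A → w ∉ A → v ≠ w → H.Adj v w)
    (hT : ∀ w, w ∈ T ↔ w ∉ A ∧ ∃ a ∈ A, H.Adj w a)
    (hj : ∀ w ∈ T, ∀ a ∈ A, H.Adj w a) (hs : 0 < #T) (hst : #T < t)
    (c0 : Fin n) (hc0 : c0 ∉ A) (hc0T : c0 ∉ T) : False := by
  obtain ⟨W, hWdef⟩ : ∃ W, W = insert c0 (A ∪ T) := ⟨_, rfl⟩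
  have hK : ¬ LTrace (H.comap (Subtype.val : {x // x ∈ W} → Fin n)) := fun hK =>
    hH (expand_trace H A T W c0 hT hc0 hc0T hC hWdef hK)
  obtain ⟨K, _, hle, hKt, hKd⟩ := exists_max_nontrace _ hK
  have hTA : Disjoint A T := by
    rw [Finset.disjoint_left]
    intro x hx hxT
    exact ((hT x).mp hxT).1 hx
  have hcard : Fintype.card {x // x ∈ W} = t + #T + 2 := by
    rw [Fintype.card_coe, hWdef, Finset.card_insert_of_notMem (by simp [hc0, hc0T]),
      Finset.card_union_of_disjoint hTA, hA]
    omega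
  rw [hcard] at hKd
  have hKH : ∀ x y : {x // x ∈ W}, H.Adj x.1 y.1 → K.Adj x y := fun x y h => hle h
  have hdeg : ∀ (x : {x // x ∈ W}) (B : Finset (Fin n)),
      (∀ b ∈ B, ∃ hb : b ∈ W, K.Adj x ⟨b, hb⟩) → #B ≤ K.degree x := by
    intro x B hB
    rw [← SimpleGraph.card_neighborFinset_eq_degree]
    refine le_trans (Finset.card_le_card ?_) (Finset.card_image_le (f := Subtype.val))
    intro b hb
    obtain ⟨h1, h2⟩ := hB b hb
    exact Finset.mem_image.mpr ⟨⟨b, h1⟩, by simpa using h2, rfl⟩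
  have hAW : ∀ a ∈ A, a ∈ W := fun a ha => by simp [hWdef, ha]
  have hTW : ∀ a ∈ T, a ∈ W := fun a ha => by simp [hWdef, ha]
  have hdA : ∀ x : {x // x ∈ W}, x.1 ∈ A → t ≤ K.degree x := by
    intro x hx
    rw [← hAd x.1 hx, ← SimpleGraph.card_neighborFinset_eq_degree]
    apply hdeg
    intro b hb
    rw [SimpleGraph.mem_neighborFinset] at hb
    by_cases hbA : b ∈ A
    · exact ⟨hAW b hbA, hKH _ _ hb⟩
    · exact ⟨hTW b ((hT b).mpr ⟨hbA, x.1, hx, hb.symm⟩), hKH _ _ hb⟩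
  have hAA : ∀ x y : {x // x ∈ W}, x.1 ∈ A → y.1 ∈ A → x ≠ y → K.Adj x y := by
    intro x y hx hy hxy
    by_contra hcon
    have h1 := hKd x y hxy hcon
    have h2 := hdA x hx
    have h3 := hdA y hy
    omega
  have hdA2 : ∀ x : {x // x ∈ W}, x.1 ∈ A → t + #T ≤ K.degree x := by
    intro x hx
    have e : #(A.erase x.1 ∪ T) = t + #T := by
      rw [Finset.card_union_of_disjoint (hTA.mono_left (Finset.erase_subset _ _)),
        Finset.card_erase_of_mem hx, hA]
      omega
    rw [← e]
    apply hdeg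
    intro b hb
    rcases Finset.mem_union.mp hb with hb | hb
    · rw [Finset.mem_erase] at hb
      exact ⟨hAW b hb.2, hAA _ _ hx hb.2 (fun h => hb.1 (by rw [h]))⟩
    · exact ⟨hTW b hb, hKH _ _ (hj b hb _ hx).symm⟩
  have hdc : ∀ x : {x // x ∈ W}, x.1 = c0 → #T ≤ K.degree x := by
    intro x hx
    apply hdeg
    intro b hb
    refine ⟨hTW b hb, hKH _ _ ?_⟩
    apply hC _ _ (hx ▸ hc0) ((hT b).mp hb).1
    rintro h
    apply hc0T
    rw [← hx, h]; exact hb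
  have hAc : ∀ x y : {x // x ∈ W}, x.1 ∈ A → y.1 = c0 → K.Adj x y := by
    intro x y hx hy
    by_contra hcon
    have h1 := hKd x y (by rintro rfl; exact hc0 (hy ▸ hx)) hcon
    have h2 := hdA2 x hx
    have h3 := hdc y hy
    omega
  have hAT : ∀ x y : {x // x ∈ W}, x.1 ∈ A → x ≠ y → K.Adj x y := by
    intro x y hx hxy
    have hWm : ∀ z, z ∈ W → z ∈ insert c0 (A ∪ T) := fun z hz => hWdef ▸ hz
    have hy := hWm _ y.2
    rw [Finset.mem_insert, Finset.mem_union] at hy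
    rcases hy with hy | hy | hy
    · exact hAc x y hx hy
    · exact hAA x y hx hy hxy
    · exact hKH _ _ (hj _ hy _ hx).symm
  apply hKt
  apply complete_trace
  intro x y hxy
  by_cases hx : x.1 ∈ A
  · exact hAT x y hx hxy
  · by_cases hy : y.1 ∈ A
    · exact (hAT y x hy hxy.symm).symm
    · exact hKH _ _ (hC _ _ hx hy (fun h => hxy (Subtype.ext h)))

theorem clique_G {n t : ℕ} (ht : 1 ≤ t) (hn : t ^ 3 + t ^ 2 + 2 * t + 5 ≤ n)
    (G H : SimpleGraph (Fin n)) [DecidableRel G.Adj] [DecidableRel H.Adj] (hGH : G ≤ H)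
    (hW : WTest G ((n : ℝ) - t - 2))
    (A T : Finset (Fin n)) (hA : #A = t + 1) (hAd : ∀ a ∈ A, G.degree a ≤ t)
    (hT : ∀ w, w ∈ T ↔ w ∉ A ∧ ∃ a ∈ A, H.Adj w a) (hTt : #T ≤ t)
    (w1 w2 : Fin n) (hw1 : w1 ∉ A) (hw2 : w2 ∉ A) (hne : w1 ≠ w2) : G.Adj w1 w2 := by
  by_contra hadj
  obtain ⟨M, hM⟩ : ∃ M : ℝ, M = (n : ℝ) - t - 1 := ⟨_, rfl⟩
  have htR : (1 : ℝ) ≤ t := by exact_mod_cast ht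
  have hnR : (t : ℝ) ^ 3 + t ^ 2 + 2 * t + 5 ≤ n := by exact_mod_cast hn
  have hMb : (t : ℝ) ^ 3 + t ^ 2 + t + 4 ≤ M := by linarith
  have hM4 : (4 : ℝ) ≤ M := by nlinarith [pow_pos (by linarith : (0:ℝ) < t) 3, pow_pos (by linarith : (0:ℝ) < t) 2]
  have hN : (n : ℝ) - t - 2 = M - 1 := by linarith
  rw [hN] at hW
  obtain ⟨y, hy⟩ : ∃ y : Fin n → ℝ, ∀ v, y v = if v ∈ A then M / (t + 1) else
    t * (M + 1) + (if v ∈ T then 1 else 0) - (if v = w1 then (t : ℝ) else 0)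
      - (if v = w2 then (t : ℝ) else 0) := ⟨_, fun _ => rfl⟩
  have htM : 4 * (t : ℝ) ≤ t * M := by nlinarith
  have hMt : M / (t + 1) ≤ t * (M + 1) + 1 := by
    rw [div_le_iff₀ (by linarith)]; nlinarith [mul_nonneg (by linarith : (0:ℝ) ≤ t - 1) (by linarith : (0:ℝ) ≤ M), mul_nonneg (by linarith : (0:ℝ) ≤ t * M) (by linarith : (0:ℝ) ≤ t)]
  have hMt0 : 0 < M / (t + 1) := by apply div_pos <;> linarith
  have hy0 : ∀ v, 0 < y v := by
    intro v
    rw [hy]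
    split_ifs <;> nlinarith
  have hyu : ∀ v, y v ≤ t * (M + 1) + 1 := by
    intro v
    rw [hy]
    split_ifs <;> nlinarith
  obtain ⟨v, hv⟩ := hW y hy0
  by_cases hvA : v ∈ A
  · have h1 : ∑ u ∈ G.neighborFinset v, y u ≤ G.degree v * (t * (M + 1) + 1) := by
      have := Finset.sum_le_card_nsmul (G.neighborFinset v) y (t * (M + 1) + 1) (fun u _ => hyu u)
      rwa [nsmul_eq_mul, SimpleGraph.card_neighborFinset_eq_degree] at this
    have h2 : (G.degree v : ℝ) ≤ t := by exact_mod_cast hAd v hvA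
    have h3 : (G.degree v : ℝ) * (t * (M + 1) + 1) ≤ t * (t * (M + 1) + 1) :=
      mul_le_mul_of_nonneg_right h2 (by nlinarith)
    have h4 : (M - 1) * (M / (t + 1)) ≤ t * (t * (M + 1) + 1) := by
      have : y v = M / (t + 1) := by rw [hy, if_pos hvA]
      rw [this] at hv
      linarith
    have h5 : (M - 1) * M ≤ t * (t * (M + 1) + 1) * (t + 1) := by
      rw [← mul_div_assoc, div_le_iff₀ (by linarith)] at h4
      exact h4
    have h6 : ((t : ℝ) ^ 3 + t ^ 2 + t + 3) * M ≤ (M - 1) * M :=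
      mul_le_mul_of_nonneg_right (by linarith) (by linarith)
    have h7 : ((t : ℝ) + 3) * ((t : ℝ) ^ 3 + t ^ 2 + t + 4) ≤ (t + 3) * M :=
      mul_le_mul_of_nonneg_left hMb (by linarith)
    nlinarith [pow_pos (by linarith : (0:ℝ) < t) 4, pow_pos (by linarith : (0:ℝ) < t) 3, pow_pos (by linarith : (0:ℝ) < t) 2]
  · have hTA : T ⊆ Aᶜ := fun x hx => by simpa using ((hT x).mp hx).1
    have hsig : ∑ u ∈ Aᶜ, y u = M * (t * (M + 1)) + #T - 2 * t := by
      have h1 : ∑ u ∈ Aᶜ, y u = ∑ u ∈ Aᶜ, (t * (M + 1) + (if u ∈ T then 1 else 0) -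
          (if u = w1 then (t : ℝ) else 0) - (if u = w2 then (t : ℝ) else 0)) := by
        apply Finset.sum_congr rfl
        intro u hu
        rw [hy, if_neg (by simpa using hu)]
      have h2 : (#(Aᶜ) : ℝ) = M := by
        rw [Finset.card_compl, hA, Fintype.card_fin, Nat.cast_sub]
        · push_cast; linarith
        · have : 0 ≤ t ^ 3 + t ^ 2 := Nat.zero_le _
          omega
      rw [h1, Finset.sum_sub_distrib, Finset.sum_sub_distrib, Finset.sum_add_distrib,
        Finset.sum_const, nsmul_eq_mul, h2, Finset.sum_ite_eq' , Finset.sum_ite_eq',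
        if_pos (by simpa using hw1), if_pos (by simpa using hw2), ← Finset.sum_filter,
        Finset.filter_mem_eq_inter, Finset.inter_eq_right.mpr hTA]
      simp
      ring
    have hTtR : (#T : ℝ) ≤ t := by exact_mod_cast hTt
    have hsplit : ∑ u ∈ G.neighborFinset v, y u = ∑ u ∈ G.neighborFinset v with u ∈ A, y u +
        ∑ u ∈ G.neighborFinset v with u ∉ A, y u :=
      (Finset.sum_filter_add_sum_filter_not _ _ _).symm
    have hfirst : ∑ u ∈ G.neighborFinset v with u ∈ A, y u ≤ M * (if v ∈ T then 1 else 0) := by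
      by_cases hvT : v ∈ T
      · rw [if_pos hvT, mul_one]
        calc _ ≤ ∑ u ∈ A, y u := Finset.sum_le_sum_of_subset_of_nonneg
              (fun u hu => (Finset.mem_filter.mp hu).2) (fun u _ _ => (hy0 u).le)
          _ = ∑ u ∈ A, M / (t + 1) := Finset.sum_congr rfl fun u hu => by rw [hy, if_pos hu]
          _ = M := by
            rw [Finset.sum_const, hA, nsmul_eq_mul]
            push_cast
            field_simp
      · rw [if_neg hvT, mul_zero, Finset.sum_eq_zero]
        intro u hu
        exfalso
        simp only [Finset.mem_filter, SimpleGraph.mem_neighborFinset] at hu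
        exact hvT ((hT v).mpr ⟨hvA, u, hu.2, hGH hu.1⟩)
    have hvC : v ∈ Aᶜ := by simpa using hvA
    have hgen : ∀ w' : Fin n, w' ∉ A → v ≠ w' → ¬ G.Adj v w' →
        ∑ u ∈ G.neighborFinset v with u ∉ A, y u ≤ ∑ u ∈ Aᶜ, y u - y v - y w' := by
      intro w' hw' hvw' hnadj
      rw [← Finset.add_sum_erase _ _ hvC, ← Finset.add_sum_erase (Aᶜ.erase v) y (a := w') (by simp [hw', hvw'.symm])]
      have : ∑ u ∈ G.neighborFinset v with u ∉ A, y u ≤ ∑ u ∈ (Aᶜ.erase v).erase w', y u := by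
        apply Finset.sum_le_sum_of_subset_of_nonneg _ (fun u _ _ => (hy0 u).le)
        intro u hu
        simp only [Finset.mem_filter, SimpleGraph.mem_neighborFinset] at hu
        simp only [Finset.mem_erase, Finset.mem_compl]
        refine ⟨?_, hu.1.ne', hu.2⟩
        rintro rfl
        exact hnadj hu.1
      linarith
    have hlow : ∀ w', w' ∉ A → (w' = w1 ∨ w' = w2) → t * (M + 1) - t ≤ y w' := by
      intro w' hw' h
      rw [hy, if_neg hw']
      rcases h with rfl | rfl
      · rw [if_pos rfl, if_neg hne]; split_ifs <;> linarith
      · rw [if_pos rfl, if_neg hne.symm]; split_ifs <;> linarith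
    by_cases hv1 : v = w1
    · have h1 := hgen w2 hw2 (hv1 ▸ hne) (hv1 ▸ hadj)
      have h2 := hlow w2 hw2 (Or.inr rfl)
      have h3 : y v = t * (M + 1) + (if v ∈ T then 1 else 0) - t := by
        have hv2 : v ≠ w2 := by rw [hv1]; exact hne
        rw [hy, if_neg hvA, if_pos hv1, if_neg hv2, sub_zero]
      rw [hsplit] at hv
      rw [h3] at hv h1
      nlinarith
    · by_cases hv2 : v = w2
      · have h1 := hgen w1 hw1 hv1 (fun h => hadj (hv2 ▸ h.symm))
        have h2 := hlow w1 hw1 (Or.inl rfl)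
        have h3 : y v = t * (M + 1) + (if v ∈ T then 1 else 0) - t := by
          rw [hy, if_neg hvA, if_neg hv1, if_pos hv2, sub_zero]
        rw [hsplit] at hv
        rw [h3] at hv h1
        nlinarith
      · have h1 : ∑ u ∈ G.neighborFinset v with u ∉ A, y u ≤ ∑ u ∈ Aᶜ, y u - y v := by
          rw [← Finset.add_sum_erase _ _ hvC]
          have : ∑ u ∈ G.neighborFinset v with u ∉ A, y u ≤ ∑ u ∈ Aᶜ.erase v, y u := by
            apply Finset.sum_le_sum_of_subset_of_nonneg _ (fun u _ _ => (hy0 u).le)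
            intro u hu
            simp only [Finset.mem_filter, SimpleGraph.mem_neighborFinset] at hu
            simp only [Finset.mem_erase, Finset.mem_compl]
            exact ⟨hu.1.ne', hu.2⟩
          linarith
        have h3 : y v = t * (M + 1) + (if v ∈ T then 1 else 0) := by
          rw [hy, if_neg hvA, if_neg hv1, if_neg hv2, sub_zero, sub_zero]
        rw [hsplit] at hv
        rw [h3] at hv h1
        nlinarith

theorem exists_perm {n : ℕ} (A T A' T' : Finset (Fin n)) (hd : Disjoint A T) (hd' : Disjoint A' T')
    (hA : #A = #A') (hT : #T = #T') :
    ∃ e : Fin n ≃ Fin n, ∀ x, (e x ∈ A' ↔ x ∈ A) ∧ (e x ∈ T' ↔ x ∈ T) := by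
  let col : Finset (Fin n) → Finset (Fin n) → Fin n → Fin 3 := fun A T x =>
    if x ∈ A then 0 else if x ∈ T then 1 else 2
  have c0 : ∀ A T : Finset (Fin n), ∀ x, col A T x = 0 ↔ x ∈ A := by
    intro A T x; simp only [col]; split_ifs <;> simp_all
  have c1 : ∀ A T : Finset (Fin n), Disjoint A T → ∀ x, col A T x = 1 ↔ x ∈ T := by
    intro A T hd x
    have := fun h1 h2 => (Finset.disjoint_left.mp hd) (a := x) h1 h2
    simp only [col]; split_ifs <;> simp_all
  have c2 : ∀ A T : Finset (Fin n), ∀ x, col A T x = 2 ↔ x ∈ (A ∪ T)ᶜ := by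
    intro A T x; simp only [col]; split_ifs <;> simp_all
  have hc : ∀ c, Nonempty ({a // col A T a = c} ≃ {b // col A' T' b = c}) := by
    intro c
    apply Fintype.card_eq.mp
    have hc : c = 0 ∨ c = 1 ∨ c = 2 := by fin_cases c <;> simp
    rcases hc with rfl | rfl | rfl
    · simp only [c0, Fintype.card_coe, hA]
    · simp only [c1 A T hd, c1 A' T' hd', Fintype.card_coe, hT]
    · simp only [c2, Fintype.card_coe]
      rw [Finset.card_compl, Finset.card_compl, Finset.card_union_of_disjoint hd,
        Finset.card_union_of_disjoint hd', hA, hT]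
  let e := Equiv.ofFiberEquiv (fun c => (hc c).some)
  have he : ∀ x, col A' T' (e x) = col A T x := fun x => Equiv.ofFiberEquiv_map _ x
  refine ⟨e, fun x => ⟨?_, ?_⟩⟩
  · rw [← c0 A' T', he, c0]
  · rw [← c1 A' T' hd', he, c1 A T hd]

theorem final_struct {n t : ℕ} (hn : 2 * t + 5 ≤ n)
    (G : SimpleGraph (Fin n)) (A T : Finset (Fin n)) (hA : #A = t + 1)
    (hTA : Disjoint A T) (hC : ∀ v w, v ∉ A → w ∉ A → v ≠ w → G.Adj v w) :
    ((∀ a ∈ A, ∀ b, G.Adj a b ↔ a ≠ b ∧ b ∈ A) → Nonempty (G ≃g unionKK n t)) ∧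
    (#T = t → (∀ a ∈ A, ∀ b, G.Adj a b ↔ b ∈ T) → Nonempty (G ≃g Bgraph n 1 t)) := by
  constructor
  · intro h
    obtain ⟨e, he⟩ := exists_perm A ∅ (Finset.univ.filter fun i : Fin n => (i : ℕ) < t + 1) ∅
      (by simp) (by simp) (by rw [Fin.card_filter_val_lt, hA]; omega) rfl
    have he1 : ∀ x, (e x : ℕ) < t + 1 ↔ x ∈ A := fun x => by simpa using (he x).1
    refine ⟨⟨e, ?_⟩⟩
    intro a b
    change (e a ≠ e b ∧ (((e a : ℕ) < t + 1 ∧ (e b : ℕ) < t + 1) ∨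
      (t + 1 ≤ (e a : ℕ) ∧ t + 1 ≤ (e b : ℕ)))) ↔ _
    rw [← not_lt, ← not_lt, he1, he1, e.injective.ne_iff]
    by_cases ha : a ∈ A
    · rw [h a ha b]; tauto
    · by_cases hb : b ∈ A
      · rw [G.adj_comm, h b hb a]; tauto
      · have := hC a b ha hb
        have h2 : G.Adj a b → a ≠ b := fun h => h.ne
        tauto
  · intro hT h
    obtain ⟨e, he⟩ := exists_perm A T (Finset.univ.filter fun i : Fin n => (i : ℕ) < n - (t + 1))ᶜ
      (Finset.univ.filter fun i : Fin n => (i : ℕ) < t) hTA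
      (by
        rw [Finset.disjoint_left]
        intro x hx
        simp at hx ⊢
        omega)
      (by rw [Finset.card_compl, Fin.card_filter_val_lt, hA, Fintype.card_fin]; omega)
      (by rw [Fin.card_filter_val_lt, hT]; omega)
    have he1 : ∀ x, (e x : ℕ) < n - (t + 1) ↔ x ∉ A := fun x => by
      rw [← (he x).1]; simp; omega
    have he2 : ∀ x, (e x : ℕ) < t ↔ x ∈ T := fun x => by simpa using (he x).2
    refine ⟨⟨e, ?_⟩⟩
    intro a b
    change (e a ≠ e b ∧ ((e a : ℕ) < t ∨ (e b : ℕ) < t ∨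
      ((e a : ℕ) < n - (t + 1) ∧ (e b : ℕ) < n - (t + 1)))) ↔ _
    rw [he1, he1, he2, he2, e.injective.ne_iff]
    have hT' : ∀ x, x ∈ T → x ∉ A := fun x h1 h2 => (Finset.disjoint_left.mp hTA) h2 h1
    have h2 : G.Adj a b → a ≠ b := fun h => h.ne
    by_cases ha : a ∈ A
    · rw [h a ha b]
      have h3 := hT' a
      have h4 := hT' b
      have h5 : a = b → (b ∈ A) := fun h => h ▸ ha
      tauto
    · by_cases hb : b ∈ A
      · rw [G.adj_comm, h b hb a]
        have h3 := hT' a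
        have h4 := hT' b
        have h5 : a = b → (a ∈ A) := fun h => h ▸ hb
        tauto
      · have := hC a b ha hb
        tauto

/-- **Theorem 1.2** (Nikiforov): spectral radius condition for traceability with minimum
degree at least `t`.  Note that `K_t ∨ (K_{n-2t-1} ∪ (t+1)K₁) = B(n,1,t)`. -/
theorem specRad_traceable_Nikiforov (t n : ℕ) (ht : 1 ≤ t)
    (hn : t ^ 3 + t ^ 2 + 2 * t + 5 ≤ n)
    (G : SimpleGraph (Fin n)) [DecidableRel G.Adj]
    (hmin : ∀ v, t ≤ G.degree v)
    (hl : (n : ℝ) - t - 2 ≤ adjSpecRad G) :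
    Traceable G ∨ Nonempty (G ≃g unionKK n t) ∨ Nonempty (G ≃g Bgraph n 1 t) := by
  have hn2 : 2 * t + 5 ≤ n := by
    have : 0 ≤ t ^ 3 + t ^ 2 := Nat.zero_le _
    omega
  have hn2R : (2 : ℝ) * t + 5 ≤ n := by exact_mod_cast hn2
  have : Nonempty (Fin n) := ⟨⟨0, by omega⟩⟩
  by_cases htr : LTrace G
  · exact Or.inl htr.traceable
  right
  have hWG : WTest G ((n : ℝ) - t - 2) := fun y hy =>
    cw_bound G (by omega) _ (by linarith) hl y hy
  obtain ⟨H, _, hGH, hHt, hHd⟩ := exists_max_nontrace G htr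
  rw [Fintype.card_fin] at hHd
  have hsub : ∀ v, G.neighborFinset v ⊆ H.neighborFinset v := fun v u hu => by
    simp only [SimpleGraph.mem_neighborFinset] at hu ⊢
    exact hGH hu
  have hle : ∀ v, G.degree v ≤ H.degree v := fun v => by
    rw [← SimpleGraph.card_neighborFinset_eq_degree, ← SimpleGraph.card_neighborFinset_eq_degree]
    exact Finset.card_le_card (hsub v)
  have hne : ∃ u v, u ≠ v ∧ ¬ H.Adj u v := by
    by_contra hc
    push Not at hc
    exact hHt (complete_trace H hc)
  obtain ⟨A, hA, hAd, hC⟩ := structure_H ht hn H (fun v => (hmin v).trans (hle v)) hHd hne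
    (hWG.mono hGH)
  obtain ⟨T, hTdef⟩ : ∃ T : Finset (Fin n), T = Finset.univ.filter fun w => w ∉ A ∧ ∃ a ∈ A, H.Adj w a :=
    ⟨_, rfl⟩
  have hT : ∀ w, w ∈ T ↔ w ∉ A ∧ ∃ a ∈ A, H.Adj w a := fun w => by simp [hTdef]
  have hj : ∀ w ∈ T, ∀ a ∈ A, H.Adj w a := by
    intro w hw b hb
    obtain ⟨h1, a, ha, hwa⟩ := (hT w).mp hw
    exact joined_H H hHd A hA hAd hC w h1 a ha hwa b hb
  obtain ⟨a0, ha0⟩ : A.Nonempty := by rw [← Finset.card_pos]; omega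
  have hTsub : ∀ a ∈ A, T ⊆ H.neighborFinset a := fun a ha w hw => by
    rw [SimpleGraph.mem_neighborFinset]
    exact (hj w hw a ha).symm
  have hTt : #T ≤ t := by
    have := Finset.card_le_card (hTsub a0 ha0)
    rwa [SimpleGraph.card_neighborFinset_eq_degree, hAd a0 ha0] at this
  have hTA : Disjoint A T := by
    rw [Finset.disjoint_left]
    intro x hx hxT
    exact ((hT x).mp hxT).1 hx
  have hCG : ∀ v w, v ∉ A → w ∉ A → v ≠ w → G.Adj v w := fun v w hv hw hvw =>
    clique_G ht hn G H hGH hWG A T hA (fun a ha => (hle a).trans (hAd a ha).le) hT hTt v w hv hw hvw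
  have hnb : ∀ a ∈ A, G.neighborFinset a = H.neighborFinset a := by
    intro a ha
    apply Finset.eq_of_subset_of_card_le (hsub a)
    rw [SimpleGraph.card_neighborFinset_eq_degree, SimpleGraph.card_neighborFinset_eq_degree, hAd a ha]
    exact hmin a
  have hadjA : ∀ a ∈ A, ∀ b, G.Adj a b ↔ H.Adj a b := by
    intro a ha b
    rw [← SimpleGraph.mem_neighborFinset, hnb a ha, SimpleGraph.mem_neighborFinset]
  have hfin := final_struct hn2 G A T hA hTA hCG
  rcases Nat.eq_zero_or_pos (#T) with h0 | h0
  · left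
    apply hfin.1
    intro a ha b
    have hin : ∀ c, H.Adj a c → c ∈ A := by
      intro c hc
      by_contra hcA
      have : c ∈ T := (hT c).mpr ⟨hcA, a, ha, hc.symm⟩
      rw [Finset.card_eq_zero] at h0
      simp [h0] at this
    have heq : H.neighborFinset a = A.erase a := by
      apply Finset.eq_of_subset_of_card_le
      · intro c hc
        rw [SimpleGraph.mem_neighborFinset] at hc
        exact Finset.mem_erase.mpr ⟨hc.ne', hin c hc⟩
      · rw [Finset.card_erase_of_mem ha, hA, SimpleGraph.card_neighborFinset_eq_degree, hAd a ha]
        omega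
    rw [hadjA a ha, ← SimpleGraph.mem_neighborFinset, heq, Finset.mem_erase]
    constructor <;> rintro ⟨h1, h2⟩ <;> exact ⟨h1.symm, h2⟩
  · rcases Nat.lt_or_ge (#T) t with h1 | h1
    · exfalso
      obtain ⟨c0, hc0⟩ : ((A ∪ T)ᶜ).Nonempty := by
        rw [← Finset.card_pos, Finset.card_compl, Finset.card_union_of_disjoint hTA, hA,
          Fintype.card_fin]
        omega
      simp only [Finset.mem_compl, Finset.mem_union, not_or] at hc0
      exact mid_case H hHt A T hA hAd hC hT hj h0 h1 c0 hc0.1 hc0.2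
    · right
      apply hfin.2 (by omega)
      intro a ha b
      have heq : T = H.neighborFinset a := by
        apply Finset.eq_of_subset_of_card_le (hTsub a ha)
        rw [SimpleGraph.card_neighborFinset_eq_degree, hAd a ha]
        exact h1
      rw [hadjA a ha, heq, SimpleGraph.mem_neighborFinset]
end

section
/- Let G be a simple graph of order n ≥ 2 with e(G) edges. Then the Q-index satisfies q(G) ≤ 2e(G)/(n−1) + n − 2. -/
open Finset Matrix

lemma aux_ineq (d m : ℕ) (S T : ℝ) (hd : 1 ≤ d) (hdm : d ≤ m) (hT : 0 ≤ T)
    (h1 : S ≤ d * m) (h2 : S ≤ d ^ 2 + T) :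
    S * (m - d) ≤ d * (m - d) * (m - 1) + d * T := by
  rcases hdm.eq_or_lt with rfl | hlt
  · have : (0 : ℝ) ≤ d * T := by positivity
    simpa using this
  have hd' : (1 : ℝ) ≤ d := by exact_mod_cast hd
  have hlt' : (d : ℝ) + 1 ≤ m := by exact_mod_cast hlt
  by_cases hm : 2 * (d : ℝ) ≤ m
  · have a := mul_le_mul_of_nonneg_right h1 (sub_nonneg.2 hm)
    have b := mul_le_mul_of_nonneg_left h2 (by linarith : (0 : ℝ) ≤ d)
    have c : 0 ≤ (d : ℝ) * (((d : ℝ) - 1) * (m - d)) :=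
      mul_nonneg (by linarith) (mul_nonneg (by linarith) (by linarith))
    nlinarith
  · push Not at hm
    by_cases hS : S ≤ d ^ 2
    · have a := mul_le_mul_of_nonneg_right hS (by linarith : (0 : ℝ) ≤ m - d)
      have b : (0 : ℝ) ≤ d * T := by positivity
      have c : 0 ≤ (d : ℝ) * ((m - d) * (m - 1 - d)) :=
        mul_nonneg (by linarith) (mul_nonneg (by linarith) (by linarith))
      nlinarith
    · push Not at hS
      have a := mul_le_mul_of_nonneg_right hS.le (by linarith : (0 : ℝ) ≤ 2 * d - m)
      have b := mul_le_mul_of_nonneg_left h2 (by linarith : (0 : ℝ) ≤ d)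
      have c : 0 ≤ (d : ℝ) * ((m - d) * (m - 1 - d)) :=
        mul_nonneg (by linarith) (mul_nonneg (by linarith) (by linarith))
      nlinarith

lemma aux_comb {V : Type*} [Fintype V] [DecidableEq V]
    (G : SimpleGraph V) [DecidableRel G.Adj] (u : V) :
    ∑ v ∈ G.neighborFinset u, G.degree v ≤
      G.degree u ^ 2 + ∑ w ∈ univ \ insert u (G.neighborFinset u), G.degree w := by
  set N := G.neighborFinset u with hN
  set R := univ \ insert u N with hR
  have key : ∀ v ∈ N, G.degree v ≤ G.degree u + (bipartiteAbove G.Adj R v).card := by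
    intro v hv
    have hsub : G.neighborFinset v ⊆ ((insert u N).erase v) ∪ bipartiteAbove G.Adj R v := by
      intro w hw
      have hvw : G.Adj v w := by simpa using hw
      have := hvw.ne'
      simp only [mem_union, mem_erase, mem_bipartiteAbove, hR, mem_sdiff, mem_univ, true_and]
      tauto
    have hc : ((insert u N).erase v).card = G.degree u := by
      rw [card_erase_of_mem (mem_insert_of_mem hv), card_insert_of_notMem (by simp [hN])]
      simp [hN]
    calc G.degree v = (G.neighborFinset v).card := rfl
      _ ≤ _ := card_le_card hsub
      _ ≤ _ := card_union_le _ _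
      _ = _ := by rw [hc]
  calc ∑ v ∈ N, G.degree v ≤ ∑ v ∈ N, (G.degree u + (bipartiteAbove G.Adj R v).card) :=
        sum_le_sum key
    _ = G.degree u ^ 2 + ∑ w ∈ R, (bipartiteBelow G.Adj N w).card := by
        rw [sum_add_distrib, sum_card_bipartiteAbove_eq_sum_card_bipartiteBelow]
        simp [hN, sq]
    _ ≤ _ := by
        gcongr with w hw
        apply card_le_card
        intro v hv
        rw [mem_bipartiteBelow] at hv
        simpa using hv.2.symm

lemma aux_bound {V : Type*} [Fintype V] [DecidableEq V]
    (G : SimpleGraph V) [DecidableRel G.Adj] (hn : 2 ≤ Fintype.card V) (u : V)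
    (hu : 0 < G.degree u) :
    (G.degree u : ℝ) + (∑ v ∈ G.neighborFinset u, (G.degree v : ℝ)) / G.degree u ≤
      2 * (G.edgeFinset.card : ℝ) / ((Fintype.card V : ℝ) - 1)
      + (Fintype.card V : ℝ) - 2 := by
  obtain ⟨m, hm⟩ : ∃ m, Fintype.card V = m + 1 := ⟨Fintype.card V - 1, by omega⟩
  have hdeg : ∀ v, G.degree v ≤ m := fun v => by
    have := G.degree_lt_card_verts v
    omega
  have hsum : 2 * (G.edgeFinset.card : ℝ) = G.degree u +
      ∑ v ∈ G.neighborFinset u, (G.degree v : ℝ) +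
      ∑ w ∈ univ \ insert u (G.neighborFinset u), (G.degree w : ℝ) := by
    have h := G.sum_degrees_eq_twice_card_edges
    rw [← sum_sdiff (subset_univ (insert u (G.neighborFinset u))),
      sum_insert (by simp)] at h
    have h3 := congrArg (fun k : ℕ => (k : ℝ)) h
    push_cast at h3
    linarith
  have h2 := aux_comb G u
  have h2' : ∑ v ∈ G.neighborFinset u, (G.degree v : ℝ) ≤
      (G.degree u : ℝ) ^ 2 + ∑ w ∈ univ \ insert u (G.neighborFinset u), (G.degree w : ℝ) := by
    exact_mod_cast h2
  have h1 : ∑ v ∈ G.neighborFinset u, (G.degree v : ℝ) ≤ (G.degree u : ℝ) * m := by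
    have := sum_le_card_nsmul (G.neighborFinset u) (fun v => (G.degree v : ℝ)) m
      (fun v _ => by exact_mod_cast hdeg v)
    simpa using this
  have hT : 0 ≤ ∑ w ∈ univ \ insert u (G.neighborFinset u), (G.degree w : ℝ) := by positivity
  have := aux_ineq (G.degree u) m _ _ hu (hdeg u) hT h1 h2'
  rw [hsum, hm]
  set S := ∑ v ∈ G.neighborFinset u, (G.degree v : ℝ)
  set T := ∑ w ∈ univ \ insert u (G.neighborFinset u), (G.degree w : ℝ)
  have hd0 : (0 : ℝ) < G.degree u := by exact_mod_cast hu
  have hm0 : (0 : ℝ) < m := by exact_mod_cast (by omega : 0 < m)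
  generalize (G.degree u : ℝ) = d at *
  push_cast
  have e : (d + S + T) / ((m : ℝ) + 1 - 1) + (m + 1) - 2 - (d + S / d)
      = (d * (m - d) * (m - 1) + d * T - S * (m - d)) / (d * m) := by
    have : (m : ℝ) + 1 - 1 = m := by ring
    rw [this]
    field_simp
    ring
  have : 0 ≤ (d * (m - d) * (m - 1) + d * T - S * (m - d)) / (d * m) :=
    div_nonneg (by linarith) (by positivity)
  linarith

/-- **Lemma 2.2**: `q(G) ≤ 2e(G)/(n-1) + n - 2`. -/
theorem qIndex_le {V : Type*} [Fintype V] [DecidableEq V]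
    (G : SimpleGraph V) [DecidableRel G.Adj] (hn : 2 ≤ Fintype.card V) :
    qIndex G ≤ 2 * (G.edgeFinset.card : ℝ) / ((Fintype.card V : ℝ) - 1)
      + (Fintype.card V : ℝ) - 2 := by
  have hn' : (2 : ℝ) ≤ Fintype.card V := by exact_mod_cast hn
  have hB : 0 ≤ 2 * (G.edgeFinset.card : ℝ) / ((Fintype.card V : ℝ) - 1)
      + (Fintype.card V : ℝ) - 2 := by
    have : 0 ≤ 2 * (G.edgeFinset.card : ℝ) / ((Fintype.card V : ℝ) - 1) :=
      div_nonneg (by positivity) (by linarith)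
    linarith
  apply Real.sSup_le _ hB
  rintro μ ⟨x, hx0, hx⟩
  have hrow : ∀ u, μ * x u = G.degree u * x u + ∑ v ∈ G.neighborFinset u, x v := by
    intro u
    have h := congrFun hx u
    simp only [signlessLaplacian, add_mulVec, Pi.add_apply, mulVec_diagonal,
      SimpleGraph.adjMatrix_mulVec_apply, Pi.smul_apply, smul_eq_mul] at h
    exact h.symm
  by_cases hiso : ∃ v, G.degree v = 0 ∧ x v ≠ 0
  · obtain ⟨v, hv, hxv⟩ := hiso
    have h := hrow v
    have hNe : G.neighborFinset v = ∅ := by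
      rw [← card_eq_zero]; exact hv
    rw [hNe, hv] at h
    simp [hxv] at h
    rw [h]; exact hB
  push Not at hiso
  obtain ⟨w, hw⟩ := Function.ne_iff.1 hx0
  simp only [Pi.zero_apply] at hw
  obtain ⟨u, -, hu⟩ := exists_max_image univ (fun v => |x v| / (G.degree v : ℝ)) ⟨w, mem_univ w⟩
  have hdw : 0 < G.degree w := Nat.pos_of_ne_zero fun h => hw (hiso w h)
  have hpos : 0 < |x u| / (G.degree u : ℝ) :=
    lt_of_lt_of_le (div_pos (abs_pos.2 hw) (by exact_mod_cast hdw)) (hu w (mem_univ w))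
  have hdu : 0 < G.degree u := by
    apply Nat.pos_of_ne_zero
    intro h
    simp [h] at hpos
  have hdu' : (0 : ℝ) < G.degree u := by exact_mod_cast hdu
  set c := |x u| / (G.degree u : ℝ) with hc
  have hxu : |x u| = G.degree u * c := by rw [hc]; field_simp
  have hle : ∀ v, |x v| ≤ G.degree v * c := by
    intro v
    by_cases hv : G.degree v = 0
    · simp [hiso v hv, hv]
    · have hv' : (0 : ℝ) < G.degree v := by exact_mod_cast Nat.pos_of_ne_zero hv
      have := hu v (mem_univ v)
      rw [div_le_iff₀ hv'] at this
      linarith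
  refine le_trans ?_ (aux_bound G hn u hdu)
  have h3 : μ * |x u| ≤ G.degree u * |x u| + (∑ v ∈ G.neighborFinset u, (G.degree v : ℝ)) * c := by
    calc μ * |x u| ≤ |μ * x u| := by
          rw [abs_mul]; exact mul_le_mul_of_nonneg_right (le_abs_self _) (abs_nonneg _)
      _ = |G.degree u * x u + ∑ v ∈ G.neighborFinset u, x v| := by rw [hrow]
      _ ≤ |G.degree u * x u| + |∑ v ∈ G.neighborFinset u, x v| := abs_add_le _ _
      _ ≤ G.degree u * |x u| + ∑ v ∈ G.neighborFinset u, |x v| := by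
          rw [abs_mul, abs_of_pos hdu']
          gcongr
          exact abs_sum_le_sum_abs _ _
      _ ≤ _ := by
          rw [sum_mul]
          gcongr with v hv
          exact hle v
  rw [hxu] at h3
  set S := ∑ v ∈ G.neighborFinset u, (G.degree v : ℝ)
  have h4 : μ * G.degree u ≤ G.degree u * G.degree u + S := by
    refine le_of_mul_le_mul_right ?_ hpos
    linarith
  have h5 : μ ≤ (G.degree u * G.degree u + S) / G.degree u := by
    rwa [le_div_iff₀ hdu']
  rwa [add_div, mul_div_cancel_right₀ _ hdu'.ne'] at h5
end

section
/- Let k ≥ 1 and δ ≥ 2 be integers and let n be such that n − 2δ − k ≥ 1. For every graph G in the family 𝓑₂(n,k,δ), the Q-index satisfies q(G) > 2(n − k − δ − 1) − 1. -/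
open Finset Matrix

theorem two_quad_form {V : Type*} [Fintype V] [DecidableEq V]
    (G : SimpleGraph V) [DecidableRel G.Adj] (x : V → ℝ) :
    2 * (x ⬝ᵥ signlessLaplacian G *ᵥ x) =
      ∑ i, ∑ j, (if G.Adj i j then (x i + x j) ^ 2 else 0) := by
  have h1 : x ⬝ᵥ signlessLaplacian G *ᵥ x =
      ∑ i, ∑ j, (if G.Adj i j then x i ^ 2 + x i * x j else 0) := by
    rw [signlessLaplacian, Matrix.add_mulVec, dotProduct]
    refine Finset.sum_congr rfl fun i _ => ?_
    rw [Pi.add_apply, Matrix.mulVec_diagonal, Matrix.mulVec, dotProduct]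
    have hd : (G.degree i : ℝ) = ∑ j, (if G.Adj i j then (1 : ℝ) else 0) := by
      rw [← SimpleGraph.card_neighborFinset_eq_degree, SimpleGraph.neighborFinset_eq_filter]
      simp
    rw [hd, mul_add, Finset.sum_mul, Finset.mul_sum, Finset.mul_sum, ← Finset.sum_add_distrib]
    refine Finset.sum_congr rfl fun j _ => ?_
    rw [SimpleGraph.adjMatrix_apply]
    split_ifs <;> ring
  have h2 : x ⬝ᵥ signlessLaplacian G *ᵥ x =
      ∑ i, ∑ j, (if G.Adj i j then x j ^ 2 + x i * x j else 0) := by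
    rw [h1, Finset.sum_comm]
    refine Finset.sum_congr rfl fun i _ => Finset.sum_congr rfl fun j _ => ?_
    simp only [G.adj_comm j i]
    split_ifs <;> ring
  rw [two_mul]
  nth_rw 1 [h1]
  rw [h2, ← Finset.sum_add_distrib]
  refine Finset.sum_congr rfl fun i _ => ?_
  rw [← Finset.sum_add_distrib]
  refine Finset.sum_congr rfl fun j _ => ?_
  split_ifs <;> ring

theorem rayleigh_le {V : Type*} [Fintype V] [DecidableEq V]
    (G : SimpleGraph V) [DecidableRel G.Adj] (x : V → ℝ) :
    x ⬝ᵥ signlessLaplacian G *ᵥ x ≤ qIndex G * (x ⬝ᵥ x) := by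
  have hbdd : BddAbove {μ : ℝ | ∃ x : V → ℝ, x ≠ 0 ∧ signlessLaplacian G *ᵥ x = μ • x} := by
    apply Set.Finite.bddAbove
    refine (Module.End.finite_hasEigenvalue (Matrix.toLin' (signlessLaplacian G))).subset ?_
    rintro μ ⟨x, hx, h⟩
    exact Module.End.hasEigenvalue_of_hasEigenvector (x := x)
      ⟨Module.End.mem_eigenspace_iff.2 (by simpa using h), hx⟩
  have hH : (qIndex G • (1 : Matrix V V ℝ) - signlessLaplacian G).IsHermitian := by
    apply Matrix.IsHermitian.ext
    intro i j
    simp [signlessLaplacian, Matrix.diagonal_apply, Matrix.one_apply, G.adj_comm, eq_comm]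
    by_cases h : i = j
    · subst h; simp
    · simp [h]
  have hP : (qIndex G • (1 : Matrix V V ℝ) - signlessLaplacian G).PosSemidef := by
    rw [hH.posSemidef_iff_eigenvalues_nonneg]
    intro i
    have h := hH.mulVec_eigenvectorBasis i
    have hne : (WithLp.ofLp (hH.eigenvectorBasis i)) ≠ 0 := by
      intro h0
      have := hH.eigenvectorBasis.orthonormal.ne_zero i
      apply this
      ext j
      exact congrFun h0 j
    have hq : qIndex G - hH.eigenvalues i ≤ qIndex G := by
      refine le_csSup hbdd ⟨_, hne, ?_⟩
      rw [Matrix.sub_mulVec, Matrix.smul_mulVec, Matrix.one_mulVec] at h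
      rw [sub_smul, ← h]
      abel
    simpa using hq
  have := hP.dotProduct_mulVec_nonneg x
  rw [Matrix.sub_mulVec, Matrix.smul_mulVec, Matrix.one_mulVec, dotProduct_sub,
    dotProduct_smul] at this
  simp only [star_trivial, smul_eq_mul] at this
  linarith

theorem pair_card {n : ℕ} (E : Finset (Sym2 (Fin n))) :
    ∑ i, ∑ j, (if s(i, j) ∈ E then (1 : ℝ) else 0) ≤ 2 * E.card := by
  rw [← Fintype.sum_prod_type' (f := fun i j => if s(i, j) ∈ E then (1 : ℝ) else 0),
    Finset.sum_boole]
  have := Finset.card_le_mul_card_image_of_maps_to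
    (s := (Finset.univ : Finset (Fin n × Fin n)).filter (fun p => s(p.1, p.2) ∈ E))
    (t := E) (f := fun p => s(p.1, p.2)) (by simp) 2 (by
      intro b hb
      induction b using Sym2.inductionOn with
      | _ a b =>
        refine (Finset.card_le_card (t := {(a, b), (b, a)}) ?_).trans Finset.card_le_two
        rintro ⟨c, d⟩ h
        simp at h ⊢
        exact h.2)
  exact_mod_cast this

theorem sum_lt {n m : ℕ} (h : m ≤ n) : ∑ i : Fin n, (if (i : ℕ) < m then (1 : ℝ) else 0) = m := by
  rw [Fin.sum_univ_eq_sum_range (fun i => if i < m then (1 : ℝ) else 0), Finset.sum_boole]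
  congr 1
  rw [show (Finset.range n).filter (fun i => i < m) = Finset.range m by ext; simp; omega]
  simp

theorem final_ineq (m s d e t : ℝ) (hm : m = 3 ∧ d = 2 ∨ 4 ≤ m) (hd : 2 ≤ d) (hdm : d + 1 ≤ m)
    (hs : 3 ≤ s) (he : 4 * e ≤ d * s + 4) (ht : t = 1 / m) :
    (2 * m - 3) * (m + s * t ^ 2) < 2 * m ^ 2 - 2 * m - 4 * e + (1 + t) ^ 2 * (d * s) := by
  have hm0 : 0 < m := by linarith
  have htm : t * m = 1 := by rw [ht]; field_simp
  have ht0 : 0 < t := by rw [ht]; positivity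
  have key : 0 < m - 4 + s * (2 * d * t - (2 * m - 3 - d) * t ^ 2) := by
    have e1 : 2 * d * t - (2 * m - 3 - d) * t ^ 2 = (2 * d - 2) * t + (3 + d) * t ^ 2 := by
      linear_combination (-2 * t) * htm
    rw [e1]
    rcases hm with ⟨rfl, rfl⟩ | hm
    · have : t = 1 / 3 := ht
      rw [this]; linarith
    · have : 0 < s * ((2 * d - 2) * t + (3 + d) * t ^ 2) := by
        have : 0 < 2 * d - 2 := by linarith
        positivity
      linarith
  linarith

/-- **Lemma 3.3**: every graph in the family `𝓑₂(n,k,δ)` has Q-index greater than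
`2(n-k-δ-1) - 1`. -/
theorem qIndex_gt_of_inB2 (k δ n : ℕ) (hk : 1 ≤ k) (hδ : 2 ≤ δ)
    (hn : 2 * δ + k + 1 ≤ n)
    (G : SimpleGraph (Fin n)) [DecidableRel G.Adj] (hG : InB2 n k δ G) :
    2 * ((n : ℝ) - k - δ - 1) - 1 < qIndex G := by
  obtain ⟨E, hE, hcard, ⟨f⟩⟩ := hG
  obtain ⟨m, hm⟩ : ∃ m, m = n - (δ + k) := ⟨_, rfl⟩
  have hmn : (n : ℝ) = m + δ + k := by
    have : n = m + δ + k := by omega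
    exact_mod_cast this
  obtain ⟨t, ht⟩ : ∃ t : ℝ, t = 1 / m := ⟨_, rfl⟩
  let c : Fin n → ℝ := fun i => if (i : ℕ) < m then 1 else 0
  let y : Fin n → ℝ := fun i => if (i : ℕ) < δ then 1 else 0
  let x : Fin n → ℝ := fun i => if (i : ℕ) < m then 1 else t
  have hc : ∑ i, c i = m := sum_lt (by omega)
  have hy : ∑ i, y i = δ := sum_lt (by omega)
  have hd : ∑ i, (1 - c i) = δ + k := by
    rw [Finset.sum_sub_distrib, hc]; simp; linarith
  have hxx : (fun i => x (f i)) ⬝ᵥ (fun i => x (f i)) = m + (δ + k) * t ^ 2 := by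
    have h0 : ∑ i, x (f i) * x (f i) = ∑ i, x i * x i :=
      Equiv.sum_comp f.toEquiv (fun i => x i * x i)
    rw [dotProduct, h0, ← hd, ← hc, Finset.sum_mul,
      ← Finset.sum_add_distrib]
    refine Finset.sum_congr rfl fun i _ => ?_
    simp only [x, c]
    split_ifs <;> ring
  have hq := two_quad_form G (fun i => x (f i))
  have hq2 : ∑ i, ∑ j, (if G.Adj i j then (x (f i) + x (f j)) ^ 2 else 0) =
      ∑ i, ∑ j, (if ((Bgraph n k δ).deleteEdges ↑E).Adj i j then (x i + x j) ^ 2 else 0) := by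
    symm
    rw [← Equiv.sum_comp f.toEquiv]
    refine Finset.sum_congr rfl fun i _ => ?_
    rw [← Equiv.sum_comp f.toEquiv]
    refine Finset.sum_congr rfl fun j _ => ?_
    have : ((Bgraph n k δ).deleteEdges ↑E).Adj (f.toEquiv i) (f.toEquiv j) ↔ G.Adj i j :=
      f.map_rel_iff
    simp only [this]
    rfl
  have hpt : ∀ i j, (if ((Bgraph n k δ).deleteEdges ↑E).Adj i j then (x i + x j) ^ 2 else 0) =
      4 * (c i * c j) - (if i = j then 4 * c i else 0)
        + (1 + t) ^ 2 * (y i * (1 - c j)) + (1 + t) ^ 2 * ((1 - c i) * y j)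
        - 4 * (if s(i, j) ∈ E then 1 else 0) := by
    intro i j
    by_cases hij : s(i, j) ∈ E
    · obtain ⟨h1, h2⟩ := hE _ hij
      have hi := h2 i (by simp)
      have hj := h2 j (by simp)
      rw [← hm] at hi hj
      have hne : i ≠ j := ((SimpleGraph.mem_edgeSet _).1 h1).ne
      simp [hij, c, hi, hj, hne]
    · have hdm : δ ≤ m := by omega
      by_cases hne : i = j
      · subst hne
        by_cases h1 : (i : ℕ) < δ
        · have : (i : ℕ) < m := by omega
          simp [hij, c, y, h1, this]
        · by_cases h2 : (i : ℕ) < m <;> simp [hij, c, y, h1, h2]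
      · simp only [SimpleGraph.deleteEdges_adj, Finset.mem_coe, hij, not_false_eq_true, and_true,
          Bgraph, ← hm, ne_eq, hne, true_and, if_false, x, c, y]
        by_cases h1 : (i : ℕ) < δ <;> by_cases h2 : (j : ℕ) < δ <;>
        by_cases h3 : (i : ℕ) < m <;> by_cases h4 : (j : ℕ) < m <;>
        first
          | (exfalso; omega)
          | (simp [h1, h2, h3, h4]; done)
          | (simp [h1, h2, h3, h4]; ring)
  have hone : ∑ _i : Fin n, (1 : ℝ) = m + δ + k := by simp [hmn]
  have hsum : ∑ i, ∑ j, (if ((Bgraph n k δ).deleteEdges ↑E).Adj i j then (x i + x j) ^ 2 else 0) =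
      4 * (m * m) - 4 * m + 2 * ((1 + t) ^ 2 * (δ * (δ + k)))
        - 4 * ∑ i, ∑ j, (if s(i, j) ∈ E then (1 : ℝ) else 0) := by
    simp only [hpt, Finset.sum_sub_distrib, Finset.sum_add_distrib, ← Finset.mul_sum,
      ← Finset.sum_mul, Finset.sum_ite_eq, Finset.mem_univ, if_true, hc, hy, hone]
    ring
  have hp := pair_card E
  have hray := rayleigh_le G (fun i => x (f i))
  rw [hxx] at hray
  have hfin := final_ineq m (δ + k) δ E.card t
    (by
      by_cases h : 4 ≤ m
      · right; exact_mod_cast h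
      · left
        constructor
        · have : m = 3 := by omega
          exact_mod_cast this
        · have : δ = 2 := by omega
          exact_mod_cast this)
    (by exact_mod_cast hδ) (by have : δ + 1 ≤ m := by omega
                               exact_mod_cast this)
    (by have : 3 ≤ δ + k := by omega
        exact_mod_cast this)
    (by have : 4 * E.card ≤ δ * (δ + k) + 4 := by omega
        exact_mod_cast this) ht
  have hpos : (0 : ℝ) < m + (δ + k) * t ^ 2 := by
    have : 0 < m := by omega
    positivity
  have hlt : (2 * (m : ℝ) - 3) * (m + (δ + k) * t ^ 2) < qIndex G * (m + (δ + k) * t ^ 2) := by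
    nlinarith
  have := lt_of_mul_lt_mul_right hlt hpos.le
  linarith
end
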